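/- arXiv:2110.10740 — 2 statements merged into one kernel-verified Lean document; each statement's English description precedes it below -/
import Mathlib

section
/- Let Φ : M → N be a morphism of matroids M = (X, I) and N = (Y, J), let ω : X → ℝ_{>0} be a positive weight function, and let k be an integer with 1 ≤ k < rk(M). Assume Φ has at least one basis of size k−1 and that p(k−1) ≥ 2, where p(k−1) = max{|Par(S)| : S a basis of Φ with |S| = k−1}. Then B_ω(k)² ≥ (1 + 1/k)·(1 + 1/(p(k−1) − 1))·B_ω(k−1)·B_ω(k+1). -/
open scoped Classical BigOperators

noncomputable section

/-- A (finite) matroid given by its independence predicate: a nonempty hereditary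
collection of independent sets satisfying the exchange property. -/
def IsMatroid {Z : Type*} [DecidableEq Z] (Indep : Finset Z → Prop) : Prop :=
  (∃ S : Finset Z, Indep S) ∧
    (∀ S T : Finset Z, S ⊆ T → Indep T → Indep S) ∧
    (∀ S T : Finset Z, Indep S → Indep T → S.card < T.card →
      ∃ x ∈ T, x ∉ S ∧ Indep (insert x S))

/-- The rank function of a set system: the maximal size of an independent subset. -/
def rkOf {Z : Type*} [DecidableEq Z] (Indep : Finset Z → Prop) (S : Finset Z) : ℕ :=
  S.powerset.sup (fun A => if Indep A then A.card else 0)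

variable {X Y : Type*} [Fintype X] [DecidableEq X] [Fintype Y] [DecidableEq Y]

/-- `Φ : X → Y` is a morphism of matroids from `M = (X, IndepM)` to `N = (Y, IndepN)` if
`g(Φ(T)) - g(Φ(S)) ≤ f(T) - f(S)` for all `S ⊆ T ⊆ X`, where `f`, `g` are the rank
functions of `M` and `N`. -/
def IsMorphism (IndepM : Finset X → Prop) (IndepN : Finset Y → Prop) (Φ : X → Y) : Prop :=
  ∀ S T : Finset X, S ⊆ T →
    (rkOf IndepN (T.image Φ) : ℤ) - (rkOf IndepN (S.image Φ) : ℤ) ≤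
      (rkOf IndepM T : ℤ) - (rkOf IndepM S : ℤ)

/-- A basis of the morphism `Φ`: an independent set of `M` whose image has full rank
in `N`. -/
def IsPhiBasis (IndepM : Finset X → Prop) (IndepN : Finset Y → Prop) (Φ : X → Y)
    (S : Finset X) : Prop :=
  IndepM S ∧ rkOf IndepN (S.image Φ) = rkOf IndepN (Finset.univ : Finset Y)

/-- The weighted count `B_ω(k)` of bases of `Φ` of size `k`. -/
def Bw (IndepM : Finset X → Prop) (IndepN : Finset Y → Prop) (Φ : X → Y)
    (ω : X → ℝ) (k : ℕ) : ℝ :=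
  ∑ S ∈ Finset.univ.filter (fun S : Finset X =>
      IsPhiBasis IndepM IndepN Φ S ∧ S.card = k),
    ∏ x ∈ S, ω x

/-- The set of continuations of an independent set `S` in `M`. -/
def mCont (IndepM : Finset X → Prop) (S : Finset X) : Finset X :=
  Finset.univ.filter (fun x => x ∉ S ∧ IndepM (insert x S))

/-- The parallel class of `x ∈ Cnt(S)` in `M`. -/
def mParClass (IndepM : Finset X → Prop) (S : Finset X) (x : X) : Finset X :=
  (mCont IndepM S).filter (fun y => y = x ∨ ¬ IndepM (insert y (insert x S)))

/-- The set `Par(S)` of parallel classes of `S` in `M`. -/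
def mParClasses (IndepM : Finset X → Prop) (S : Finset X) : Finset (Finset X) :=
  (mCont IndepM S).image (mParClass IndepM S)

/-- The `k`-continuation number of the morphism `Φ`: the maximal number of parallel
classes of a basis of `Φ` of size `k`. -/
def contNumB (IndepM : Finset X → Prop) (IndepN : Finset Y → Prop) (Φ : X → Y)
    (k : ℕ) : ℕ :=
  (Finset.univ.filter (fun S : Finset X =>
      IsPhiBasis IndepM IndepN Φ S ∧ S.card = k)).sup
    (fun S => (mParClasses IndepM S).card)

section LorentzianStep

open Matrix

/-- At most one positive direction. -/
def MHyp {V : Type*} [Fintype V] (H : Matrix V V ℝ) : Prop :=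
  ∀ v w : V → ℝ, 0 < w ⬝ᵥ (H *ᵥ w) →
    (v ⬝ᵥ (H *ᵥ v)) * (w ⬝ᵥ (H *ᵥ w)) ≤ (v ⬝ᵥ (H *ᵥ w)) ^ 2

theorem mhyp_of_lin {V : Type*} [Fintype V] (H : Matrix V V ℝ) (hs : H.IsSymm)
    (l : V → ℝ) (hl : ∀ v : V → ℝ, l ⬝ᵥ v = 0 → v ⬝ᵥ (H *ᵥ v) ≤ 0) : MHyp H := by
  intro v w hw
  have hlw : l ⬝ᵥ w ≠ 0 := fun h => absurd (hl w h) (not_le.mpr hw)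
  set s := (l ⬝ᵥ v) / (l ⬝ᵥ w) with hsdef
  have h1 : l ⬝ᵥ (v - s • w) = 0 := by
    rw [dotProduct_sub, dotProduct_smul, hsdef, smul_eq_mul]
    field_simp
    ring
  have h2 := hl _ h1
  have hsym : w ⬝ᵥ (H *ᵥ v) = v ⬝ᵥ (H *ᵥ w) := by
    rw [dotProduct_mulVec, ← mulVec_transpose, hs.eq, dotProduct_comm]
  have h3 : (v - s • w) ⬝ᵥ (H *ᵥ (v - s • w)) =
      v ⬝ᵥ (H *ᵥ v) - 2 * s * (v ⬝ᵥ (H *ᵥ w)) + s ^ 2 * (w ⬝ᵥ (H *ᵥ w)) := by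
    simp only [mulVec_sub, mulVec_smul, dotProduct_sub, sub_dotProduct, dotProduct_smul,
      smul_dotProduct, smul_eq_mul, hsym]
    ring
  rw [h3] at h2
  nlinarith [sq_nonneg (v ⬝ᵥ (H *ᵥ w) - s * (w ⬝ᵥ (H *ᵥ w))), mul_nonneg hw.le (neg_nonneg.mpr h2)]

/-- Spectral decomposition of a symmetric quadratic form, in the form we need it. -/
theorem spectral_nonpos {V : Type*} [Fintype V] [DecidableEq V] (C : Matrix V V ℝ)
    (hC : C.IsSymm) (u : V → ℝ)
    (h : ∀ (l : ℝ) (e : V → ℝ), C *ᵥ e = l • e → e ⬝ᵥ e = 1 → 0 < l → e ⬝ᵥ u = 0) :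
    u ⬝ᵥ (C *ᵥ u) ≤ 0 := by
  have hH : C.IsHermitian := by
    rw [Matrix.IsHermitian, conjTranspose_eq_transpose_of_trivial]; exact hC
  let b := hH.eigenvectorBasis
  let E : V → V → ℝ := fun k => ⇑(b k)
  have hE : ∀ k, C *ᵥ (E k) = hH.eigenvalues k • E k := fun k => hH.mulVec_eigenvectorBasis k
  have hn : ∀ k, E k ⬝ᵥ E k = 1 := by
    intro k
    have := b.orthonormal.1 k
    have h2 : inner ℝ (b k) (b k) = (1 : ℝ) := by
      rw [real_inner_self_eq_norm_sq, this]; norm_num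
    rw [PiLp.inner_apply] at h2
    simpa [dotProduct, E, sq] using h2
  have hu : u = ∑ k, (E k ⬝ᵥ u) • E k := by
    have := b.sum_repr (WithLp.toLp 2 u)
    have h2 := congrArg (fun z => (WithLp.ofLp z : V → ℝ)) this
    simp only [WithLp.ofLp_sum, WithLp.ofLp_smul] at h2
    refine h2.symm.trans (Finset.sum_congr rfl fun k _ => ?_)
    simp only [E]
    congr 1
    rw [b.repr_apply_apply, PiLp.inner_apply]
    simp [dotProduct, mul_comm]
  have h4 : C *ᵥ u = ∑ k, (hH.eigenvalues k * (E k ⬝ᵥ u)) • E k := by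
    conv_lhs => rw [hu]
    rw [mulVec_sum]
    refine Finset.sum_congr rfl fun k _ => ?_
    rw [mulVec_smul, hE, smul_smul, mul_comm]
  rw [h4, dotProduct_sum]
  refine Finset.sum_nonpos fun k _ => ?_
  rw [dotProduct_smul, smul_eq_mul, dotProduct_comm u]
  by_cases hk : 0 < hH.eigenvalues k
  · rw [h _ _ (hE k) (hn k) hk]; simp
  · nlinarith [mul_self_nonneg (E k ⬝ᵥ u)]

theorem local_global {V : Type*} [Fintype V] [DecidableEq V] (H : Matrix V V ℝ)
    (K : V → Matrix V V ℝ) (x : V → ℝ) (hx : ∀ i, 0 < x i) (hH : H.IsSymm)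
    (hH0 : ∀ i j, 0 ≤ H i j) (hK0 : ∀ i a b, 0 ≤ K i a b)
    (hK : ∀ i, MHyp (K i)) (hsum : ∀ a b, ∑ i, x i * K i a b = H a b)
    (hrow : ∀ i j, (K i *ᵥ x) j = H i j)
    (hconn : ∀ w : V → ℝ, (∀ i j, H i j ≠ 0 → w i = w j) →
      ∀ i j, (H *ᵥ x) i ≠ 0 → (H *ᵥ x) j ≠ 0 → w i = w j) : MHyp H := by
  set r : V → ℝ := H *ᵥ x with hr
  have hr0 : ∀ i, 0 ≤ r i := fun i =>
    Finset.sum_nonneg fun j _ => mul_nonneg (hH0 i j) (hx j).le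
  have hrz : ∀ i, r i = 0 → ∀ j, H i j = 0 := by
    intro i hi j
    have := (Finset.sum_eq_zero_iff_of_nonneg
      (fun j _ => mul_nonneg (hH0 i j) (hx j).le)).mp hi j (Finset.mem_univ _)
    exact (mul_eq_zero.mp this).resolve_right (hx j).ne'
  have hHc : ∀ i j, H i j = H j i := fun i j => hH.apply j i
  -- the key inequality
  have hA : ∀ v : V → ℝ, v ⬝ᵥ (H *ᵥ v) ≤ ∑ i, x i / r i * (H *ᵥ v) i ^ 2 := by
    intro v
    have h1 : v ⬝ᵥ (H *ᵥ v) = ∑ i, x i * (v ⬝ᵥ (K i *ᵥ v)) := by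
      simp only [dotProduct, mulVec, Finset.mul_sum]
      rw [Finset.sum_comm]
      conv_rhs => rw [Finset.sum_comm]; enter [2, a]; rw [Finset.sum_comm]
      rw [Finset.sum_comm]
      refine Finset.sum_congr rfl fun a _ => Finset.sum_congr rfl fun b _ => ?_
      rw [← hsum, Finset.sum_mul, Finset.mul_sum]
      refine Finset.sum_congr rfl fun i _ => ?_
      ring
    rw [h1]
    refine Finset.sum_le_sum fun i _ => ?_
    have hxx : x ⬝ᵥ (K i *ᵥ x) = r i := by
      refine Finset.sum_congr rfl fun a _ => ?_
      rw [hrow, mul_comm]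
    by_cases hi : r i = 0
    · have hz : ∀ a b, K i a b = 0 := by
        intro a b
        have h2 := hrz i hi a
        rw [← hrow] at h2
        have := (Finset.sum_eq_zero_iff_of_nonneg
          (fun j _ => mul_nonneg (hK0 i a j) (hx j).le)).mp h2 b (Finset.mem_univ _)
        exact (mul_eq_zero.mp this).resolve_right (hx b).ne'
      have : K i = 0 := by ext a b; exact hz a b
      simp [this, hi]
    · have hpos : 0 < r i := lt_of_le_of_ne (hr0 i) (Ne.symm hi)
      have h3 := hK i v x (by rw [hxx]; exact hpos)
      have h4 : v ⬝ᵥ (K i *ᵥ x) = (H *ᵥ v) i := by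
        refine Finset.sum_congr rfl fun a _ => ?_
        rw [hrow, mul_comm]
      rw [hxx, h4] at h3
      rw [div_mul_eq_mul_div, le_div_iff₀ hpos]
      nlinarith [hx i]
  -- Laplacian identity
  have hLap : ∀ v : V → ℝ, ∑ i, ∑ j, H i j * x i * x j * (v i / x i - v j / x j) ^ 2 =
      2 * (∑ i, v i ^ 2 * r i / x i - v ⬝ᵥ (H *ᵥ v)) := by
    intro v
    have e1 : ∑ i, v i ^ 2 * r i / x i = ∑ i, ∑ j, H i j * (v i ^ 2 * x j / x i) := by
      refine Finset.sum_congr rfl fun i _ => ?_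
      simp only [hr, mulVec, dotProduct, Finset.mul_sum, Finset.sum_div]
      refine Finset.sum_congr rfl fun j _ => ?_
      ring
    have e2 : ∑ i, v i ^ 2 * r i / x i = ∑ i, ∑ j, H i j * (v j ^ 2 * x i / x j) := by
      rw [e1, Finset.sum_comm]
      refine Finset.sum_congr rfl fun i _ => Finset.sum_congr rfl fun j _ => ?_
      rw [hHc]
    have e3 : v ⬝ᵥ (H *ᵥ v) = ∑ i, ∑ j, H i j * (v i * v j) := by
      simp only [mulVec, dotProduct, Finset.mul_sum]
      refine Finset.sum_congr rfl fun i _ => Finset.sum_congr rfl fun j _ => ?_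
      ring
    have e4 : 2 * (∑ i, v i ^ 2 * r i / x i - v ⬝ᵥ (H *ᵥ v)) =
        ∑ i, v i ^ 2 * r i / x i + ∑ i, v i ^ 2 * r i / x i - 2 * (v ⬝ᵥ (H *ᵥ v)) := by ring
    rw [e4]
    nth_rewrite 1 [e1]
    rw [e2, e3, Finset.mul_sum, ← Finset.sum_add_distrib, ← Finset.sum_sub_distrib]
    refine Finset.sum_congr rfl fun i _ => ?_
    rw [Finset.mul_sum, ← Finset.sum_add_distrib, ← Finset.sum_sub_distrib]
    refine Finset.sum_congr rfl fun j _ => ?_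
    have := (hx i).ne'
    have := (hx j).ne'
    field_simp
    ring
  set s : V → ℝ := fun i => Real.sqrt (x i / r i) with hs
  have hs2 : ∀ i, s i ^ 2 = x i / r i := fun i =>
    Real.sq_sqrt (div_nonneg (hx i).le (hr0 i))
  set C : Matrix V V ℝ := Matrix.of fun i j => s i * H i j * s j with hCdef
  have hC : C.IsSymm := by
    ext i j
    simp only [hCdef, transpose_apply, of_apply]
    rw [hHc]; ring
  have hCu : ∀ u : V → ℝ, ∀ i, (C *ᵥ u) i = s i * (H *ᵥ (fun j => s j * u j)) i := by
    intro u i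
    simp only [mulVec, dotProduct, hCdef, of_apply, Finset.mul_sum]
    refine Finset.sum_congr rfl fun j _ => ?_
    ring
  have hCq : ∀ u : V → ℝ, u ⬝ᵥ (C *ᵥ u) =
      (fun j => s j * u j) ⬝ᵥ (H *ᵥ (fun j => s j * u j)) := by
    intro u
    simp only [dotProduct, hCu]
    refine Finset.sum_congr rfl fun j _ => ?_
    simp only [mulVec, dotProduct]
    ring
  refine mhyp_of_lin H hH r fun v hv => ?_
  -- move to `C`
  set u : V → ℝ := fun i => v i * Real.sqrt (r i / x i) with hu
  have hsr : ∀ i, r i ≠ 0 → s i * Real.sqrt (r i / x i) = 1 := by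
    intro i hi
    rw [hs, ← Real.sqrt_mul (div_nonneg (hx i).le (hr0 i))]
    have := (hx i).ne'
    rw [show x i / r i * (r i / x i) = 1 by field_simp]
    simp
  have hsu : ∀ i, r i ≠ 0 → s i * u i = v i := by
    intro i hi
    rw [hu]
    calc s i * (v i * Real.sqrt (r i / x i)) = v i * (s i * Real.sqrt (r i / x i)) := by ring
      _ = v i := by rw [hsr i hi, mul_one]
  have hvC : v ⬝ᵥ (H *ᵥ v) = u ⬝ᵥ (C *ᵥ u) := by
    rw [hCq]
    simp only [dotProduct, mulVec, Finset.mul_sum]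
    refine Finset.sum_congr rfl fun i _ => Finset.sum_congr rfl fun j _ => ?_
    by_cases hi : r i = 0
    · simp [hrz i hi j]
    by_cases hj : r j = 0
    · simp [hHc i j, hrz j hj i]
    rw [hsu i hi, hsu j hj]
  rw [hvC]
  refine spectral_nonpos C hC u ?_
  intro l e hel hen hl
  have hq : e ⬝ᵥ (C *ᵥ e) = l := by rw [hel, dotProduct_smul, hen]; simp
  set f : V → ℝ := fun j => s j * e j with hf
  have h1 : l ≤ l ^ 2 := by
    have := hA f
    rw [← hCq, hq] at this
    have h2 : ∑ i, x i / r i * (H *ᵥ f) i ^ 2 = l ^ 2 := by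
      have : ∀ i, x i / r i * (H *ᵥ f) i ^ 2 = l ^ 2 * (e i * e i) := by
        intro i
        have h3 := hCu e i
        rw [hel, Pi.smul_apply, smul_eq_mul] at h3
        rw [← hs2, ← mul_pow, ← h3]; ring
      rw [Finset.sum_congr rfl fun i _ => this i, ← Finset.mul_sum]
      rw [dotProduct] at hen
      rw [hen, mul_one]
    rwa [h2] at this
  have hl1 : 1 ≤ l := by nlinarith
  have hez : ∀ i, r i = 0 → e i = 0 := by
    intro i hi
    have h3 := hCu e i
    rw [hel, Pi.smul_apply, smul_eq_mul] at h3
    have : (H *ᵥ f) i = 0 := by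
      simp [mulVec, dotProduct, hrz i hi]
    rw [this, mul_zero] at h3
    exact (mul_eq_zero.mp h3).resolve_left hl.ne'
  have hff : ∑ i, f i ^ 2 * r i / x i = 1 := by
    rw [← hen, dotProduct]
    refine Finset.sum_congr rfl fun i _ => ?_
    by_cases hi : r i = 0
    · simp [hi, hez i hi]
    have := (hx i).ne'
    rw [hf]
    simp only [mul_pow, hs2]
    field_simp
  have hL := hLap f
  rw [hff, ← hCq, hq] at hL
  have hnn : ∀ i j, 0 ≤ H i j * x i * x j * (f i / x i - f j / x j) ^ 2 := fun i j =>
    mul_nonneg (mul_nonneg (mul_nonneg (hH0 i j) (hx i).le) (hx j).le) (sq_nonneg _)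
  have hzero : ∑ i, ∑ j, H i j * x i * x j * (f i / x i - f j / x j) ^ 2 = 0 :=
    le_antisymm (by rw [hL]; linarith)
      (Finset.sum_nonneg fun i _ => Finset.sum_nonneg fun j _ => hnn i j)
  have hw : ∀ i j, H i j ≠ 0 → f i / x i = f j / x j := by
    intro i j hij
    have h2 := (Finset.sum_eq_zero_iff_of_nonneg
      (fun i _ => Finset.sum_nonneg fun j _ => hnn i j)).mp hzero i (Finset.mem_univ _)
    have h3 := (Finset.sum_eq_zero_iff_of_nonneg
      (fun j _ => hnn i j)).mp h2 j (Finset.mem_univ _)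
    have h4 : H i j * x i * x j ≠ 0 := mul_ne_zero (mul_ne_zero hij (hx i).ne') (hx j).ne'
    have h5 := (mul_eq_zero.mp h3).resolve_left h4
    exact sub_eq_zero.mp (pow_eq_zero_iff (two_ne_zero) |>.mp h5)
  have hconst := hconn (fun i => f i / x i) hw
  obtain ⟨c, hc⟩ : ∃ c : ℝ, ∀ i, r i ≠ 0 → f i = c * x i := by
    by_cases hex : ∃ i, r i ≠ 0
    · obtain ⟨i0, hi0⟩ := hex
      refine ⟨f i0 / x i0, fun i hi => ?_⟩
      rw [← hconst i i0 hi hi0]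
      have := (hx i).ne'
      field_simp
    · push Not at hex
      exact ⟨0, fun i hi => absurd (hex i) hi⟩
  have heu : ∀ i, e i * u i = c * (r i * v i) := by
    intro i
    by_cases hi : r i = 0
    · simp [hi, hez i hi]
    have h6 := hc i hi
    have h7 := hsr i hi
    have h8 : e i * u i = (s i * e i) * (Real.sqrt (r i / x i)) ^ 2 * v i := by
      have : (s i * e i) * (Real.sqrt (r i / x i)) ^ 2 * v i =
        (s i * Real.sqrt (r i / x i)) * (e i * (v i * Real.sqrt (r i / x i))) := by ring
      rw [this, h7, one_mul]
    rw [h8, Real.sq_sqrt (div_nonneg (hr0 i) (hx i).le)]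
    rw [show s i * e i = f i from rfl, h6]
    have := (hx i).ne'
    field_simp
  rw [dotProduct, Finset.sum_congr rfl fun i _ => heu i, ← Finset.mul_sum]
  rw [dotProduct] at hv
  rw [hv, mul_zero]

end LorentzianStep

section LorentzianInduction

open Matrix

/-- Scaled partial derivatives of a homogeneous polynomial with (normalised) coefficients `q`. -/
def PP {V : Type*} [Fintype V] (q : Multiset V → ℝ) (x : V → ℝ) : ℕ → Multiset V → ℝ
  | 0, a => q a
  | m + 1, a => ∑ i, x i * PP q x m (i ::ₘ a)

theorem PP_nonneg {V : Type*} [Fintype V] (q : Multiset V → ℝ) (x : V → ℝ)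
    (hq : ∀ a, 0 ≤ q a) (hx : ∀ i, 0 ≤ x i) (m : ℕ) : ∀ a, 0 ≤ PP q x m a := by
  induction m with
  | zero => exact hq
  | succ m ih => exact fun a => Finset.sum_nonneg fun i _ => mul_nonneg (hx i) (ih _)

theorem PP_pos_iff {V : Type*} [Fintype V] [DecidableEq V] (q : Multiset V → ℝ) (x : V → ℝ)
    (hq : ∀ a, 0 ≤ q a) (hx : ∀ i, 0 < x i) (m : ℕ) : ∀ a, 0 < PP q x m a ↔
      ∃ c, a ≤ c ∧ c.card = a.card + m ∧ 0 < q c := by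
  induction m with
  | zero =>
    intro a
    constructor
    · intro h; exact ⟨a, le_rfl, rfl, h⟩
    · rintro ⟨c, h1, h2, h3⟩
      rw [Multiset.eq_of_le_of_card_le h1 (by omega)]; exact h3
  | succ m ih =>
    intro a
    have hn := PP_nonneg q x hq (fun i => (hx i).le) m
    rw [PP, Finset.sum_pos_iff_of_nonneg (fun i _ => mul_nonneg (hx i).le (hn _))]
    constructor
    · rintro ⟨i, -, h⟩
      have h' := (mul_pos_iff_of_pos_left (hx i)).mp h
      obtain ⟨c, h1, h2, h3⟩ := (ih _).mp h'
      refine ⟨c, (Multiset.le_cons_self a i).trans h1, ?_, h3⟩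
      rw [Multiset.card_cons] at h2; omega
    · rintro ⟨c, h1, h2, h3⟩
      have hlt : a < c := lt_of_le_of_ne h1 (by rintro rfl; omega)
      obtain ⟨i, hi⟩ := Multiset.lt_iff_cons_le.mp hlt
      refine ⟨i, Finset.mem_univ _, mul_pos (hx i) ((ih _).mpr ⟨c, hi, ?_, h3⟩)⟩
      rw [Multiset.card_cons]; omega

theorem PP_conn {V : Type*} [Fintype V] [DecidableEq V] (q : Multiset V → ℝ) (x : V → ℝ)
    (hq : ∀ a, 0 ≤ q a) (hx : ∀ i, 0 < x i) (d : ℕ)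
    (hex : ∀ c c' : Multiset V, c.card = d → c'.card = d → 0 < q c → 0 < q c' →
      ∀ i, c'.count i < c.count i → ∃ u, c.count u < c'.count u ∧ 0 < q (i ::ₘ c'.erase u))
    (m : ℕ) (a : Multiset V) (hd : a.card + 2 + m = d) (i j : V) (hij : i ≠ j)
    (hi : 0 < PP q x (m + 1) (i ::ₘ a)) (hj : 0 < PP q x (m + 1) (j ::ₘ a)) :
    0 < PP q x m (i ::ₘ j ::ₘ a) ∨
      ∃ l, 0 < PP q x m (i ::ₘ l ::ₘ a) ∧ 0 < PP q x m (j ::ₘ l ::ₘ a) := by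
  rw [PP_pos_iff q x hq hx] at hi hj
  obtain ⟨c, c1, c2, c3⟩ := hi
  obtain ⟨c', c1', c2', c3'⟩ := hj
  simp only [PP_pos_iff q x hq hx]
  simp only [Multiset.card_cons] at *
  rw [Multiset.le_iff_count] at c1
  have c1'' := c1'
  rw [Multiset.le_iff_count] at c1'
  simp only [Multiset.count_cons] at c1 c1'
  by_cases h : a.count i < c'.count i
  · left
    refine ⟨c', ?_, by omega, c3'⟩
    rw [Multiset.le_iff_count]
    intro b
    have := c1' b
    simp only [Multiset.count_cons]
    split_ifs at * <;> simp_all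
  have hlt : c'.count i < c.count i := by
    have := c1 i
    simp only [if_true] at this
    omega
  obtain ⟨u, hu, hqu⟩ := hex c c' (by omega) (by omega) c3 c3' i hlt
  have hmem : u ∈ c' := Multiset.count_pos.mp (by omega)
  have hcard : (i ::ₘ c'.erase u).card = d := by
    rw [Multiset.card_cons, Multiset.card_erase_of_mem hmem, Nat.pred_eq_sub_one]
    have := Multiset.card_pos_iff_exists_mem.mpr ⟨u, hmem⟩
    omega
  by_cases h2 : i ::ₘ j ::ₘ a ≤ i ::ₘ c'.erase u
  · left; exact ⟨_, h2, by omega, hqu⟩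
  right
  have huj : u = j := by
    by_contra hne
    apply h2
    rw [Multiset.cons_le_cons_iff, Multiset.le_iff_count]
    intro b
    have h3 := c1' b
    have h4 := c1 b
    rw [Multiset.count_cons]
    by_cases hb : b = u
    · subst hb
      rw [Multiset.count_erase_self]
      rw [if_neg hne]
      omega
    · rw [Multiset.count_erase_of_ne hb]; exact h3
  subst huj
  have hlt2 : u ::ₘ a < c' := lt_of_le_of_ne c1'' (by rintro rfl; simp at c2')
  obtain ⟨l, hl⟩ := Multiset.lt_iff_cons_le.mp hlt2
  refine ⟨l, ⟨_, ?_, by omega, hqu⟩, ⟨c', by rwa [Multiset.cons_swap], by omega, c3'⟩⟩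
  rw [Multiset.cons_le_cons_iff]
  have := Multiset.erase_le_erase u hl
  rwa [Multiset.cons_swap, Multiset.erase_cons_head] at this

theorem PP_hyp {V : Type*} [Fintype V] [DecidableEq V] (q : Multiset V → ℝ) (x : V → ℝ)
    (hq : ∀ a, 0 ≤ q a) (hx : ∀ i, 0 < x i) (d : ℕ)
    (hex : ∀ c c' : Multiset V, c.card = d → c'.card = d → 0 < q c → 0 < q c' →
      ∀ i, c'.count i < c.count i → ∃ u, c.count u < c'.count u ∧ 0 < q (i ::ₘ c'.erase u))
    (hbase : ∀ a : Multiset V, a.card + 2 = d →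
      MHyp (Matrix.of fun i j => q (i ::ₘ j ::ₘ a)))
    (m : ℕ) : ∀ a : Multiset V, a.card + 2 + m = d →
      MHyp (Matrix.of fun i j => PP q x m (i ::ₘ j ::ₘ a)) := by
  induction m with
  | zero => intro a ha; exact hbase a (by omega)
  | succ m ih =>
    intro a ha
    have hn := PP_nonneg q x hq (fun i => (hx i).le)
    refine local_global _ (fun l => Matrix.of fun i j => PP q x m (i ::ₘ j ::ₘ l ::ₘ a)) x hx
      ?_ ?_ ?_ ?_ ?_ ?_ ?_
    · ext i j
      simp only [transpose_apply, of_apply]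
      rw [Multiset.cons_swap]
    · intro i j; exact hn _ _
    · intro l i j; exact hn _ _
    · intro l; exact ih _ (by rw [Multiset.card_cons]; omega)
    · intro i j
      simp only [of_apply, PP]
      refine Finset.sum_congr rfl fun l _ => ?_
      rw [Multiset.cons_swap j l, Multiset.cons_swap i l]
    · intro l j
      simp only [of_apply, PP, mulVec, dotProduct]
      refine Finset.sum_congr rfl fun i _ => ?_
      rw [Multiset.cons_swap j i, Multiset.cons_swap j l, mul_comm]
    · intro w hw
      have hrow : ∀ i, ((Matrix.of fun i j => PP q x (m+1) (i ::ₘ j ::ₘ a)) *ᵥ x) i =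
          PP q x (m + 2) (i ::ₘ a) := by
        intro i
        rw [PP]
        simp only [of_apply, mulVec, dotProduct]
        refine Finset.sum_congr rfl fun j _ => ?_
        rw [Multiset.cons_swap j i, mul_comm]
      intro i j hi hj
      rw [hrow] at hi hj
      by_cases hij : i = j
      · rw [hij]
      simp only [of_apply] at hw
      rcases PP_conn q x hq hx d hex (m + 1) a ha i j hij (lt_of_le_of_ne (hn _ _) (Ne.symm hi))
        (lt_of_le_of_ne (hn _ _) (Ne.symm hj)) with h | ⟨l, h1, h2⟩
      · exact hw _ _ h.ne'
      · exact (hw _ _ h1.ne').trans (hw _ _ h2.ne').symm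

theorem PP_continuous {V : Type*} [Fintype V] (q : Multiset V → ℝ) (m : ℕ) :
    ∀ a : Multiset V, Continuous fun x : V → ℝ => PP q x m a := by
  induction m with
  | zero => intro a; exact continuous_const
  | succ m ih =>
    intro a
    simp only [PP]
    exact continuous_finsetSum _ fun i _ => (continuous_apply i).mul (ih _)

/-- The final log-concavity type inequality, for a direction `o`. -/
theorem PP_final {V : Type*} [Fintype V] [DecidableEq V] (q : Multiset V → ℝ) (x : V → ℝ)
    (hq : ∀ a, 0 ≤ q a) (hx : ∀ i, 0 ≤ x i) (m : ℕ) (o : V)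
    (hex : ∀ c c' : Multiset V, c.card = m + 2 → c'.card = m + 2 → 0 < q c → 0 < q c' →
      ∀ i, c'.count i < c.count i → ∃ u, c.count u < c'.count u ∧ 0 < q (i ::ₘ c'.erase u))
    (hbase : ∀ a : Multiset V, a.card + 2 = m + 2 →
      MHyp (Matrix.of fun i j => q (i ::ₘ j ::ₘ a))) :
    PP q x m (o ::ₘ o ::ₘ 0) * PP q x (m + 2) 0 ≤ PP q x (m + 1) (o ::ₘ 0) ^ 2 := by
  have key : ∀ y : V → ℝ, (∀ i, 0 < y i) →
      PP q y m (o ::ₘ o ::ₘ 0) * PP q y (m + 2) 0 ≤ PP q y (m + 1) (o ::ₘ 0) ^ 2 := by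
    intro y hy
    have h := PP_hyp q y hq hy (m + 2) hex hbase m 0 (by simp; omega) (Pi.single o 1) y
    set H := (Matrix.of fun i j => PP q y m (i ::ₘ j ::ₘ 0)) with hH
    have hrow : ∀ i, (H *ᵥ y) i = PP q y (m + 1) (i ::ₘ 0) := by
      intro i
      rw [PP]
      simp only [hH, of_apply, mulVec, dotProduct]
      refine Finset.sum_congr rfl fun j _ => ?_
      rw [Multiset.cons_swap j i, mul_comm]
    have h1 : y ⬝ᵥ (H *ᵥ y) = PP q y (m + 2) 0 := by
      rw [PP]
      simp only [dotProduct, hrow]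
    have h2 : Pi.single o 1 ⬝ᵥ (H *ᵥ y) = PP q y (m + 1) (o ::ₘ 0) := by
      rw [single_one_dotProduct, hrow]
    have h3 : Pi.single o 1 ⬝ᵥ (H *ᵥ Pi.single o 1) = PP q y m (o ::ₘ o ::ₘ 0) := by
      rw [single_one_dotProduct, mulVec_single_one]
      simp [hH]
    rw [h1, h2, h3] at h
    rcases (PP_nonneg q y hq (fun i => (hy i).le) (m + 2) 0).eq_or_lt with h0 | h0
    · rw [← h0]; simpa using sq_nonneg _
    · exact h h0
  let z : ℝ → V → ℝ := fun t i => x i + t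
  have hz : Continuous z := continuous_pi fun i => continuous_const.add continuous_id
  have hl : Filter.Tendsto (fun t => PP q (z t) m (o ::ₘ o ::ₘ 0) * PP q (z t) (m + 2) 0)
      (nhdsWithin 0 (Set.Ioi 0)) (nhds (PP q (z 0) m (o ::ₘ o ::ₘ 0) * PP q (z 0) (m + 2) 0)) :=
    ((((PP_continuous q m _).comp hz).mul ((PP_continuous q (m+2) _).comp hz)).tendsto 0).mono_left
      nhdsWithin_le_nhds
  have hr : Filter.Tendsto (fun t => PP q (z t) (m + 1) (o ::ₘ 0) ^ 2)
      (nhdsWithin 0 (Set.Ioi 0)) (nhds (PP q (z 0) (m + 1) (o ::ₘ 0) ^ 2)) :=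
    ((((PP_continuous q (m + 1) _).comp hz).pow 2).tendsto 0).mono_left nhdsWithin_le_nhds
  have := le_of_tendsto_of_tendsto hl hr (by
    filter_upwards [self_mem_nhdsWithin] with t ht
    exact key _ fun i => add_pos_of_nonneg_of_pos (hx i) ht)
  have hz0 : z 0 = x := by ext i; simp [z]
  rwa [hz0] at this

end LorentzianInduction

section RankLemmas

theorem rk_le_of {Z : Type*} [DecidableEq Z] {Ind : Finset Z → Prop} {S : Finset Z} {n : ℕ}
    (h : ∀ A, A ⊆ S → Ind A → A.card ≤ n) : rkOf Ind S ≤ n := by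
  refine Finset.sup_le fun A hA => ?_
  split_ifs with hi
  · exact h A (Finset.mem_powerset.mp hA) hi
  · exact Nat.zero_le _

theorem le_rk {Z : Type*} [DecidableEq Z] {Ind : Finset Z → Prop} {S A : Finset Z}
    (hA : A ⊆ S) (hi : Ind A) : A.card ≤ rkOf Ind S := by
  have := Finset.le_sup (f := fun A => if Ind A then A.card else 0) (Finset.mem_powerset.mpr hA)
  simpa [rkOf, hi] using this

theorem rk_mono {Z : Type*} [DecidableEq Z] {Ind : Finset Z → Prop} {S T : Finset Z}
    (h : S ⊆ T) : rkOf Ind S ≤ rkOf Ind T :=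
  rk_le_of fun _ hA hi => le_rk (hA.trans h) hi

theorem rk_le_card {Z : Type*} [DecidableEq Z] {Ind : Finset Z → Prop} {S : Finset Z} :
    rkOf Ind S ≤ S.card :=
  rk_le_of fun _ hA _ => Finset.card_le_card hA

theorem rk_insert_le {Z : Type*} [DecidableEq Z] {Ind : Finset Z → Prop} (hM : IsMatroid Ind)
    (S : Finset Z) (x : Z) : rkOf Ind (insert x S) ≤ rkOf Ind S + 1 := by
  refine rk_le_of fun A hA hi => ?_
  have h1 : A.erase x ⊆ S := by
    intro y hy
    rw [Finset.mem_erase] at hy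
    exact (Finset.mem_insert.mp (hA hy.2)).resolve_left hy.1
  have h2 := le_rk h1 (hM.2.1 _ _ (Finset.erase_subset x A) hi)
  have := Finset.pred_card_le_card_erase (s := A) (a := x)
  omega

theorem empty_ind {Z : Type*} [DecidableEq Z] {Ind : Finset Z → Prop} (hM : IsMatroid Ind) :
    Ind ∅ := by
  obtain ⟨S, hS⟩ := hM.1
  exact hM.2.1 _ _ (Finset.empty_subset S) hS

theorem exists_ext {Z : Type*} [DecidableEq Z] {Ind : Finset Z → Prop} (hM : IsMatroid Ind)
    {A T : Finset Z} (hA : Ind A) (hAT : A ⊆ T) :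
    ∃ D, A ⊆ D ∧ D ⊆ T ∧ Ind D ∧ D.card = rkOf Ind T := by
  have hne : (T.powerset.filter fun D => A ⊆ D ∧ Ind D).Nonempty :=
    ⟨A, by simp [hAT, hA]⟩
  obtain ⟨D, hD, hmax⟩ := Finset.exists_max_image _ Finset.card hne
  simp only [Finset.mem_filter, Finset.mem_powerset] at hD hmax
  refine ⟨D, hD.2.1, hD.1, hD.2.2, le_antisymm (le_rk hD.1 hD.2.2) ?_⟩
  refine rk_le_of fun E hE hi => ?_
  by_contra hlt
  obtain ⟨x, hx, hxD, hins⟩ := hM.2.2 D E hD.2.2 hi (by omega)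
  have := hmax (insert x D) ⟨Finset.insert_subset (hE hx) hD.1,
    hD.2.1.trans (Finset.subset_insert _ _), hins⟩
  rw [Finset.card_insert_of_notMem hxD] at this
  omega

theorem rk_ind {Z : Type*} [DecidableEq Z] {Ind : Finset Z → Prop} (hM : IsMatroid Ind)
    (S : Finset Z) : Ind S ↔ rkOf Ind S = S.card := by
  constructor
  · intro h; exact le_antisymm rk_le_card (le_rk (Finset.Subset.refl S) h)
  · intro h
    obtain ⟨D, -, h2, h3, h4⟩ := exists_ext hM (empty_ind hM) (Finset.empty_subset S)
    rwa [← Finset.eq_of_subset_of_card_le h2 (by omega)]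

theorem rk_closure {Z : Type*} [DecidableEq Z] {Ind : Finset Z → Prop} (hM : IsMatroid Ind)
    {S T : Finset Z} {x : Z} (hST : S ⊆ T) (h : rkOf Ind (insert x S) = rkOf Ind S) :
    rkOf Ind (insert x T) = rkOf Ind T := by
  refine le_antisymm ?_ (rk_mono (Finset.subset_insert _ _))
  obtain ⟨A, -, a2, a3, a4⟩ := exists_ext hM (empty_ind hM) (Finset.empty_subset S)
  obtain ⟨D, d1, d2, d3, d4⟩ := exists_ext hM a3 (a2.trans hST)
  refine rk_le_of fun E hE hi => ?_
  by_contra hlt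
  obtain ⟨z, hz, hzD, hins⟩ := hM.2.2 D E d3 hi (by omega)
  rcases Finset.mem_insert.mp (hE hz) with rfl | hzT
  · have h1 := le_rk (Finset.insert_subset_insert z a2)
      (hM.2.1 _ _ (Finset.insert_subset_insert z d1) hins)
    rw [Finset.card_insert_of_notMem (fun h => hzD (d1 h))] at h1
    omega
  · have h1 := le_rk (Finset.insert_subset hzT d2) hins
    rw [Finset.card_insert_of_notMem hzD] at h1
    omega

/-- What we use about a morphism of matroids: independence `Ind` and rank `f` of the source,
pulled back rank `h` of the target, and the rank `r` of the target. -/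
structure MorCtx {X : Type*} [DecidableEq X] (Ind : Finset X → Prop) (f h : Finset X → ℕ)
    (r : ℕ) : Prop where
  mat : IsMatroid Ind
  f_eq : ∀ S, f S = rkOf Ind S
  h_mono : ∀ S T, S ⊆ T → h S ≤ h T
  h_insert : ∀ S x, h (insert x S) ≤ h S + 1
  h_closure : ∀ S T x, S ⊆ T → h (insert x S) = h S → h (insert x T) = h T
  h_le : ∀ S, h S ≤ r
  mor : ∀ S T, S ⊆ T → h T + f S ≤ h S + f T

theorem morCtx_of {X Y : Type*} [DecidableEq X] [DecidableEq Y] [Fintype Y]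
    (IndM : Finset X → Prop) (IndN : Finset Y → Prop) (Φ : X → Y) (hM : IsMatroid IndM)
    (hN : IsMatroid IndN)
    (hΦ : ∀ S T : Finset X, S ⊆ T →
    (rkOf IndN (T.image Φ) : ℤ) - (rkOf IndN (S.image Φ) : ℤ) ≤
      (rkOf IndM T : ℤ) - (rkOf IndM S : ℤ)) :
    MorCtx IndM (rkOf IndM) (fun S => rkOf IndN (S.image Φ)) (rkOf IndN Finset.univ) where
  mat := hM
  f_eq := fun _ => rfl
  h_mono := fun S T h => rk_mono (Finset.image_subset_image h)
  h_insert := fun S x => by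
    simp only [Finset.image_insert]; exact rk_insert_le hN _ _
  h_closure := fun S T x hST h => by
    simp only [Finset.image_insert] at h ⊢
    exact rk_closure hN (Finset.image_subset_image hST) h
  h_le := fun S => rk_mono (Finset.subset_univ _)
  mor := fun S T hST => by have := hΦ S T hST; omega

namespace MorCtx

variable {X : Type*} [DecidableEq X] {Ind : Finset X → Prop} {f h : Finset X → ℕ} {r : ℕ}

theorem ind_iff (c : MorCtx Ind f h r) (S : Finset X) : Ind S ↔ f S = S.card := by
  rw [c.f_eq]; exact rk_ind c.mat S

theorem f_le (c : MorCtx Ind f h r) (S : Finset X) : f S ≤ S.card := by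
  rw [c.f_eq]; exact rk_le_card

theorem f_mono (c : MorCtx Ind f h r) {S T : Finset X} (hST : S ⊆ T) : f S ≤ f T := by
  rw [c.f_eq, c.f_eq]; exact rk_mono hST

theorem coloops (c : MorCtx Ind f h r) (U D : Finset X) (hD : D ⊆ U)
    (hu : ∀ u ∈ D, h (U.erase u) < h U) : h (U \ D) + D.card ≤ h U := by
  induction D using Finset.induction_on with
  | empty => simp
  | insert u D huD ih =>
    have ih' := ih ((Finset.subset_insert _ _).trans hD)
      (fun v hv => hu v (Finset.mem_insert_of_mem hv))
    rw [Finset.card_insert_of_notMem huD]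
    have huU : u ∈ U := hD (Finset.mem_insert_self _ _)
    have e1 : insert u (U \ insert u D) = U \ D := by
      ext y; by_cases hy : y = u
      · subst hy; simp [huU, huD]
      · simp [hy]
    have h1 := c.h_mono (U \ insert u D) (U \ D)
      (Finset.sdiff_subset_sdiff (Finset.Subset.refl _) (Finset.subset_insert _ _))
    have h2 : h (U \ insert u D) ≠ h (U \ D) := by
      intro he
      have h3 := c.h_closure (U \ insert u D) (U.erase u) u (by
        intro y hy
        simp only [Finset.mem_sdiff, Finset.mem_insert, not_or] at hy
        exact Finset.mem_erase.mpr ⟨hy.2.1, hy.1⟩) (by rw [e1, he])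
      rw [Finset.insert_erase huU] at h3
      have := hu u (Finset.mem_insert_self _ _)
      omega
    omega

/-- Deleting an element. -/
theorem exch_none (c : MorCtx Ind f h r) {S S' : Finset X} (hS : Ind S ∧ h S = r)
    (hS' : Ind S' ∧ h S' = r) (hlt : S.card < S'.card) :
    ∃ u ∈ S', u ∉ S ∧ Ind (S'.erase u) ∧ h (S'.erase u) = r := by
  by_contra hcon
  push Not at hcon
  have hcol := c.coloops S' (S' \ S) Finset.sdiff_subset (by
    intro u hu
    rw [Finset.mem_sdiff] at hu
    have := hcon u hu.1 hu.2 (c.mat.2.1 _ _ (Finset.erase_subset _ _) hS'.1)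
    have h2 := c.h_le (S'.erase u)
    rw [hS'.2]; omega)
  have e1 : S' \ (S' \ S) = S' ∩ S := by ext; simp
  rw [e1] at hcol
  have h1 := c.mor (S' ∩ S) S Finset.inter_subset_right
  have h2 := (c.ind_iff S).mp hS.1
  have h3 := (c.ind_iff (S' ∩ S)).mp (c.mat.2.1 _ _ Finset.inter_subset_right hS.1)
  have h4 := Finset.card_sdiff_add_card_inter S' S
  omega

/-- Adding an element. -/
theorem exch_some (c : MorCtx Ind f h r) {S S' : Finset X} (hS : Ind S ∧ h S = r)
    (hS' : Ind S' ∧ h S' = r) {x : X} (hx : x ∈ S) (hx' : x ∉ S') :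
    (S'.card < S.card ∧ Ind (insert x S') ∧ h (insert x S') = r) ∨
    ∃ u ∈ S', u ∉ S ∧ Ind (insert x (S'.erase u)) ∧ h (insert x (S'.erase u)) = r := by
  have hr : h (insert x S') = r :=
    le_antisymm (c.h_le _) (hS'.2 ▸ c.h_mono _ _ (Finset.subset_insert _ _))
  by_cases hi : Ind (insert x S')
  · by_cases hlt : S'.card < S.card
    · left; exact ⟨hlt, hi, hr⟩
    right
    by_contra hcon
    push Not at hcon
    have hcol := c.coloops (insert x S') (S' \ S)
      (Finset.sdiff_subset.trans (Finset.subset_insert _ _)) (by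
      intro u hu
      rw [Finset.mem_sdiff] at hu
      have hxu : x ≠ u := fun h => hx' (h ▸ hu.1)
      rw [Finset.erase_insert_of_ne hxu]
      have := hcon u hu.1 hu.2 (c.mat.2.1 _ _
        (Finset.insert_subset_insert _ (Finset.erase_subset _ _)) hi)
      have h2 := c.h_le (insert x (S'.erase u))
      omega)
    have e1 : insert x S' \ (S' \ S) = insert x (S' ∩ S) := by
      ext y; by_cases hy : y = x
      · subst hy; simp [hx]
      · simp [hy]; tauto
    rw [e1] at hcol
    have hsub : insert x (S' ∩ S) ⊆ S := Finset.insert_subset hx Finset.inter_subset_right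
    have h1 := c.mor _ S hsub
    have h2 := (c.ind_iff S).mp hS.1
    have h3 := (c.ind_iff _).mp (c.mat.2.1 _ _ hsub hS.1)
    rw [Finset.card_insert_of_notMem (by simp [hx'])] at h3
    have h4 := Finset.card_sdiff_add_card_inter S' S
    omega
  · right
    have hsub : insert x (S' ∩ S) ⊆ S := Finset.insert_subset hx Finset.inter_subset_right
    obtain ⟨D, d1, d2, d3, d4⟩ := exists_ext c.mat (c.mat.2.1 _ _ hsub hS.1)
      (Finset.insert_subset_insert x (Finset.inter_subset_left (s₁ := S') (s₂ := S)))
    have f1 : f (insert x S') = S'.card := by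
      have a1 := c.f_le (insert x S')
      rw [Finset.card_insert_of_notMem hx'] at a1
      have a2 := mt (c.ind_iff (insert x S')).mpr hi
      rw [Finset.card_insert_of_notMem hx'] at a2
      have a3 := c.f_mono (Finset.subset_insert x S')
      have a4 := (c.ind_iff S').mp hS'.1
      omega
    rw [← c.f_eq, f1] at d4
    have hxD : x ∈ D := d1 (Finset.mem_insert_self _ _)
    obtain ⟨u, hu, huD⟩ : ∃ u ∈ S', u ∉ D := by
      by_contra hcon
      push Not at hcon
      have : insert x S' ⊆ D := Finset.insert_subset hxD hcon
      have := Finset.card_le_card this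
      rw [Finset.card_insert_of_notMem hx'] at this
      omega
    have huS : u ∉ S := fun h => huD (d1 (Finset.mem_insert_of_mem (Finset.mem_inter.mpr ⟨hu, h⟩)))
    have hDe : D = insert x (S'.erase u) := by
      apply Finset.eq_of_subset_of_card_le
      · intro y hy
        have hyu : y ≠ u := fun h => huD (h ▸ hy)
        rcases Finset.mem_insert.mp (d2 hy) with h | h
        · simp [h]
        · simp [h, hyu]
      · rw [Finset.card_insert_of_notMem (by simp [hx']), Finset.card_erase_of_mem hu]
        have := Finset.card_pos.mpr ⟨u, hu⟩
        omega
    refine ⟨u, hu, huS, hDe ▸ d3, ?_⟩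
    rw [← hDe]
    have m1 := c.mor D _ d2
    have m2 := (c.ind_iff D).mp d3
    have := c.h_le D
    omega

end MorCtx

end RankLemmas

section BaseForms

theorem class_eq_iff {X : Type*} (G : Finset X) (R : X → X → Prop) [∀ i, DecidablePred (R i)]
    (hrefl : ∀ i ∈ G, R i i)
    (htr : ∀ i ∈ G, ∀ j ∈ G, ∀ z ∈ G, R i j → R i z → R j z) (i j : X) (hi : i ∈ G) (hj : j ∈ G) :
    G.filter (R i) = G.filter (R j) ↔ R i j := by
  constructor
  · intro h
    have : j ∈ G.filter (R j) := by simp [hj, hrefl j hj]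
    rw [← h] at this
    exact (Finset.mem_filter.mp this).2
  · intro h
    ext z
    simp only [Finset.mem_filter]
    constructor
    · rintro ⟨hz, h2⟩; exact ⟨hz, htr i hi j hj z hz h h2⟩
    · rintro ⟨hz, h2⟩
      exact ⟨hz, htr j hj i hi z hz (htr i hi j hj i hi h (hrefl i hi)) h2⟩

theorem multi_sq {X ι : Type*} [Fintype X] [DecidableEq X] [DecidableEq ι] (G : Finset X)
    (κ : X → ι) (v : X → ℝ) :
    ∑ i, ∑ j, (if i ∈ G ∧ j ∈ G ∧ κ i = κ j then v i * v j else 0) =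
      ∑ c ∈ G.image κ, (∑ i ∈ G with κ i = c, v i) ^ 2 := by
  have h1 : ∑ i, ∑ j, (if i ∈ G ∧ j ∈ G ∧ κ i = κ j then v i * v j else 0) =
      ∑ i ∈ G, ∑ j ∈ G with κ j = κ i, v i * v j := by
    have hG : ∀ F : X → ℝ, ∑ i ∈ G, F i = ∑ i, if i ∈ G then F i else 0 := by
      intro F
      rw [Finset.sum_ite_mem, Finset.univ_inter]
    rw [hG]
    refine Finset.sum_congr rfl fun i _ => ?_
    by_cases hi : i ∈ G
    · rw [if_pos hi, Finset.sum_filter, hG]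
      refine Finset.sum_congr rfl fun j _ => ?_
      by_cases hj : j ∈ G
      · by_cases hk : κ i = κ j
        · simp [hi, hj, hk]
        · simp [hk, Ne.symm hk]
      · simp [hj]
    · rw [if_neg hi]
      exact Finset.sum_eq_zero fun j _ => by simp [hi]
  rw [h1, ← Finset.sum_fiberwise_of_maps_to (t := G.image κ) (g := κ)
    (fun i hi => Finset.mem_image_of_mem κ hi)]
  refine Finset.sum_congr rfl fun c _ => ?_
  rw [sq, Finset.sum_mul_sum]
  refine Finset.sum_congr rfl fun i hi => ?_
  rw [(Finset.mem_filter.mp hi).2]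

/-- Quadratic form of a complete multipartite graph. -/
theorem multi_form {X ι : Type*} [Fintype X] [DecidableEq X] [DecidableEq ι] (G E : Finset X)
    (hGE : Disjoint G E) (κ : X → ι) (cond : X → X → Prop)
    [∀ i j, Decidable (cond i j)]
    (hc : ∀ i j, cond i j ↔ (i ∈ G ∧ j ∈ G ∧ κ i ≠ κ j) ∨ (i ∈ G ∧ j ∈ E) ∨ (i ∈ E ∧ j ∈ G))
    (v : X → ℝ) :
    ∑ i, ∑ j, (if cond i j then v i * v j else 0) =
      (∑ i ∈ G, v i) ^ 2 + 2 * (∑ i ∈ G, v i) * (∑ i ∈ E, v i) -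
      ∑ c ∈ G.image κ, (∑ i ∈ G with κ i = c, v i) ^ 2 := by
  have hp : ∀ i j, (if cond i j then v i * v j else 0) =
      (if i ∈ G then v i else 0) * (if j ∈ G then v j else 0) +
      (if i ∈ G then v i else 0) * (if j ∈ E then v j else 0) +
      (if i ∈ E then v i else 0) * (if j ∈ G then v j else 0) -
      (if i ∈ G ∧ j ∈ G ∧ κ i = κ j then v i * v j else 0) := by
    intro i j
    have d1 : i ∈ G → i ∉ E := fun h => Finset.disjoint_left.mp hGE h
    have d2 : j ∈ G → j ∉ E := fun h => Finset.disjoint_left.mp hGE h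
    simp only [hc]
    by_cases h1 : i ∈ G <;> by_cases h2 : j ∈ G <;> by_cases h3 : i ∈ E <;> by_cases h4 : j ∈ E <;>
      by_cases h5 : κ i = κ j <;> simp_all
  simp only [hp, Finset.sum_add_distrib, Finset.sum_sub_distrib, ← Finset.sum_mul_sum, multi_sq,
    Finset.sum_ite_mem, Finset.univ_inter]
  ring

theorem multi_cs {X ι : Type*} [DecidableEq ι] (G : Finset X) (κ : X → ι) (v : X → ℝ) :
    (∑ i ∈ G, v i) ^ 2 ≤
      (G.image κ).card * ∑ c ∈ G.image κ, (∑ i ∈ G with κ i = c, v i) ^ 2 := by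
  rw [← Finset.sum_fiberwise_of_maps_to (t := G.image κ) (g := κ)
    (fun i hi => Finset.mem_image_of_mem κ hi)]
  exact sq_sum_le_card_mul_sum_sq

variable {X : Type*} [Fintype X] [DecidableEq X] {Ind : Finset X → Prop}
  {f h : Finset X → ℕ} {r : ℕ}

theorem mem_mCont (S : Finset X) (x : X) : x ∈ mCont Ind S ↔ x ∉ S ∧ Ind (insert x S) := by
  simp [mCont]

theorem par_eq_iff (hM : IsMatroid Ind) (S : Finset X) (i j : X)
    (hi : i ∈ mCont Ind S) (hj : j ∈ mCont Ind S) :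
    mParClass Ind S i = mParClass Ind S j ↔ (j = i ∨ ¬ Ind (insert j (insert i S))) := by
  refine class_eq_iff (mCont Ind S) (fun x y => y = x ∨ ¬ Ind (insert y (insert x S)))
    (fun i _ => Or.inl rfl) ?_ i j hi hj
  intro i hi j hj z hz hij hiz
  rw [mem_mCont] at hi hj hz
  by_contra hcon
  push Not at hcon
  obtain ⟨hzj, hI⟩ := hcon
  obtain ⟨y, hy, hyi, hyI⟩ := hM.2.2 (insert i S) (insert z (insert j S)) hi.2 hI (by
    rw [Finset.card_insert_of_notMem hi.1, Finset.card_insert_of_notMem (by simp [hzj, hz.1]),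
      Finset.card_insert_of_notMem hj.1]; omega)
  simp only [Finset.mem_insert, not_or] at hy hyi
  rcases hy with rfl | rfl | hy
  · rcases hiz with h | h
    · exact hyi.1 h
    · exact h hyI
  · rcases hij with h | h
    · exact hyi.1 h
    · exact h hyI
  · exact hyi.2 hy

theorem base_form (c : MorCtx Ind f h r) (S : Finset X) (hS : Ind S) (A B C : ℝ) (hC : 0 ≤ C)
    (hA : h S = r → A = 0 ∨ (B = 1 ∧ C = 1 ∧ ∃ p : ℕ, 2 ≤ p ∧ (mParClasses Ind S).card ≤ p ∧
      A = 1 + 1 / ((p : ℝ) - 1))) :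
    ∃ (l0 : ℝ) (l : X → ℝ), ∀ (v0 : ℝ) (v : X → ℝ), l0 * v0 + ∑ i, l i * v i = 0 →
      (if h S = r then A else 0) * v0 ^ 2 +
      2 * B * v0 * (∑ i, if i ∉ S ∧ Ind (insert i S) ∧ h (insert i S) = r then v i else 0) +
      C * (∑ i, ∑ j, if i ≠ j ∧ i ∉ S ∧ j ∉ S ∧ Ind (insert i (insert j S)) ∧
        h (insert i (insert j S)) = r then v i * v j else 0) ≤ 0 := by
  have hfS := (c.ind_iff S).mp hS
  have hrS := c.h_le S
  have hsq : ∀ (G : Finset X) (κ : X → Finset X) (v : X → ℝ),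
      0 ≤ ∑ c ∈ G.image κ, (∑ i ∈ G with κ i = c, v i) ^ 2 :=
    fun G κ v => Finset.sum_nonneg fun _ _ => sq_nonneg _
  have hlin : ∀ (G : Finset X) (v : X → ℝ), ∑ i, (if i ∈ G then (1:ℝ) else 0) * v i =
      ∑ i ∈ G, v i := by
    intro G v; simp
  by_cases h0 : h S = r
  · -- `S` is a basis
    set G := mCont Ind S with hG
    have hh : ∀ T, S ⊆ T → h T = r := fun T hT =>
      le_antisymm (c.h_le _) (h0 ▸ c.h_mono _ _ hT)
    have e1 : ∀ v : X → ℝ, (∑ i, if i ∉ S ∧ Ind (insert i S) ∧ h (insert i S) = r then v i else 0) =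
        ∑ i ∈ G, v i := by
      intro v
      rw [hG, mCont, Finset.sum_filter]
      refine Finset.sum_congr rfl fun i _ => ?_
      rw [hh (insert i S) (Finset.subset_insert _ _)]; simp
    have e2 := multi_form G ∅ (by simp) (mParClass Ind S)
      (fun i j => i ≠ j ∧ i ∉ S ∧ j ∉ S ∧ Ind (insert i (insert j S)) ∧
        h (insert i (insert j S)) = r) (by
      intro i j
      rw [hh (insert i (insert j S)) ((Finset.subset_insert _ _).trans (Finset.subset_insert _ _))]
      simp only [Finset.notMem_empty, and_false, false_and, or_false, and_true]
      constructor
      · rintro ⟨a1, a2, a3, a4⟩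
        have hi : i ∈ G := (mem_mCont _ _).mpr ⟨a2, c.mat.2.1 _ _
          (Finset.insert_subset_insert i (Finset.subset_insert j S)) a4⟩
        have hj : j ∈ G := (mem_mCont _ _).mpr ⟨a3, c.mat.2.1 _ _ (Finset.subset_insert i _) a4⟩
        refine ⟨hi, hj, ?_⟩
        rw [Ne, par_eq_iff c.mat S i j hi hj, Finset.insert_comm]
        push Not
        exact ⟨a1.symm, a4⟩
      · rintro ⟨hi, hj, a⟩
        rw [Ne, par_eq_iff c.mat S i j hi hj, Finset.insert_comm] at a
        push Not at a
        exact ⟨a.1.symm, ((mem_mCont _ _).mp hi).1, ((mem_mCont _ _).mp hj).1, a.2⟩)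
    rcases hA h0 with hA0 | ⟨hB, hC1, p, hp2, hpS, hAp⟩
    · refine ⟨0, fun i => if i ∈ G then 1 else 0, fun v0 v hv => ?_⟩
      rw [hlin, zero_mul, zero_add] at hv
      rw [e1, e2, hv, hA0]
      have := mul_nonneg hC (hsq G (mParClass Ind S) v)
      simp
      linarith
    · refine ⟨1, fun i => (if i ∈ G then 1 else 0) * (((p : ℝ) - 1) / p), fun v0 v hv => ?_⟩
      have hv' : v0 + ((p : ℝ) - 1) / p * ∑ i ∈ G, v i = 0 := by
        have e3 : ∑ i, (if i ∈ G then (1:ℝ) else 0) * (((p : ℝ) - 1) / p) * v i =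
            ((p : ℝ) - 1) / p * ∑ i ∈ G, v i := by
          rw [← hlin G v, Finset.mul_sum]
          refine Finset.sum_congr rfl fun i _ => ?_
          ring
        rw [← e3, ← one_mul v0]
        exact hv
      rw [e1, e2, if_pos h0, hB, hC1, hAp]
      have hcs := multi_cs G (mParClass Ind S) v
      have hq0 := hsq G (mParClass Ind S) v
      set s := ∑ i ∈ G, v i
      set Q := ∑ c ∈ G.image (mParClass Ind S), (∑ i ∈ G with mParClass Ind S i = c, v i) ^ 2
      have hpS' : (((G.image (mParClass Ind S)).card : ℕ) : ℝ) ≤ p := by exact_mod_cast hpS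
      have hp' : (2 : ℝ) ≤ p := by exact_mod_cast hp2
      have hsp : s ^ 2 ≤ p * Q := hcs.trans (mul_le_mul_of_nonneg_right hpS' hq0)
      have hp0 : (0 : ℝ) < p := by linarith
      have hp1 : (0 : ℝ) < p - 1 := by linarith
      have hv0 : v0 = -(((p : ℝ) - 1) / p * s) := by linarith
      simp only [Finset.sum_empty]
      rw [hv0]
      have : (1 + 1 / ((p : ℝ) - 1)) * (-(((p : ℝ) - 1) / p * s)) ^ 2 +
          2 * 1 * (-(((p : ℝ) - 1) / p * s)) * s + 1 * (s ^ 2 + 2 * s * 0 - Q) =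
          (s ^ 2 - p * Q) / p := by
        field_simp
        ring
      rw [this]
      exact div_nonpos_of_nonpos_of_nonneg (by linarith) hp0.le
  simp only [if_neg h0, zero_mul, zero_add]
  by_cases h1 : h S + 1 = r
  · -- corank one
    set G := Finset.univ.filter fun i => i ∉ S ∧ h (insert i S) = r with hG
    have mG : ∀ i, i ∈ G ↔ i ∉ S ∧ h (insert i S) = r := by intro i; simp [hG]
    have hGE : ∀ i ∈ G, i ∈ mCont Ind S := by
      intro i hi
      rw [mG] at hi
      refine (mem_mCont _ _).mpr ⟨hi.1, (c.ind_iff _).mpr ?_⟩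
      have a1 := c.mor S (insert i S) (Finset.subset_insert _ _)
      have a2 := c.f_le (insert i S)
      rw [Finset.card_insert_of_notMem hi.1] at *
      omega
    set E := mCont Ind S \ G with hE
    have hGh : ∀ i ∈ E, h (insert i S) + 1 = r := by
      intro i hi
      rw [hE, Finset.mem_sdiff, mG, mem_mCont] at hi
      have a1 := c.h_mono _ _ (Finset.subset_insert i S)
      have a2 := c.h_insert S i
      have : h (insert i S) ≠ r := fun h => hi.2 ⟨hi.1.1, h⟩
      omega
    have hmix : ∀ i ∈ G, ∀ j ∈ E, i ≠ j ∧ i ∉ S ∧ j ∉ S ∧ Ind (insert i (insert j S)) ∧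
        h (insert i (insert j S)) = r := by
      intro i hi j hj
      have hj1 := hGh j hj
      have hij : i ≠ j := by
        rintro rfl
        have := ((mG _).mp hi).2
        omega
      rw [hE, Finset.mem_sdiff, mem_mCont] at hj
      rw [mG] at hi
      have hr : h (insert i (insert j S)) = r := by
        refine le_antisymm (c.h_le _) ?_
        rw [← hi.2]
        exact c.h_mono _ _ (Finset.insert_subset_insert i (Finset.subset_insert j S))
      refine ⟨hij, hi.1, hj.1.1, ?_, hr⟩
      have a1 := c.mor _ _ (Finset.subset_insert i (insert j S))
      have a2 := (c.ind_iff _).mp hj.1.2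
      have a3 := c.f_le (insert i (insert j S))
      rw [c.ind_iff]
      have a4 : (insert i (insert j S)).card = (insert j S).card + 1 :=
        Finset.card_insert_of_notMem (by simp [hij, hi.1])
      omega
    have e1 : ∀ v : X → ℝ, (∑ i, if i ∉ S ∧ Ind (insert i S) ∧ h (insert i S) = r then v i else 0) =
        ∑ i ∈ G, v i := by
      intro v
      rw [hG, Finset.sum_filter]
      refine Finset.sum_congr rfl fun i _ => ?_
      congr 1
      refine propext ⟨fun a => ⟨a.1, a.2.2⟩, fun a => ⟨a.1, ?_, a.2⟩⟩
      exact ((mem_mCont _ _).mp (hGE i ((mG i).mpr a))).2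
    have e2 := multi_form G E (Finset.disjoint_sdiff) (mParClass Ind S)
      (fun i j => i ≠ j ∧ i ∉ S ∧ j ∉ S ∧ Ind (insert i (insert j S)) ∧
        h (insert i (insert j S)) = r) (by
      intro i j
      constructor
      · rintro ⟨a1, a2, a3, a4, a5⟩
        have hi : i ∈ mCont Ind S := (mem_mCont _ _).mpr ⟨a2, c.mat.2.1 _ _
          (Finset.insert_subset_insert i (Finset.subset_insert j S)) a4⟩
        have hj : j ∈ mCont Ind S :=
          (mem_mCont _ _).mpr ⟨a3, c.mat.2.1 _ _ (Finset.subset_insert i _) a4⟩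
        by_cases gi : i ∈ G
        · by_cases gj : j ∈ G
          · left
            refine ⟨gi, gj, ?_⟩
            rw [Ne, par_eq_iff c.mat S i j hi hj, Finset.insert_comm]
            push Not
            exact ⟨a1.symm, a4⟩
          · right; left; exact ⟨gi, by rw [hE]; exact Finset.mem_sdiff.mpr ⟨hj, gj⟩⟩
        · by_cases gj : j ∈ G
          · right; right; exact ⟨by rw [hE]; exact Finset.mem_sdiff.mpr ⟨hi, gi⟩, gj⟩
          · exfalso
            have b1 := hGh i (by rw [hE]; exact Finset.mem_sdiff.mpr ⟨hi, gi⟩)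
            have b2 := hGh j (by rw [hE]; exact Finset.mem_sdiff.mpr ⟨hj, gj⟩)
            have := c.h_closure S (insert j S) i (Finset.subset_insert _ _) (by omega)
            omega
      · rintro (⟨gi, gj, a⟩ | ⟨gi, ej⟩ | ⟨ei, gj⟩)
        · rw [Ne, par_eq_iff c.mat S i j (hGE i gi) (hGE j gj), Finset.insert_comm] at a
          push Not at a
          refine ⟨a.1.symm, ((mG _).mp gi).1, ((mG _).mp gj).1, a.2, ?_⟩
          refine le_antisymm (c.h_le _) ?_
          rw [← ((mG _).mp gj).2]
          exact c.h_mono _ _ (Finset.subset_insert _ _)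
        · exact hmix i gi j ej
        · obtain ⟨b1, b2, b3, b4, b5⟩ := hmix j gj i ei
          rw [Finset.insert_comm] at b4 b5
          exact ⟨b1.symm, b3, b2, b4, b5⟩)
    refine ⟨0, fun i => if i ∈ G then 1 else 0, fun v0 v hv => ?_⟩
    rw [hlin, zero_mul, zero_add] at hv
    rw [e1, e2, hv]
    have := mul_nonneg hC (hsq G (mParClass Ind S) v)
    simp only [mul_zero, zero_mul]
    linarith
  have e1 : ∀ v : X → ℝ, (∑ i, if i ∉ S ∧ Ind (insert i S) ∧ h (insert i S) = r then v i else 0) =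
      0 := by
    intro v
    refine Finset.sum_eq_zero fun i _ => if_neg ?_
    rintro ⟨-, -, a⟩
    have := c.h_insert S i
    omega
  by_cases h2 : h S + 2 = r
  · -- corank two
    set G := Finset.univ.filter fun i => i ∉ S ∧ h (insert i S) + 1 = r with hG
    have mG : ∀ i, i ∈ G ↔ i ∉ S ∧ h (insert i S) + 1 = r := by intro i; simp [hG]
    have hcl := class_eq_iff G (fun i j => h (insert i (insert j S)) ≠ r) (by
        intro i hi
        rw [mG] at hi
        simp only [Finset.insert_idem]; omega) (by
        intro i hi j hj z hz hij hiz
        rw [mG] at hi hj hz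
        have b1 := c.h_mono (insert i S) (insert i (insert j S))
          (Finset.insert_subset_insert i (Finset.subset_insert j S))
        have b2 := c.h_mono (insert i S) (insert i (insert z S))
          (Finset.insert_subset_insert i (Finset.subset_insert z S))
        have b3 := c.h_le (insert i (insert j S))
        have b4 := c.h_le (insert i (insert z S))
        have b5 := c.h_closure (insert i S) (insert j (insert i S)) z
          (Finset.subset_insert _ _) (by rw [Finset.insert_comm]; omega)
        have b6 := c.h_mono (insert j (insert z S)) (insert z (insert j (insert i S))) (by
          intro y; simp only [Finset.mem_insert]; tauto)
        rw [Finset.insert_comm j i S] at b5 b6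
        omega)
    have e2 := multi_form G ∅ (by simp) (fun i => G.filter fun j => h (insert i (insert j S)) ≠ r)
      (fun i j => i ≠ j ∧ i ∉ S ∧ j ∉ S ∧ Ind (insert i (insert j S)) ∧
        h (insert i (insert j S)) = r) (by
      intro i j
      simp only [Finset.notMem_empty, and_false, false_and, or_false]
      constructor
      · rintro ⟨a1, a2, a3, a4, a5⟩
        have b1 := c.h_insert S i
        have b2 := c.h_insert S j
        have b3 := c.h_insert (insert j S) i
        have b4 := c.h_insert (insert i S) j
        rw [Finset.insert_comm] at b4
        have hi : i ∈ G := (mG _).mpr ⟨a2, by omega⟩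
        have hj : j ∈ G := (mG _).mpr ⟨a3, by omega⟩
        refine ⟨hi, hj, fun he => ?_⟩
        exact (hcl i j hi hj).mp he a5
      · rintro ⟨hi, hj, a⟩
        have a5 : h (insert i (insert j S)) = r := by
          by_contra hne
          exact a ((hcl i j hi hj).mpr hne)
        rw [mG] at hi hj
        have hij : i ≠ j := by
          rintro rfl
          rw [Finset.insert_idem] at a5
          omega
        refine ⟨hij, hi.1, hj.1, ?_, a5⟩
        have b1 := c.mor S (insert i (insert j S))
          ((Finset.subset_insert _ _).trans (Finset.subset_insert _ _))
        have b2 := c.f_le (insert i (insert j S))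
        rw [c.ind_iff]
        rw [Finset.card_insert_of_notMem (by simp [hij, hi.1]),
          Finset.card_insert_of_notMem hj.1] at *
        omega)
    refine ⟨0, fun i => if i ∈ G then 1 else 0, fun v0 v hv => ?_⟩
    rw [hlin, zero_mul, zero_add] at hv
    rw [e1, e2, hv]
    have := mul_nonneg hC (hsq G (fun i => G.filter fun j => h (insert i (insert j S)) ≠ r) v)
    simp only [mul_zero, zero_mul]
    linarith
  · refine ⟨0, 0, fun v0 v _ => ?_⟩
    rw [e1]
    have e2 : (∑ i, ∑ j, if i ≠ j ∧ i ∉ S ∧ j ∉ S ∧ Ind (insert i (insert j S)) ∧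
        h (insert i (insert j S)) = r then v i * v j else 0) = 0 := by
      refine Finset.sum_eq_zero fun i _ => Finset.sum_eq_zero fun j _ => if_neg ?_
      rintro ⟨-, -, -, -, a⟩
      have := c.h_insert S j
      have := c.h_insert (insert j S) i
      omega
    rw [e2]; simp

end BaseForms

section Assembly

set_option linter.unusedSectionVars false

variable {X : Type*} [Fintype X] [DecidableEq X]

/-- The set of honest elements of a multiset on `Option X`. -/
def fsM (γ : Multiset (Option X)) : Finset X := Finset.univ.filter (fun x => some x ∈ γ)

/-- Honest elements have multiplicity at most one. -/
def validM (γ : Multiset (Option X)) : Prop := ∀ x : X, γ.count (some x) ≤ 1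

/-- Coefficients attached to the multiplicity of `none`. -/
def coefM (τ : ℝ) (a : ℕ) : ℝ := if a = 0 then 1 else if a = 1 then 1 else if a = 2 then τ else 0

/-- The coefficient function on multisets. -/
def qM (B : Finset X → Prop) (τ : ℝ) (γ : Multiset (Option X)) : ℝ :=
  if validM γ ∧ B (fsM γ) then coefM τ (γ.count none) else 0

theorem mem_fsM (γ : Multiset (Option X)) (x : X) : x ∈ fsM γ ↔ some x ∈ γ := by simp [fsM]

theorem fsM_none (γ : Multiset (Option X)) : fsM (none ::ₘ γ) = fsM γ := by
  ext x; simp [mem_fsM]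

theorem fsM_some (γ : Multiset (Option X)) (x : X) :
    fsM (some x ::ₘ γ) = insert x (fsM γ) := by
  ext y; simp [mem_fsM]

theorem validM_none (γ : Multiset (Option X)) : validM (none ::ₘ γ) ↔ validM γ := by
  simp [validM]

theorem validM_some (γ : Multiset (Option X)) (x : X) :
    validM (some x ::ₘ γ) ↔ validM γ ∧ x ∉ fsM γ := by
  simp only [validM, mem_fsM, Multiset.count_cons, Option.some.injEq]
  constructor
  · intro h
    refine ⟨fun y => ?_, fun hx => ?_⟩
    · have := h y; omega
    · have := h x
      have := Multiset.count_pos.mpr hx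
      simp only [if_true] at *
      omega
  · rintro ⟨h, hx⟩ y
    have := h y
    split_ifs with hy
    · subst hy
      rw [Multiset.count_eq_zero.mpr hx]
    · omega

theorem count_fsM (γ : Multiset (Option X)) (hv : validM γ) (x : X) :
    γ.count (some x) = if x ∈ fsM γ then 1 else 0 := by
  have := hv x
  split_ifs with h <;> rw [mem_fsM] at h
  · have := Multiset.count_pos.mpr h; omega
  · exact Multiset.count_eq_zero.mpr h

theorem card_validM (γ : Multiset (Option X)) (hv : validM γ) :
    γ.card = γ.count none + (fsM γ).card := by
  have h := Multiset.sum_count_eq_card (s := Finset.univ) (m := γ) (fun _ _ => Finset.mem_univ _)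
  rw [← h, Fintype.sum_option]
  simp only [count_fsM γ hv]
  simp

theorem validM_le {γ δ : Multiset (Option X)} (h : γ ≤ δ) (hv : validM δ) : validM γ :=
  fun x => (Multiset.count_le_of_le _ h).trans (hv x)

theorem fsM_erase_none (γ : Multiset (Option X)) : fsM (γ.erase none) = fsM γ := by
  ext x
  rw [mem_fsM, mem_fsM, Multiset.mem_erase_of_ne (by simp)]

theorem fsM_erase_some (γ : Multiset (Option X)) (hv : validM γ) (y : X) :
    fsM (γ.erase (some y)) = (fsM γ).erase y := by
  ext x
  rw [Finset.mem_erase, mem_fsM, mem_fsM]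
  by_cases hxy : x = y
  · subst hxy
    simp only [ne_eq, not_true_eq_false, false_and, iff_false]
    rw [← Multiset.count_eq_zero, Multiset.count_erase_self]
    have := hv x
    omega
  · rw [Multiset.mem_erase_of_ne (by simpa using hxy)]
    simp [hxy]

theorem coefM_nonneg {τ : ℝ} (hτ : 0 ≤ τ) (a : ℕ) : 0 ≤ coefM τ a := by
  unfold coefM; split_ifs <;> first | exact hτ | norm_num

theorem coefM_pos_iff {τ : ℝ} (hτ : 0 < τ) (a : ℕ) : 0 < coefM τ a ↔ a ≤ 2 := by
  unfold coefM
  split_ifs with h1 h2 h3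
  · simp [h1]
  · simp [h2]
  · simp [h3, hτ]
  · simp only [lt_self_iff_false, false_iff]; omega

theorem qM_pos_iff (B : Finset X → Prop) {τ : ℝ} (hτ : 0 < τ) (γ : Multiset (Option X)) :
    0 < qM B τ γ ↔ validM γ ∧ B (fsM γ) ∧ γ.count none ≤ 2 := by
  unfold qM
  split_ifs with h
  · rw [coefM_pos_iff hτ]; tauto
  · simp only [lt_self_iff_false, false_iff]; tauto

theorem qM_nonneg (B : Finset X → Prop) {τ : ℝ} (hτ : 0 ≤ τ) (γ : Multiset (Option X)) :
    0 ≤ qM B τ γ := by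
  unfold qM; split_ifs
  · exact coefM_nonneg hτ _
  · exact le_rfl

/-- The weighted sum over supersets. -/
def WM (B : Finset X → Prop) (ω : X → ℝ) (S : Finset X) (m : ℕ) : ℝ :=
  ∑ T ∈ Finset.univ.filter (fun T : Finset X => S ⊆ T ∧ T.card = S.card + m ∧ B T),
    ∏ y ∈ T \ S, ω y

theorem WM_zero (B : Finset X → Prop) (ω : X → ℝ) (S : Finset X) :
    WM B ω S 0 = if B S then 1 else 0 := by
  have : (Finset.univ.filter (fun T : Finset X => S ⊆ T ∧ T.card = S.card + 0 ∧ B T)) =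
      if B S then {S} else ∅ := by
    ext T
    simp only [Finset.mem_filter, Finset.mem_univ, true_and, add_zero]
    constructor
    · rintro ⟨h1, h2, h3⟩
      obtain rfl := Finset.eq_of_subset_of_card_le h1 h2.le
      simp [h3]
    · intro h
      split_ifs at h with hB
      · obtain rfl := Finset.mem_singleton.mp h
        exact ⟨subset_rfl, rfl, hB⟩
      · simp at h
  rw [WM, this]
  split_ifs <;> simp

theorem WM_succ (B : Finset X → Prop) (ω : X → ℝ) (S : Finset X) (m : ℕ) :
    ∑ x, (if x ∈ S then 0 else ω x * WM B ω (insert x S) m) = (m + 1) * WM B ω S (m + 1) := by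
  have h1 : ∑ x, (if x ∈ S then 0 else ω x * WM B ω (insert x S) m) =
      ∑ x ∈ Finset.univ.filter (fun x => x ∉ S),
        ∑ T ∈ Finset.univ.filter
          (fun T : Finset X => insert x S ⊆ T ∧ T.card = (insert x S).card + m ∧ B T),
          ∏ y ∈ T \ S, ω y := by
    rw [Finset.sum_filter]
    refine Finset.sum_congr rfl fun x _ => ?_
    by_cases hx : x ∈ S
    · simp [hx]
    · rw [if_neg hx, if_pos hx, WM, Finset.mul_sum]
      refine Finset.sum_congr rfl fun T hT => ?_
      simp only [Finset.mem_filter, Finset.insert_subset_iff] at hT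
      have : T \ S = insert x (T \ insert x S) := by
        ext y
        simp only [Finset.mem_sdiff, Finset.mem_insert]
        by_cases hy : y = x
        · subst hy; simp [hx, hT.2.1.1]
        · simp [hy]
      rw [this, Finset.prod_insert (by simp)]
  rw [h1, Finset.sum_comm' (t' := Finset.univ.filter
      (fun T : Finset X => S ⊆ T ∧ T.card = S.card + (m + 1) ∧ B T)) (s' := fun T => T \ S), WM,
    Finset.mul_sum]
  · refine Finset.sum_congr rfl fun T hT => ?_
    simp only [Finset.mem_filter, Finset.mem_univ, true_and] at hT
    rw [Finset.sum_const, Finset.card_sdiff_of_subset hT.1, hT.2.1, nsmul_eq_mul]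
    simp
  · intro x T
    simp only [Finset.mem_filter, Finset.mem_univ, true_and, Finset.insert_subset_iff,
      Finset.mem_sdiff]
    constructor
    · rintro ⟨a, ⟨b, c⟩, d, e⟩
      rw [Finset.card_insert_of_notMem a] at d
      exact ⟨⟨b, a⟩, c, by omega, e⟩
    · rintro ⟨⟨b, a⟩, c, d, e⟩
      refine ⟨a, ⟨b, c⟩, ?_, e⟩
      rw [Finset.card_insert_of_notMem a]; omega

theorem PP_invalid (B : Finset X → Prop) (τ : ℝ) (x : Option X → ℝ) (m : ℕ) :
    ∀ α : Multiset (Option X), ¬ validM α → PP (qM B τ) x m α = 0 := by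
  induction m with
  | zero => intro α h; simp [PP, qM, h]
  | succ m ih =>
    intro α h
    rw [PP]
    refine Finset.sum_eq_zero fun i _ => ?_
    rw [ih _ (fun h2 => h (validM_le (Multiset.le_cons_self _ _) h2)), mul_zero]

theorem PP_count (B : Finset X → Prop) (τ : ℝ) (x : Option X → ℝ) (hx : x none = 0) (m : ℕ) :
    ∀ α : Multiset (Option X), validM α → PP (qM B τ) x m α =
      coefM τ (α.count none) * m.factorial * WM B (fun i => x (some i)) (fsM α) m := by
  induction m with
  | zero =>
    intro α h
    simp only [PP, qM, h, true_and, WM_zero]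
    split_ifs <;> simp
  | succ m ih =>
    intro α h
    rw [PP, Fintype.sum_option, hx, zero_mul, zero_add]
    have h2 : ∀ i : X, x (some i) * PP (qM B τ) x m (some i ::ₘ α) =
        coefM τ (α.count none) * m.factorial * (if i ∈ fsM α then 0 else
          x (some i) * WM B (fun i => x (some i)) (insert i (fsM α)) m) := by
      intro i
      by_cases hi : i ∈ fsM α
      · rw [PP_invalid _ _ _ _ _ (by rw [validM_some]; tauto), if_pos hi]; simp
      · rw [ih _ ((validM_some _ _).mpr ⟨h, hi⟩), if_neg hi, fsM_some,
          Multiset.count_cons_of_ne (by simp)]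
        ring
    simp only [h2]
    rw [← Finset.mul_sum, WM_succ, Nat.factorial_succ]
    push_cast
    ring

theorem qM_base {Ind : Finset X → Prop} {f h : Finset X → ℕ} {r : ℕ} (c : MorCtx Ind f h r)
    (p : ℕ) (hp : 2 ≤ p) (m : ℕ)
    (hpS : ∀ S, Ind S → h S = r → S.card = m → (mParClasses Ind S).card ≤ p)
    (α : Multiset (Option X)) (hα : α.card = m) :
    MHyp (Matrix.of fun i j =>
      qM (fun S => Ind S ∧ h S = r) (1 + 1 / ((p : ℝ) - 1)) (i ::ₘ j ::ₘ α)) := by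
  set τ : ℝ := 1 + 1 / ((p : ℝ) - 1) with hτ
  have hp' : (2 : ℝ) ≤ p := by exact_mod_cast hp
  have hτ0 : 0 ≤ τ := by
    have : 0 ≤ 1 / ((p : ℝ) - 1) := by apply div_nonneg <;> linarith
    linarith
  have hsymm : (Matrix.of fun i j =>
      qM (fun S => Ind S ∧ h S = r) τ (i ::ₘ j ::ₘ α)).IsSymm := by
    ext i j
    simp only [Matrix.transpose_apply, Matrix.of_apply]
    rw [Multiset.cons_swap]
  by_cases hv : validM α ∧ Ind (fsM α)
  swap
  · refine mhyp_of_lin _ hsymm 0 fun v _ => ?_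
    have : (Matrix.of fun i j =>
      qM (fun S => Ind S ∧ h S = r) τ (i ::ₘ j ::ₘ α)) = 0 := by
      ext i j
      simp only [Matrix.of_apply, Matrix.zero_apply, qM]
      refine if_neg fun h2 => hv ⟨validM_le ?_ h2.1, c.mat.2.1 _ _ ?_ h2.2.1⟩
      · exact (Multiset.le_cons_self _ _).trans (Multiset.le_cons_self _ _)
      · intro x; rw [mem_fsM, mem_fsM]; simp; tauto
    rw [this]; simp
  obtain ⟨hv, hI⟩ := hv
  set S := fsM α with hS
  set a := α.count none with ha
  obtain ⟨l0, l, hl⟩ := base_form c S hI (coefM τ (a + 2)) (coefM τ (a + 1)) (coefM τ a)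
    (coefM_nonneg hτ0 _) (by
      intro hr
      by_cases ha0 : a = 0
      · right
        refine ⟨by simp [coefM, ha0], by simp [coefM, ha0], p, hp, ?_, by simp [coefM, ha0, hτ]⟩
        refine hpS S hI hr ?_
        have := card_validM α hv
        rw [← hS, ← ha, hα] at this
        omega
      · left
        have : a + 2 ≠ 2 := by omega
        simp [coefM, ha0])
  refine mhyp_of_lin _ hsymm (fun i => i.elim l0 l) fun v hlv => ?_
  simp only [dotProduct, Fintype.sum_option, Option.elim] at hlv
  have key := hl (v none) (fun i => v (some i)) hlv
  refine le_of_eq_of_le ?_ key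
  have q1 : qM (fun S => Ind S ∧ h S = r) τ (none ::ₘ none ::ₘ α) =
      if h S = r then coefM τ (a + 2) else 0 := by
    simp [qM, validM_none, fsM_none, hv, hI, ← hS, ← ha]
  have q2 : ∀ i : X, qM (fun S => Ind S ∧ h S = r) τ (none ::ₘ some i ::ₘ α) =
      if i ∉ S ∧ Ind (insert i S) ∧ h (insert i S) = r then coefM τ (a + 1) else 0 := by
    intro i
    simp [qM, validM_none, validM_some, fsM_none, fsM_some, hv, ← hS, ← ha]
  have q3 : ∀ i j : X, qM (fun S => Ind S ∧ h S = r) τ (some i ::ₘ some j ::ₘ α) =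
      if i ≠ j ∧ i ∉ S ∧ j ∉ S ∧ Ind (insert i (insert j S)) ∧ h (insert i (insert j S)) = r
      then coefM τ a else 0 := by
    intro i j
    simp only [qM, validM_some, fsM_some, hv, ← hS, Finset.mem_insert, not_or]
    have : Multiset.count none (some i ::ₘ some j ::ₘ α) = a := by simp [ha]
    rw [this]
    congr 1
    apply propext
    tauto
  have q2' : ∀ i : X, qM (fun S => Ind S ∧ h S = r) τ (some i ::ₘ none ::ₘ α) =
      if i ∉ S ∧ Ind (insert i S) ∧ h (insert i S) = r then coefM τ (a + 1) else 0 := by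
    intro i; rw [Multiset.cons_swap, q2]
  simp only [dotProduct, Matrix.mulVec, Fintype.sum_option, Matrix.of_apply, q1, q2, q2', q3]
  have e1 : ∑ i : X, (if i ∉ S ∧ Ind (insert i S) ∧ h (insert i S) = r then coefM τ (a + 1) else 0)
      * v (some i) = coefM τ (a + 1) * ∑ i, if i ∉ S ∧ Ind (insert i S) ∧ h (insert i S) = r
        then v (some i) else 0 := by
    rw [Finset.mul_sum]
    refine Finset.sum_congr rfl fun i _ => ?_
    split_ifs <;> ring
  have e2 : ∑ i : X, v (some i) * ((if i ∉ S ∧ Ind (insert i S) ∧ h (insert i S) = r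
      then coefM τ (a + 1) else 0) * v none + ∑ j : X, (if i ≠ j ∧ i ∉ S ∧ j ∉ S ∧
        Ind (insert i (insert j S)) ∧ h (insert i (insert j S)) = r then coefM τ a else 0) *
          v (some j)) = coefM τ (a + 1) * v none *
        (∑ i, if i ∉ S ∧ Ind (insert i S) ∧ h (insert i S) = r then v (some i) else 0) +
      coefM τ a * ∑ i : X, ∑ j : X, (if i ≠ j ∧ i ∉ S ∧ j ∉ S ∧
        Ind (insert i (insert j S)) ∧ h (insert i (insert j S)) = r
          then v (some i) * v (some j) else 0) := by
    rw [Finset.mul_sum, Finset.mul_sum, ← Finset.sum_add_distrib]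
    refine Finset.sum_congr rfl fun i _ => ?_
    rw [mul_add]
    congr 1
    · split_ifs <;> ring
    · rw [Finset.mul_sum, Finset.mul_sum]
      refine Finset.sum_congr rfl fun j _ => ?_
      split_ifs <;> ring
  rw [e1, e2]
  ring

theorem qM_exch {Ind : Finset X → Prop} {f h : Finset X → ℕ} {r : ℕ} (c : MorCtx Ind f h r)
    {τ : ℝ} (hτ : 0 < τ) (γ γ' : Multiset (Option X)) (hcard : γ.card = γ'.card)
    (h1 : 0 < qM (fun S => Ind S ∧ h S = r) τ γ) (h2 : 0 < qM (fun S => Ind S ∧ h S = r) τ γ')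
    (i : Option X) (hi : γ'.count i < γ.count i) :
    ∃ u, γ.count u < γ'.count u ∧
      0 < qM (fun S => Ind S ∧ h S = r) τ (i ::ₘ γ'.erase u) := by
  rw [qM_pos_iff _ hτ] at h1 h2
  obtain ⟨v1, b1, a1⟩ := h1
  obtain ⟨v2, b2, a2⟩ := h2
  have c1 := card_validM γ v1
  have c2 := card_validM γ' v2
  have cs : ∀ y, y ∈ fsM γ' → y ∉ fsM γ → γ.count (some y) < γ'.count (some y) := by
    intro y h1 h2
    rw [count_fsM γ v1, count_fsM γ' v2, if_pos h1, if_neg h2]; omega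
  cases i with
  | none =>
    obtain ⟨u, hu, hu', hB⟩ := c.exch_none b1 b2 (by omega)
    refine ⟨some u, cs u hu hu', ?_⟩
    rw [qM_pos_iff _ hτ, validM_none, fsM_none, fsM_erase_some _ v2]
    refine ⟨validM_le (Multiset.erase_le _ _) v2, hB, ?_⟩
    rw [Multiset.count_cons_self, Multiset.count_erase_of_ne (by simp)]
    omega
  | some x =>
    rw [count_fsM γ v1, count_fsM γ' v2] at hi
    have hx : x ∈ fsM γ := by by_contra h; simp [h] at hi
    have hx' : x ∉ fsM γ' := by intro h; simp [h, hx] at hi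
    rcases c.exch_some b1 b2 hx hx' with ⟨hlt, hB⟩ | ⟨u, hu, hu', hB⟩
    · refine ⟨none, by omega, ?_⟩
      rw [qM_pos_iff _ hτ, validM_some, fsM_some, fsM_erase_none]
      refine ⟨⟨validM_le (Multiset.erase_le _ _) v2, hx'⟩, hB, ?_⟩
      rw [Multiset.count_cons_of_ne (by simp), Multiset.count_erase_self]
      omega
    · refine ⟨some u, cs u hu hu', ?_⟩
      rw [qM_pos_iff _ hτ, validM_some, fsM_some, fsM_erase_some _ v2]
      refine ⟨⟨validM_le (Multiset.erase_le _ _) v2, by simp [hx']⟩, hB, ?_⟩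
      rw [Multiset.count_cons_of_ne (by simp), Multiset.count_erase_of_ne (by simp)]
      omega

end Assembly

/-- **Refined log-concavity for morphisms of matroids.** -/
theorem morphism_refined_log_concavity
    (IndepM : Finset X → Prop) (IndepN : Finset Y → Prop) (Φ : X → Y)
    (hM : IsMatroid IndepM) (hN : IsMatroid IndepN)
    (hΦ : IsMorphism IndepM IndepN Φ)
    (ω : X → ℝ) (hω : ∀ x, 0 < ω x)
    (k : ℕ) (hk1 : 1 ≤ k) (hk2 : k < rkOf IndepM (Finset.univ : Finset X))
    (hbasis : ∃ S : Finset X, IsPhiBasis IndepM IndepN Φ S ∧ S.card = k - 1)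
    (hp : 2 ≤ contNumB IndepM IndepN Φ (k - 1)) :
    ((1 : ℝ) + 1 / (k : ℝ)) *
        (1 + 1 / ((contNumB IndepM IndepN Φ (k - 1) : ℝ) - 1)) *
        Bw IndepM IndepN Φ ω (k - 1) * Bw IndepM IndepN Φ ω (k + 1) ≤
      (Bw IndepM IndepN Φ ω k) ^ 2 := by

  obtain ⟨m, rfl⟩ : ∃ m, k = m + 1 := ⟨k - 1, by omega⟩
  simp only [Nat.add_sub_cancel] at *
  set p := contNumB IndepM IndepN Φ m with hpdef
  have c := morCtx_of IndepM IndepN Φ hM hN hΦ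
  have hp' : (2 : ℝ) ≤ p := by exact_mod_cast hp
  have hτ : (0 : ℝ) < 1 + 1 / ((p : ℝ) - 1) := by
    have : 0 ≤ 1 / ((p : ℝ) - 1) := by apply div_nonneg <;> linarith
    linarith
  set B : Finset X → Prop := fun S => IndepM S ∧
    rkOf IndepN (S.image Φ) = rkOf IndepN (Finset.univ : Finset Y) with hB
  set x : Option X → ℝ := fun i => i.elim 0 ω with hx
  have hW : ∀ n, WM B (fun i => x (some i)) ∅ n = Bw IndepM IndepN Φ ω n := by
    intro n
    unfold WM Bw
    simp only [Finset.empty_subset, true_and, Finset.card_empty, zero_add, Finset.sdiff_empty]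
    refine Finset.sum_congr ?_ fun T _ => rfl
    ext T
    rw [Finset.mem_filter, Finset.mem_filter]
    exact ⟨fun h => ⟨h.1, h.2.2, h.2.1⟩, fun h => ⟨h.1, h.2.2, h.2.1⟩⟩
  have hf0 : fsM (0 : Multiset (Option X)) = ∅ := by ext y; simp [mem_fsM]
  have hv0 : validM (0 : Multiset (Option X)) := by intro y; simp
  have key := PP_final (qM B (1 + 1 / ((p : ℝ) - 1))) x (fun γ => qM_nonneg _ hτ.le γ)
    (by intro i; cases i with
      | none => exact le_rfl
      | some i => exact (hω i).le) m none
    (fun γ γ' h1 h2 h3 h4 i hi => qM_exch c hτ γ γ' (h1.trans h2.symm) h3 h4 i hi)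
    (fun α hα => qM_base c p hp m (by
      intro S h1 h2 h3
      rw [hpdef, contNumB]
      exact Finset.le_sup (f := fun S => (mParClasses IndepM S).card)
        (Finset.mem_filter.mpr ⟨Finset.mem_univ _, ⟨h1, h2⟩, h3⟩)) α (by omega))
  rw [PP_count _ _ x rfl _ _ ((validM_none _).mpr ((validM_none _).mpr hv0)),
    PP_count _ _ x rfl _ _ ((validM_none _).mpr hv0), PP_count _ _ x rfl _ _ hv0,
    fsM_none, fsM_none, hf0, hW, hW, hW] at key
  have c0 : coefM (1 + 1 / ((p : ℝ) - 1)) (Multiset.count none (0 : Multiset (Option X))) = 1 := by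
    simp [coefM]
  have c1 : coefM (1 + 1 / ((p : ℝ) - 1))
      (Multiset.count none (none ::ₘ (0 : Multiset (Option X)))) = 1 := by
    simp [coefM]
  have c2 : coefM (1 + 1 / ((p : ℝ) - 1))
      (Multiset.count none (none ::ₘ none ::ₘ (0 : Multiset (Option X)))) =
      1 + 1 / ((p : ℝ) - 1) := by
    simp [coefM]
  rw [c0, c1, c2, Nat.factorial_succ (m + 1), Nat.factorial_succ m] at key
  have hm : (0 : ℝ) < m.factorial := by exact_mod_cast Nat.factorial_pos m
  have hm1 : (0 : ℝ) < (m : ℝ) + 1 := by positivity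
  push_cast at key ⊢
  set τ : ℝ := 1 + 1 / ((p : ℝ) - 1)
  generalize Bw IndepM IndepN Φ ω m = b0 at *
  generalize Bw IndepM IndepN Φ ω (m + 1) = b1 at *
  generalize Bw IndepM IndepN Φ ω (m + 1 + 1) = b2 at *
  generalize (m.factorial : ℝ) = F at *
  have hfac : 0 < (F * ((m : ℝ) + 1)) ^ 2 := by positivity
  refine le_of_mul_le_mul_left ?_ hfac
  refine le_of_eq_of_le ?_ (key.trans_eq ?_)
  · field_simp
  · ring
end
end

section
/- Let Φ : M → N be a morphism of matroids M = (X, I) and N = (Y, J) with |X| = n, let ω : X → ℝ_{>0} be a positive weight function, and let k be an integer with 1 ≤ k < rk(M). Suppose B_ω(k) > 0. Then B_ω(k)² = (1 + 1/k)·(1 + 1/(n − k))·B_ω(k−1)·B_ω(k+1) if and only if: every subset of X of size k+1 is independent in M (equivalently girth(M) > k+1), the weight function ω is uniform, and g(Φ(S)) = rk(N) for every independent set S ∈ I with |S| = k−1. -/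
open scoped Classical BigOperators

noncomputable section

variable {X Y : Type*} [Fintype X] [DecidableEq X] [Fintype Y] [DecidableEq Y]

/-! ### Quadratic forms -/

section Forms

variable {Z : Type*} [Fintype Z]

/-- Bilinear form of a matrix. -/
def qf (A : Z → Z → ℝ) (v u : Z → ℝ) : ℝ := ∑ p, ∑ q, A p q * v p * u q

lemma qf_row (A : Z → Z → ℝ) (v u : Z → ℝ) : qf A v u = ∑ p, v p * ∑ q, A p q * u q := by
  unfold qf
  refine Finset.sum_congr rfl fun p _ => ?_
  rw [Finset.mul_sum]
  exact Finset.sum_congr rfl fun q _ => by ring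

lemma qf_symm (A : Z → Z → ℝ) (hs : ∀ p q, A p q = A q p) (v u : Z → ℝ) :
    qf A v u = qf A u v := by
  unfold qf
  rw [Finset.sum_comm]
  refine Finset.sum_congr rfl fun p _ => Finset.sum_congr rfl fun q _ => ?_
  rw [hs q p]; ring

lemma qf_add_left (A : Z → Z → ℝ) (v v' u : Z → ℝ) :
    qf A (v + v') u = qf A v u + qf A v' u := by
  simp only [qf, Pi.add_apply, mul_add, add_mul, Finset.sum_add_distrib]

lemma qf_smul_left (A : Z → Z → ℝ) (c : ℝ) (v u : Z → ℝ) :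
    qf A (c • v) u = c * qf A v u := by
  simp only [qf, Pi.smul_apply, smul_eq_mul, Finset.mul_sum]
  exact Finset.sum_congr rfl fun p _ => Finset.sum_congr rfl fun q _ => by ring

lemma qf_expand (A : Z → Z → ℝ) (hs : ∀ p q, A p q = A q p) (v u : Z → ℝ) (c : ℝ) :
    qf A (v + c • u) (v + c • u) = qf A v v + 2 * c * qf A v u + c ^ 2 * qf A u u := by
  rw [qf_add_left, qf_smul_left, qf_symm A hs v, qf_symm A hs u, qf_add_left, qf_add_left,
    qf_smul_left, qf_smul_left, qf_symm A hs u v]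
  ring

/-- Reverse Cauchy-Schwarz at `w` from negativity on a hyperplane. -/
lemma rcs_of_hyper (A : Z → Z → ℝ) (hs : ∀ p q, A p q = A q p) (w : Z → ℝ)
    (hw : 0 ≤ qf A w w)
    (l : (Z → ℝ) →ₗ[ℝ] ℝ) (hl : ∀ v, l v = 0 → qf A v v ≤ 0) (v : Z → ℝ) :
    qf A v v * qf A w w ≤ qf A v w ^ 2 := by
  rcases hw.eq_or_lt with h0 | hpos
  · rw [← h0]; simpa using sq_nonneg _
  have hlw : l w ≠ 0 := fun h => absurd (hl w h) (not_le.mpr hpos)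
  have h := hl (v + (-(l v / l w)) • w) (by
    rw [map_add, map_smul, smul_eq_mul]; field_simp; ring)
  rw [qf_expand A hs] at h
  set t := -(l v / l w)
  nlinarith [sq_nonneg (qf A v w + t * qf A w w)]

/-- If `v` is orthogonal to `w` and isotropic then it is in the kernel. -/
lemma ker_of_rcs (A : Z → Z → ℝ) (hs : ∀ p q, A p q = A q p) (w : Z → ℝ)
    (hpos : 0 < qf A w w)
    (R : ∀ v, qf A v v * qf A w w ≤ qf A v w ^ 2) (v : Z → ℝ)
    (h1 : qf A v w = 0) (h2 : qf A v v = 0) (u : Z → ℝ) : qf A v u = 0 := by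
  have key : ∀ c : ℝ, (2 * c * qf A v u + c ^ 2 * qf A u u) * qf A w w ≤ c ^ 2 * qf A u w ^ 2 := by
    intro c
    have h := R (v + c • u)
    rw [qf_expand A hs, qf_add_left, qf_smul_left, h1, h2] at h
    nlinarith
  by_contra hne
  set b := qf A v u
  set W := qf A w w
  set K := qf A u w ^ 2 - qf A u u * W
  have key' : ∀ c : ℝ, 2 * c * (b * W) ≤ c ^ 2 * K := fun c => by
    have := key c; simp only [K]; nlinarith
  have hbW : b * W ≠ 0 := mul_ne_zero hne hpos.ne'
  have hK : 0 < |K| + 1 := by positivity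
  have h := key' (b * W / (|K| + 1))
  have e1 : 2 * (b * W / (|K| + 1)) * (b * W) = 2 * (b * W) ^ 2 / (|K| + 1) := by
    field_simp
  have e2 : (b * W / (|K| + 1)) ^ 2 * K = (b * W) ^ 2 / (|K| + 1) * (K / (|K| + 1)) := by
    field_simp
  rw [e1, e2] at h
  have h3 : K / (|K| + 1) ≤ 1 := by
    rw [div_le_one hK]; linarith [le_abs_self K]
  have h4 : 0 < (b * W) ^ 2 / (|K| + 1) := by positivity
  have h5 : 2 * (b * W) ^ 2 / (|K| + 1) = 2 * ((b * W) ^ 2 / (|K| + 1)) := by ring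
  rw [h5] at h
  nlinarith

/-- The local-to-global (Bochner) step. -/
lemma bochner (A : Z → Z → ℝ) (hs : ∀ p q, A p q = A q p) (nn : ∀ p q, 0 ≤ A p q)
    (w : Z → ℝ) (hw : ∀ p, 0 < w p)
    (B : ∀ v : Z → ℝ, qf A v v ≤ ∑ p, w p * ((∑ q, A p q * v q) ^ 2 / (∑ q, A p q * w q)))
    (C : ∀ u : Z → ℝ, (∀ p q, A p q ≠ 0 → u p = u q) → ∃ c, ∀ p q, A p q ≠ 0 → u p = c)
    (v : Z → ℝ) : qf A v v * qf A w w ≤ qf A v w ^ 2 := by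
  classical
  have hrow : ∀ p, 0 ≤ ∑ q, A p q * w q := fun p =>
    Finset.sum_nonneg fun q _ => mul_nonneg (nn p q) (hw q).le
  have hrow0 : ∀ p, ∑ q, A p q * w q = 0 → ∀ q, A p q = 0 := by
    intro p h q
    have := (Finset.sum_eq_zero_iff_of_nonneg
      (fun q _ => mul_nonneg (nn p q) (hw q).le)).1 h q (Finset.mem_univ q)
    exact (mul_eq_zero.1 this).resolve_right (hw q).ne'
  -- reduce to the orthogonal complement of w
  suffices H : ∀ v, qf A v w = 0 → qf A v v ≤ 0 by
    have hww : 0 ≤ qf A w w := by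
      rw [qf_row]; exact Finset.sum_nonneg fun p _ => mul_nonneg (hw p).le (hrow p)
    let l : (Z → ℝ) →ₗ[ℝ] ℝ :=
      { toFun := fun v => qf A v w
        map_add' := fun a b => qf_add_left A a b w
        map_smul' := fun c a => qf_smul_left A c a w }
    exact rcs_of_hyper A hs w hww l H v
  clear v
  intro v hv
  set D : Z → ℝ := fun p => if ∑ q, A p q * w q = 0 then 1 else (∑ q, A p q * w q) / w p with hD
  have hDpos : ∀ p, 0 < D p := by
    intro p
    simp only [hD]
    split_ifs with h
    · exact one_pos
    · exact div_pos (lt_of_le_of_ne (hrow p) (Ne.symm h)) (hw p)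
  set s : Z → ℝ := fun p => Real.sqrt (D p) with hsdef
  have hspos : ∀ p, 0 < s p := fun p => Real.sqrt_pos.2 (hDpos p)
  have hss : ∀ p, s p * s p = D p := fun p => Real.mul_self_sqrt (hDpos p).le
  let T : Matrix Z Z ℝ := Matrix.of fun p q => A p q / (s p * s q)
  have hT : T.IsHermitian := by
    ext p q
    simp only [T, Matrix.conjTranspose_apply, Matrix.of_apply, star_trivial]
    rw [hs q p, mul_comm]
  let b := hT.eigenvectorBasis
  -- eigenvector facts
  have heig : ∀ j p, ∑ q, A p q * (b j q / s q) = hT.eigenvalues j * (D p * (b j p / s p)) := by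
    intro j p
    have h := congrFun (hT.mulVec_eigenvectorBasis j) p
    simp only [Matrix.mulVec, dotProduct, T, Matrix.of_apply, Pi.smul_apply, smul_eq_mul] at h
    have h' : ∑ q, A p q * (b j q / s q) = s p * ∑ q, A p q / (s p * s q) * b j q := by
      rw [Finset.mul_sum]
      refine Finset.sum_congr rfl fun q _ => ?_
      have := (hspos p).ne'
      have := (hspos q).ne'
      field_simp
    rw [h', h, ← hss p]
    have := (hspos p).ne'
    change s p * (hT.eigenvalues j * b j p) = _
    field_simp
  -- main claim
  have claim : ∀ j, 0 < hT.eigenvalues j → ∑ p, b j p * (s p * v p) = 0 := by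
    intro j hj
    set lam := hT.eigenvalues j
    set u : Z → ℝ := fun p => b j p / s p with hu
    have hAu : ∀ p, ∑ q, A p q * u q = lam * (D p * u p) := heig j
    have hN : qf A u u = lam * ∑ p, D p * u p ^ 2 := by
      rw [qf_row, Finset.mul_sum]
      exact Finset.sum_congr rfl fun p _ => by rw [hAu]; ring
    have hinact : ∀ p, ∑ q, A p q * w q = 0 → u p = 0 := by
      intro p h
      have h1 := hAu p
      rw [Finset.sum_eq_zero (fun q _ => by rw [hrow0 p h q, zero_mul])] at h1
      have := mul_eq_zero.1 h1.symm
      rcases this with h | h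
      · exact absurd h hj.ne'
      · exact (mul_eq_zero.1 h).resolve_left (hDpos p).ne'
    have hDw : ∀ p, D p * u p * w p = (∑ q, A p q * w q) * u p := by
      intro p
      by_cases h : ∑ q, A p q * w q = 0
      · rw [hinact p h]; ring
      · simp only [hD, if_neg h]
        have := (hw p).ne'
        field_simp
    have hBu := B u
    have hR : ∑ p, w p * ((∑ q, A p q * u q) ^ 2 / (∑ q, A p q * w q))
        = lam ^ 2 * ∑ p, D p * u p ^ 2 := by
      rw [Finset.mul_sum]
      refine Finset.sum_congr rfl fun p _ => ?_
      by_cases h : ∑ q, A p q * w q = 0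
      · rw [h, hinact p h]; simp
      · rw [hAu]
        have h2 := hDw p
        rw [show w p * ((lam * (D p * u p)) ^ 2 / ∑ q, A p q * w q)
          = lam ^ 2 * (D p * u p) * ((D p * u p * w p) / ∑ q, A p q * w q) by ring, h2]
        field_simp
    rw [hR, hN] at hBu
    set N := ∑ p, D p * u p ^ 2 with hNdef
    have hN0 : 0 ≤ N := Finset.sum_nonneg fun p _ => mul_nonneg (hDpos p).le (sq_nonneg _)
    -- Perron part
    have hP : ∑ p, ∑ q, A p q * w p * w q * (u p / w p - u q / w q) ^ 2
        = 2 * N - 2 * (lam * N) := by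
      rw [← hN]
      have e : ∀ p q, A p q * w p * w q * (u p / w p - u q / w q) ^ 2
          = A p q * w q * (u p ^ 2 / w p) + A q p * w p * (u q ^ 2 / w q)
            - 2 * (A p q * u p * u q) := by
        intro p q
        rw [hs q p]
        have := (hw p).ne'
        have := (hw q).ne'
        field_simp
        ring
      simp_rw [e]
      simp only [Finset.sum_sub_distrib, Finset.sum_add_distrib]
      rw [Finset.sum_comm (f := fun p q => A q p * w p * (u q ^ 2 / w q))]
      have e2 : ∑ p, ∑ q, A p q * w q * (u p ^ 2 / w p) = N := by
        rw [hNdef]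
        refine Finset.sum_congr rfl fun p _ => ?_
        rw [← Finset.sum_mul]
        have h2 := hDw p
        have := (hw p).ne'
        field_simp
        linear_combination (-u p) * h2
      rw [e2]
      simp only [qf, Finset.mul_sum]
      ring
    have hPnn : ∀ p q, 0 ≤ A p q * w p * w q * (u p / w p - u q / w q) ^ 2 := fun p q =>
      mul_nonneg (mul_nonneg (mul_nonneg (nn p q) (hw p).le) (hw q).le) (sq_nonneg _)
    have hPle : ∑ p, ∑ q, A p q * w p * w q * (u p / w p - u q / w q) ^ 2 ≤ 0 := by
      rw [hP]
      have : N ≤ lam * N := by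
        have : lam * N ≤ lam * (lam * N) := by linarith [hBu, sq lam, mul_assoc lam lam N]
        exact le_of_mul_le_mul_left this hj
      linarith
    have hP0 : ∀ p q, A p q * w p * w q * (u p / w p - u q / w q) ^ 2 = 0 := by
      have h0 := le_antisymm hPle (Finset.sum_nonneg fun p _ => Finset.sum_nonneg fun q _ => hPnn p q)
      intro p q
      have h1 := (Finset.sum_eq_zero_iff_of_nonneg
        (fun p _ => Finset.sum_nonneg fun q _ => hPnn p q)).1 h0 p (Finset.mem_univ _)
      exact (Finset.sum_eq_zero_iff_of_nonneg (fun q _ => hPnn p q)).1 h1 q (Finset.mem_univ _)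
    obtain ⟨c, hc⟩ := C (fun p => u p / w p) (by
      intro p q hpq
      have h := hP0 p q
      have h2 : A p q * w p * w q ≠ 0 :=
        mul_ne_zero (mul_ne_zero hpq (hw p).ne') (hw q).ne'
      have := (mul_eq_zero.1 h).resolve_left h2
      have := pow_eq_zero_iff (two_ne_zero) |>.1 this
      linarith)
    have huc : ∀ p, D p * u p = (∑ q, A p q * w q) * c := by
      intro p
      by_cases h : ∑ q, A p q * w q = 0
      · rw [hinact p h, h]; ring
      · have : ∃ q, A p q ≠ 0 := by
          by_contra hcon
          push Not at hcon
          exact h (Finset.sum_eq_zero fun q _ => by rw [hcon q, zero_mul])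
        obtain ⟨q, hq⟩ := this
        have h1 := hc p q hq
        have h2 := hDw p
        have := (hw p).ne'
        rw [← h1]
        field_simp
        linarith
    have : ∑ p, b j p * (s p * v p) = c * qf A v w := by
      rw [qf_row, Finset.mul_sum]
      refine Finset.sum_congr rfl fun p _ => ?_
      have h1 := huc p
      have h2 : b j p * s p = D p * u p := by
        rw [← hss p, hu]
        have := (hspos p).ne'
        field_simp
      linear_combination v p * h2 + v p * h1
    rw [this, hv, mul_zero]
  -- expand v in the eigenbasis
  let y : EuclideanSpace ℝ Z := WithLp.toLp 2 fun p => s p * v p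
  have hinner : ∀ j, inner ℝ (b j) y = ∑ p, b j p * (s p * v p) := by
    intro j
    simp only [PiLp.inner_apply, y]
    exact Finset.sum_congr rfl fun p _ => by simp [mul_comm]
  have hexp : ∀ p, s p * v p = ∑ j, inner ℝ (b j) y * b j p := by
    intro p
    have h := congrArg (fun z : EuclideanSpace ℝ Z => z p) (b.sum_repr' y)
    simp only [y] at h
    rw [← h]
    simp [y]
  have hvexp : ∀ q, v q = ∑ j, inner ℝ (b j) y * (b j q / s q) := by
    intro q
    have h := hexp q
    have := (hspos q).ne'
    have : v q = (s q * v q) / s q := by field_simp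
    rw [this, h, Finset.sum_div]
    exact Finset.sum_congr rfl fun j _ => by ring
  have hAv : ∀ p, ∑ q, A p q * v q
      = ∑ j, inner ℝ (b j) y * (hT.eigenvalues j * (s p * b j p)) := by
    intro p
    have : ∀ q, A p q * v q = ∑ j, inner ℝ (b j) y * (A p q * (b j q / s q)) := by
      intro q
      conv_lhs => rw [hvexp q]
      rw [Finset.mul_sum]
      exact Finset.sum_congr rfl fun j _ => by ring
    simp_rw [this]
    rw [Finset.sum_comm]
    refine Finset.sum_congr rfl fun j _ => ?_
    rw [← Finset.mul_sum, heig, ← hss p]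
    have := (hspos p).ne'
    field_simp
  have hfin : qf A v v = ∑ j, hT.eigenvalues j * (inner ℝ (b j) y) ^ 2 := by
    rw [qf_row]
    simp_rw [hAv, Finset.mul_sum]
    rw [Finset.sum_comm]
    refine Finset.sum_congr rfl fun j _ => ?_
    rw [sq, ← mul_assoc]
    conv_rhs => rw [hinner j]
    rw [Finset.mul_sum]
    refine Finset.sum_congr rfl fun p _ => ?_
    rw [hinner j]
    ring
  rw [hfin]
  refine Finset.sum_nonpos fun j _ => ?_
  rcases le_or_gt (hT.eigenvalues j) 0 with h | h
  · exact mul_nonpos_of_nonpos_of_nonneg h (sq_nonneg _)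
  · rw [hinner j, claim j h]; simp

end Forms
/-! ### The recursion -/

section Recursion

variable {Z Γ : Type*} [Fintype Z] [AddCommMonoid Γ]

/-- Iterated directional derivatives in direction `w`. -/
def gg (e : Z → Γ) (w : Z → ℝ) (c : Γ → ℝ) : ℕ → Γ → ℝ
  | 0, γ => c γ
  | r + 1, γ => ∑ i, w i * gg e w c r (γ + e i)

/-- The Hessian matrix of the iterated derivative. -/
def hh (e : Z → Γ) (w : Z → ℝ) (c : Γ → ℝ) (r : ℕ) (γ : Γ) (p q : Z) : ℝ :=
  gg e w c r (γ + e p + e q)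

lemma hh_symm (e : Z → Γ) (w : Z → ℝ) (c : Γ → ℝ) (r : ℕ) (γ : Γ) (p q : Z) :
    hh e w c r γ p q = hh e w c r γ q p := by
  unfold hh; rw [add_right_comm]

lemma gg_nonneg (e : Z → Γ) (w : Z → ℝ) (c : Γ → ℝ) (hw : ∀ p, 0 ≤ w p) (hc : ∀ γ, 0 ≤ c γ)
    (r : ℕ) (γ : Γ) : 0 ≤ gg e w c r γ := by
  induction r generalizing γ with
  | zero => exact hc γ
  | succ r ih => exact Finset.sum_nonneg fun i _ => mul_nonneg (hw i) (ih _)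

lemma hh_succ (e : Z → Γ) (w : Z → ℝ) (c : Γ → ℝ) (r : ℕ) (γ : Γ) (p q : Z) :
    hh e w c (r + 1) γ p q = ∑ i, w i * hh e w c r (γ + e i) p q := by
  unfold hh
  rw [gg]
  refine Finset.sum_congr rfl fun i _ => ?_
  congr 2
  rw [add_right_comm, add_right_comm γ]

lemma hh_succ_row (e : Z → Γ) (w : Z → ℝ) (c : Γ → ℝ) (r : ℕ) (γ : Γ) (p q : Z) :
    hh e w c (r + 1) γ p q = ∑ i, hh e w c r (γ + e p) q i * w i := by
  unfold hh
  rw [gg]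
  exact Finset.sum_congr rfl fun i _ => mul_comm _ _

lemma qf_hh_succ (e : Z → Γ) (w : Z → ℝ) (c : Γ → ℝ) (r : ℕ) (γ : Γ) (v u : Z → ℝ) :
    qf (hh e w c (r + 1) γ) v u = ∑ i, w i * qf (hh e w c r (γ + e i)) v u := by
  simp only [qf, hh_succ, Finset.sum_mul, Finset.mul_sum]
  rw [Finset.sum_comm]
  conv_lhs =>
    enter [2, q]
    rw [Finset.sum_comm]
  rw [Finset.sum_comm]
  refine Finset.sum_congr rfl fun i _ => ?_
  rw [Finset.sum_comm]
  exact Finset.sum_congr rfl fun p _ => Finset.sum_congr rfl fun q _ => by ring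

lemma row_hh_succ (e : Z → Γ) (w : Z → ℝ) (c : Γ → ℝ) (r : ℕ) (γ : Γ) (v : Z → ℝ) (p : Z) :
    ∑ q, hh e w c (r + 1) γ p q * v q = qf (hh e w c r (γ + e p)) v w := by
  rw [qf_row]
  refine Finset.sum_congr rfl fun q _ => ?_
  rw [hh_succ_row, mul_comm]

lemma qf_hh_ww (e : Z → Γ) (w : Z → ℝ) (c : Γ → ℝ) (r : ℕ) (γ : Γ) :
    qf (hh e w c r γ) w w = gg e w c (r + 2) γ := by
  rw [qf_row, gg]
  refine Finset.sum_congr rfl fun q _ => ?_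
  rw [gg]
  congr 1
  exact Finset.sum_congr rfl fun i _ => mul_comm _ _

/-- Induction: the reverse Cauchy-Schwarz inequality propagates. -/
lemma rcs_induct (e : Z → Γ) (w : Z → ℝ) (c : Γ → ℝ) (hw : ∀ p, 0 < w p) (hc : ∀ γ, 0 ≤ c γ)
    (P : ℕ → Γ → Prop) (hP : ∀ r γ p, P (r + 1) γ → P r (γ + e p))
    (base : ∀ γ, P 0 γ → ∀ v, qf (hh e w c 0 γ) v v * qf (hh e w c 0 γ) w w
      ≤ qf (hh e w c 0 γ) v w ^ 2)
    (conn : ∀ r γ, P r γ → ∀ u : Z → ℝ, (∀ p q, hh e w c r γ p q ≠ 0 → u p = u q) →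
      ∃ a, ∀ p q, hh e w c r γ p q ≠ 0 → u p = a)
    (r : ℕ) (γ : Γ) (hr : P r γ) (v : Z → ℝ) :
    qf (hh e w c r γ) v v * qf (hh e w c r γ) w w ≤ qf (hh e w c r γ) v w ^ 2 := by
  induction r generalizing γ v with
  | zero => exact base γ hr v
  | succ r ih =>
    have nn : ∀ r γ p q, 0 ≤ hh e w c r γ p q := fun r γ p q =>
      gg_nonneg e w c (fun p => (hw p).le) hc _ _
    refine bochner _ (hh_symm e w c _ γ) (nn _ _) w hw ?_ (conn _ γ hr) v
    intro v
    rw [qf_hh_succ]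
    refine Finset.sum_le_sum fun p _ => mul_le_mul_of_nonneg_left ?_ (hw p).le
    rw [row_hh_succ, row_hh_succ]
    have h := ih (γ + e p) (hP r γ p hr) v
    set A := hh e w c r (γ + e p)
    have hA : ∀ p q, 0 ≤ A p q := nn r _
    have h0 : 0 ≤ qf A w w := Finset.sum_nonneg fun p _ => Finset.sum_nonneg fun q _ =>
      mul_nonneg (mul_nonneg (hA p q) (hw p).le) (hw q).le
    rcases h0.eq_or_lt with h0 | h0
    · rw [← h0, div_zero]
      have hz : ∀ p q, A p q = 0 := by
        intro p q
        have h1 := (Finset.sum_eq_zero_iff_of_nonneg (fun p _ => Finset.sum_nonneg fun q _ =>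
          mul_nonneg (mul_nonneg (hA p q) (hw p).le) (hw q).le)).1 h0.symm p (Finset.mem_univ _)
        have h2 := (Finset.sum_eq_zero_iff_of_nonneg (fun q _ =>
          mul_nonneg (mul_nonneg (hA p q) (hw p).le) (hw q).le)).1 h1 q (Finset.mem_univ _)
        have := (mul_eq_zero.1 h2).resolve_right (hw q).ne'
        exact (mul_eq_zero.1 this).resolve_right (hw p).ne'
      simp [qf, hz]
    · rwa [le_div_iff₀ h0]

lemma gg_continuous (e : Z → Γ) (c : Γ → ℝ) (r : ℕ) (γ : Γ) :
    Continuous fun w : Z → ℝ => gg e w c r γ := by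
  induction r generalizing γ with
  | zero => exact continuous_const
  | succ r ih =>
    exact continuous_finsetSum _ fun i _ => (continuous_apply i).mul (ih _)

lemma qf_continuous (e : Z → Γ) (c : Γ → ℝ) (r : ℕ) (γ : Γ) (v u : (Z → ℝ) → Z → ℝ)
    (hv : Continuous v) (hu : Continuous u) :
    Continuous fun w : Z → ℝ => qf (hh e w c r γ) (v w) (u w) := by
  refine continuous_finsetSum _ fun p _ => continuous_finsetSum _ fun q _ => ?_
  exact ((gg_continuous e c r _).mul ((continuous_apply p).comp hv)).mul
    ((continuous_apply q).comp hu)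

/-- The inequality extends to nonnegative directions. -/
lemma rcs_closure (e : Z → Γ) (c : Γ → ℝ) (r : ℕ) (γ : Γ)
    (H : ∀ w : Z → ℝ, (∀ p, 0 < w p) → ∀ v, qf (hh e w c r γ) v v * qf (hh e w c r γ) w w
      ≤ qf (hh e w c r γ) v w ^ 2) (w : Z → ℝ) (hw : ∀ p, 0 ≤ w p) (v : Z → ℝ) :
    qf (hh e w c r γ) v v * qf (hh e w c r γ) w w ≤ qf (hh e w c r γ) v w ^ 2 := by
  have hcl : IsClosed {w : Z → ℝ | qf (hh e w c r γ) v v * qf (hh e w c r γ) w w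
      ≤ qf (hh e w c r γ) v w ^ 2} :=
    isClosed_le ((qf_continuous e c r γ _ _ continuous_const continuous_const).mul
      (qf_continuous e c r γ _ _ continuous_id continuous_id))
      ((qf_continuous e c r γ _ _ continuous_const continuous_id).pow 2)
  have ht : Filter.Tendsto (fun n : ℕ => fun p => w p + 1 / ((n : ℝ) + 1)) Filter.atTop
      (nhds w) := by
    rw [tendsto_pi_nhds]
    intro p
    simpa using (tendsto_const_nhds (x := w p)).add
      (tendsto_one_div_add_atTop_nhds_zero_nat (𝕜 := ℝ))
  refine hcl.mem_of_tendsto ht (Filter.Eventually.of_forall fun n => ?_)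
  exact H _ (fun p => add_pos_of_nonneg_of_pos (hw p) (by positivity)) v

end Recursion
/-! ### Rank functions -/

section Rank

/-- The facts about the two rank functions that are used. -/
structure RD {X : Type*} [Fintype X] [DecidableEq X] (f G : Finset X → ℕ) (R : ℕ) : Prop where
  f_card : ∀ S, f S ≤ S.card
  f_step : ∀ x S, f (insert x S) ≤ f S + 1
  f_mono : ∀ S T, S ⊆ T → f S ≤ f T
  G_mono : ∀ S T, S ⊆ T → G S ≤ G T
  f_sub : ∀ A B, f (A ∪ B) + f (A ∩ B) ≤ f A + f B
  G_sub : ∀ A B, G (A ∪ B) + G (A ∩ B) ≤ G A + G B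
  mor : ∀ S T, S ⊆ T → G T + f S ≤ G S + f T
  G_top : G Finset.univ = R

lemma le_rkOf {Z : Type*} [DecidableEq Z] {I : Finset Z → Prop} {A S : Finset Z}
    (hA : I A) (hAS : A ⊆ S) : A.card ≤ rkOf I S := by
  unfold rkOf
  have := Finset.le_sup (f := fun A => if I A then A.card else 0) (Finset.mem_powerset.2 hAS)
  simpa [hA] using this

lemma rkOf_le_card {Z : Type*} [DecidableEq Z] {I : Finset Z → Prop} (S : Finset Z) :
    rkOf I S ≤ S.card := by
  unfold rkOf
  refine Finset.sup_le fun A hA => ?_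
  split_ifs
  · exact Finset.card_le_card (Finset.mem_powerset.1 hA)
  · exact Nat.zero_le _

lemma empty_indep {Z : Type*} [DecidableEq Z] {I : Finset Z → Prop} (hI : IsMatroid I) : I ∅ := by
  obtain ⟨⟨S, hS⟩, h2, _⟩ := hI
  exact h2 _ _ (Finset.empty_subset S) hS

lemma exists_rkOf {Z : Type*} [DecidableEq Z] {I : Finset Z → Prop} (hI : IsMatroid I)
    (S : Finset Z) : ∃ A, I A ∧ A ⊆ S ∧ A.card = rkOf I S := by
  obtain ⟨A, hA, h⟩ := Finset.exists_mem_eq_sup S.powerset ⟨∅, by simp⟩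
    (fun A => if I A then A.card else 0)
  by_cases hIA : I A
  · refine ⟨A, hIA, Finset.mem_powerset.1 hA, ?_⟩
    unfold rkOf
    rw [h, if_pos hIA]
  · refine ⟨∅, empty_indep hI, Finset.empty_subset _, ?_⟩
    unfold rkOf
    rw [h, if_neg hIA]; rfl

lemma rkOf_mono {Z : Type*} [DecidableEq Z] {I : Finset Z → Prop} {S T : Finset Z}
    (h : S ⊆ T) : rkOf I S ≤ rkOf I T :=
  Finset.sup_mono (Finset.powerset_mono.2 h)

lemma exists_extend {Z : Type*} [DecidableEq Z] {I : Finset Z → Prop} (hI : IsMatroid I)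
    (d : ℕ) (A S : Finset Z) (hA : I A) (hAS : A ⊆ S) (hd : A.card + d = rkOf I S) :
    ∃ J, I J ∧ A ⊆ J ∧ J ⊆ S ∧ J.card = rkOf I S := by
  induction d generalizing A with
  | zero => exact ⟨A, hA, Finset.Subset.refl _, hAS, by omega⟩
  | succ d ih =>
    obtain ⟨T, hT, hTS, hTc⟩ := exists_rkOf hI S
    obtain ⟨x, hxT, hxA, hx⟩ := hI.2.2 A T hA hT (by omega)
    obtain ⟨J, hJ, h1, h2, h3⟩ := ih (insert x A) hx
      (Finset.insert_subset (hTS hxT) hAS) (by rw [Finset.card_insert_of_notMem hxA]; omega)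
    exact ⟨J, hJ, (Finset.subset_insert _ _).trans h1, h2, h3⟩

lemma rkOf_sub {Z : Type*} [DecidableEq Z] {I : Finset Z → Prop} (hI : IsMatroid I)
    (A B : Finset Z) : rkOf I (A ∪ B) + rkOf I (A ∩ B) ≤ rkOf I A + rkOf I B := by
  obtain ⟨K, hK, hKs, hKc⟩ := exists_rkOf hI (A ∩ B)
  have hKu : K ⊆ A ∪ B := hKs.trans (Finset.inter_subset_left.trans Finset.subset_union_left)
  obtain ⟨J, hJ, h1, h2, h3⟩ := exists_extend hI (rkOf I (A ∪ B) - K.card) K (A ∪ B) hK hKu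
    (by have := le_rkOf hK hKu; omega)
  have a1 : (J ∩ A).card ≤ rkOf I A :=
    le_rkOf (hI.2.1 _ _ Finset.inter_subset_left hJ) Finset.inter_subset_right
  have a2 : (J ∩ B).card ≤ rkOf I B :=
    le_rkOf (hI.2.1 _ _ Finset.inter_subset_left hJ) Finset.inter_subset_right
  have a3 := Finset.card_union_add_card_inter (J ∩ A) (J ∩ B)
  have a4 : (J ∩ A) ∪ (J ∩ B) = J := by
    rw [← Finset.inter_union_distrib_left]; exact Finset.inter_eq_left.2 h2
  have a5 : K ⊆ (J ∩ A) ∩ (J ∩ B) := by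
    intro x hx
    have := hKs hx
    have := h1 hx
    simp_all
  have a6 := Finset.card_le_card a5
  rw [a4] at a3
  omega

lemma indep_iff_rkOf {Z : Type*} [DecidableEq Z] {I : Finset Z → Prop} (hI : IsMatroid I)
    (S : Finset Z) : I S ↔ rkOf I S = S.card := by
  constructor
  · intro h
    exact le_antisymm (rkOf_le_card S) (le_rkOf h (Finset.Subset.refl _))
  · intro h
    obtain ⟨A, hA, hAS, hc⟩ := exists_rkOf hI S
    rw [h] at hc
    rwa [← Finset.eq_of_subset_of_card_le hAS hc.ge]

lemma rd_of_morphism {IndepM : Finset X → Prop} {IndepN : Finset Y → Prop} {Φ : X → Y}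
    (hM : IsMatroid IndepM) (hN : IsMatroid IndepN) (hΦ : IsMorphism IndepM IndepN Φ)
    (S : Finset X) (hS : IsPhiBasis IndepM IndepN Φ S) :
    RD (rkOf IndepM) (fun S => rkOf IndepN (S.image Φ)) (rkOf IndepN Finset.univ) where
  f_card := rkOf_le_card
  f_step := by
    intro x S
    have h := rkOf_sub hM {x} S
    have h2 := rkOf_le_card (I := IndepM) {x}
    rw [Finset.insert_eq]
    simp at h2
    omega
  f_mono := fun _ _ h => rkOf_mono h
  G_mono := fun _ _ h => rkOf_mono (Finset.image_subset_image h)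
  f_sub := rkOf_sub hM
  G_sub := by
    intro A B
    have h := rkOf_sub hN (A.image Φ) (B.image Φ)
    have h2 : rkOf IndepN ((A ∩ B).image Φ) ≤ rkOf IndepN (A.image Φ ∩ B.image Φ) :=
      rkOf_mono (Finset.image_inter_subset _ _ _)
    simp only [Finset.image_union]
    omega
  mor := by
    intro S T h
    have := hΦ S T h
    omega
  G_top := by
    apply le_antisymm
    · exact rkOf_mono (Finset.subset_univ _)
    · rw [← hS.2]
      exact rkOf_mono (Finset.image_subset_image (Finset.subset_univ _))

variable {f G : Finset X → ℕ} {R : ℕ}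

lemma RD.G_le (h : RD f G R) (S) : G S ≤ R := h.G_top ▸ h.G_mono _ _ (Finset.subset_univ S)

lemma RD.G_step (h : RD f G R) (x S) : G (insert x S) ≤ G S + 1 := by
  have := h.mor S _ (Finset.subset_insert x S)
  have := h.f_step x S
  omega

lemma RD.f_ins (h : RD f G R) (x S) : f S ≤ f (insert x S) := h.f_mono _ _ (Finset.subset_insert x S)

lemma RD.G_ins (h : RD f G R) (x S) : G S ≤ G (insert x S) := h.G_mono _ _ (Finset.subset_insert x S)

lemma RD.mor_ins (h : RD f G R) (x S) : G (insert x S) + f S ≤ G S + f (insert x S) :=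
  h.mor _ _ (Finset.subset_insert x S)

lemma RD.f_sub2 (h : RD f G R) (x y S) :
    f (insert x (insert y S)) + f S ≤ f (insert x S) + f (insert y S) := by
  have h1 := h.f_sub (insert x S) (insert y S)
  have h2 : insert x S ∪ insert y S = insert x (insert y S) := by ext; simp; tauto
  have h3 := h.f_mono S (insert x S ∩ insert y S) (by intro z; simp; tauto)
  rw [h2] at h1
  omega

lemma RD.G_sub2 (h : RD f G R) (x y S) :
    G (insert x (insert y S)) + G S ≤ G (insert x S) + G (insert y S) := by
  have h1 := h.G_sub (insert x S) (insert y S)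
  have h2 : insert x S ∪ insert y S = insert x (insert y S) := by ext; simp; tauto
  have h3 := h.G_mono S (insert x S ∩ insert y S) (by intro z; simp; tauto)
  rw [h2] at h1
  omega

lemma RD.exists_up (h : RD f G R) (S) (hS : G S < R) : ∃ z, G (insert z S) = G S + 1 := by
  by_contra hcon
  push Not at hcon
  have hz : ∀ z, G (insert z S) = G S := fun z => by
    have := h.G_step z S
    have := h.G_ins z S
    have := hcon z
    omega
  have key : ∀ T : Finset X, G (T ∪ S) = G S := by
    intro T
    induction T using Finset.induction_on with
    | empty => simp
    | insert x T hx ih =>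
      have h1 := h.G_sub (insert x S) (T ∪ S)
      have h2 := h.G_mono S (insert x S ∩ (T ∪ S)) (by intro z; simp; tauto)
      have h3 : insert x S ∪ (T ∪ S) = insert x T ∪ S := by ext; simp; tauto
      have h4 := h.G_mono S (insert x T ∪ S) Finset.subset_union_right
      rw [h3] at h1
      have := hz x
      omega
  have h1 := key Finset.univ
  rw [Finset.union_eq_left.2 (Finset.subset_univ S)] at h1
  have := h.G_top
  omega

/-- Index map. -/
def ee : Option X → ℕ × Multiset X
  | none => (1, 0)
  | some x => (0, {x})

/-- Coefficients of the generating polynomial. -/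
def cc (f G : Finset X → ℕ) (R : ℕ) (γ : ℕ × Multiset X) : ℝ :=
  if f γ.2.toFinset = Multiset.card γ.2 ∧ G γ.2.toFinset = R then (γ.1.factorial : ℝ) else 0

lemma cc_nonneg (γ) : 0 ≤ cc f G R γ := by
  unfold cc; split_ifs <;> positivity

lemma toFinset_add_single (S : Multiset X) (x : X) : (S + {x}).toFinset = insert x S.toFinset := by
  ext; simp

lemma RD.f_le_card (h : RD f G R) (S : Multiset X) : f S.toFinset ≤ Multiset.card S :=
  (h.f_card _).trans (Multiset.toFinset_card_le S)

lemma gg_ne_zero (h : RD f G R) (w : Option X → ℝ) (hw : ∀ p, 0 < w p) (r a : ℕ) (S : Multiset X) :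
    gg ee w (cc f G R) r (a, S) ≠ 0 ↔
      f S.toFinset = Multiset.card S ∧ R ≤ r + G S.toFinset := by
  induction r generalizing a S with
  | zero =>
    have := h.G_le S.toFinset
    simp only [gg, cc]
    constructor
    · intro hne
      split_ifs at hne with h1
      · exact ⟨h1.1, by omega⟩
      · exact absurd rfl hne
    · intro h1
      rw [if_pos ⟨h1.1, by omega⟩]
      positivity
  | succ r ih =>
    have hnn : ∀ i, 0 ≤ w i * gg ee w (cc f G R) r ((a, S) + ee i) := fun i =>
      mul_nonneg (hw i).le (gg_nonneg _ _ _ (fun p => (hw p).le) cc_nonneg _ _)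
    have : gg ee w (cc f G R) (r + 1) (a, S) ≠ 0 ↔
        ∃ i, gg ee w (cc f G R) r ((a, S) + ee i) ≠ 0 := by
      rw [gg, Ne, Finset.sum_eq_zero_iff_of_nonneg (fun i _ => hnn i)]
      push Not
      simp [(hw _).ne']
    rw [this]
    have hN := h.f_le_card S
    constructor
    · rintro ⟨i, hi⟩
      cases i with
      | none =>
        have h1 := (ih (a + 1) (S + 0)).1 hi
        rw [add_zero] at h1
        exact ⟨h1.1, by omega⟩
      | some x =>
        have h1 := (ih (a + 0) (S + ({x} : Multiset X))).1 hi
        rw [toFinset_add_single, Multiset.card_add, Multiset.card_singleton] at h1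
        have := h.f_step x S.toFinset
        have := h.G_step x S.toFinset
        exact ⟨by omega, by omega⟩
    · rintro ⟨h1, h2⟩
      by_cases h3 : R ≤ r + G S.toFinset
      · refine ⟨none, (ih (a + 1) (S + 0)).2 ?_⟩
        rw [add_zero]
        exact ⟨h1, h3⟩
      · obtain ⟨z, hz⟩ := h.exists_up S.toFinset (by omega)
        refine ⟨some z, (ih (a + 0) (S + ({z} : Multiset X))).2 ?_⟩
        rw [toFinset_add_single, Multiset.card_add, Multiset.card_singleton]
        have := h.f_step z S.toFinset
        have := h.mor_ins z S.toFinset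
        exact ⟨by omega, by omega⟩

lemma nz_tt (h : RD f G R) (w : Option X → ℝ) (hw : ∀ p, 0 < w p) (r a : ℕ) (S : Multiset X) :
    hh ee w (cc f G R) r (a, S) none none ≠ 0 ↔
      f S.toFinset = Multiset.card S ∧ R ≤ r + G S.toFinset := by
  have := gg_ne_zero h w hw r (a + 1 + 1) (S + 0 + 0)
  rw [add_zero, add_zero] at this
  rw [← this]
  simp [hh, ee]

lemma nz_tx (h : RD f G R) (w : Option X → ℝ) (hw : ∀ p, 0 < w p) (r a : ℕ) (S : Multiset X) (x) :
    hh ee w (cc f G R) r (a, S) none (some x) ≠ 0 ↔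
      f (insert x S.toFinset) = Multiset.card S + 1 ∧ R ≤ r + G (insert x S.toFinset) := by
  have := gg_ne_zero h w hw r (a + 1 + 0) (S + 0 + {x})
  rw [toFinset_add_single, Multiset.card_add, Multiset.card_singleton, add_zero S] at this
  rw [← this]
  simp [hh, ee]

lemma nz_xy (h : RD f G R) (w : Option X → ℝ) (hw : ∀ p, 0 < w p) (r a : ℕ) (S : Multiset X) (x y) :
    hh ee w (cc f G R) r (a, S) (some x) (some y) ≠ 0 ↔
      f (insert y (insert x S.toFinset)) = Multiset.card S + 2 ∧
        R ≤ r + G (insert y (insert x S.toFinset)) := by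
  have := gg_ne_zero h w hw r (a + 0 + 0) (S + {x} + {y})
  rw [toFinset_add_single, Multiset.card_add, Multiset.card_singleton, toFinset_add_single,
    Multiset.card_add, Multiset.card_singleton] at this
  rw [← this]
  simp [hh, ee]

lemma conn_all (h : RD f G R) (w : Option X → ℝ) (hw : ∀ p, 0 < w p) (r a : ℕ) (S : Multiset X)
    (u : Option X → ℝ) (hu : ∀ p q, hh ee w (cc f G R) r (a, S) p q ≠ 0 → u p = u q) :
    ∃ c, ∀ p q, hh ee w (cc f G R) r (a, S) p q ≠ 0 → u p = c := by
  set s := S.toFinset with hs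
  set N := Multiset.card S with hN
  have htx : ∀ x, f (insert x s) = N + 1 → R ≤ r + G (insert x s) → u (some x) = u none :=
    fun x h1 h2 => (hu _ _ ((nz_tx h w hw r a S x).2 ⟨h1, h2⟩)).symm
  have hxy : ∀ x y, f (insert y (insert x s)) = N + 2 → R ≤ r + G (insert y (insert x s)) →
      u (some x) = u (some y) :=
    fun x y h1 h2 => hu _ _ ((nz_xy h w hw r a S x y).2 ⟨h1, h2⟩)
  have hfs : f s ≤ N := h.f_le_card S
  -- activity
  have hact : ∀ x q, hh ee w (cc f G R) r (a, S) (some x) q ≠ 0 →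
      f s = N ∧ f (insert x s) = N + 1 ∧ (R ≤ r + G (insert x s) ∨
        ∃ y, f (insert y (insert x s)) = N + 2 ∧ R ≤ r + G (insert y (insert x s))) := by
    intro x q hq
    have b1 := h.f_step x s
    cases q with
    | none =>
      rw [hh_symm, nz_tx h w hw, ← hs] at hq
      exact ⟨by omega, hq.1, Or.inl hq.2⟩
    | some y =>
      rw [nz_xy h w hw, ← hs] at hq
      have b2 := h.f_step y (insert x s)
      exact ⟨by omega, by omega, Or.inr ⟨y, hq⟩⟩
  have htact : ∀ q, hh ee w (cc f G R) r (a, S) none q ≠ 0 → R ≤ r + G s + 1 := by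
    intro q hq
    cases q with
    | none => rw [nz_tt h w hw, ← hs] at hq; omega
    | some y =>
      rw [nz_tx h w hw, ← hs] at hq
      have := h.G_step y s
      omega
  rcases le_or_gt R (r + G s + 1) with hR | hR
  · refine ⟨u none, fun p q hpq => ?_⟩
    cases p with
    | none => rfl
    | some x =>
      obtain ⟨h0, h1, _⟩ := hact x q hpq
      have b1 := h.G_ins x s
      by_cases hx : R ≤ r + G (insert x s)
      · exact htx x h1 hx
      · obtain ⟨z, hz⟩ := h.exists_up s (by omega)
        have b2 := h.mor_ins z s
        have b3 := h.f_step z s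
        rw [← htx z (by omega) (by omega)]
        have b4 := h.G_mono (insert z s) (insert z (insert x s))
          (Finset.insert_subset_insert _ (Finset.subset_insert _ _))
        have b5 := h.mor_ins z (insert x s)
        have b6 := h.f_step z (insert x s)
        exact hxy x z (by omega) (by omega)
  · by_cases hex : ∃ x q, hh ee w (cc f G R) r (a, S) (some x) q ≠ 0
    · obtain ⟨x0, q0, hq0⟩ := hex
      refine ⟨u (some x0), fun p q hpq => ?_⟩
      cases p with
      | none => have := htact q hpq; omega
      | some x =>
        obtain ⟨c0, c1, c2⟩ := hact x0 q0 hq0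
        obtain ⟨d0, d1, d2⟩ := hact x q hpq
        have e1 := h.G_step x s
        have e2 := h.G_step x0 s
        rcases d2 with d2 | ⟨y, d2, d3⟩
        · omega
        have e3 := h.G_step y (insert x s)
        have e0 : G (insert x0 s) = G s + 1 := by
          rcases c2 with c2 | ⟨y0, c2, c3⟩
          · omega
          · have := h.G_step y0 (insert x0 s)
            omega
        by_cases hpar : G (insert x0 (insert x s)) = G s + 2
        · have b5 := h.mor s (insert x0 (insert x s))
            ((Finset.subset_insert _ _).trans (Finset.subset_insert _ _))
          have b6 := h.f_step x0 (insert x s)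
          exact hxy x x0 (by omega) (by omega)
        · have k1 : u (some x) = u (some y) := hxy x y d2 d3
          have k2 : G (insert y (insert x0 s)) = G s + 2 := by
            have m1 := h.G_sub2 y x (insert x0 s)
            have m2 : insert x (insert x0 s) = insert x0 (insert x s) := Finset.insert_comm _ _ _
            have m3 := h.G_mono (insert y (insert x s)) (insert y (insert x (insert x0 s)))
              (Finset.insert_subset_insert _ (Finset.insert_subset_insert _
                (Finset.subset_insert _ _)))
            rw [m2] at m1 m3
            have m4 := h.G_step x0 (insert x s)
            have m5 := h.G_step y (insert x0 s)
            have m6 := h.G_ins x0 (insert x s)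
            omega
          have b5 := h.mor s (insert y (insert x0 s))
            ((Finset.subset_insert _ _).trans (Finset.subset_insert _ _))
          have b6 := h.f_step y (insert x0 s)
          rw [k1, hxy x0 y (by omega) (by omega)]
    · push Not at hex
      refine ⟨0, fun p q hpq => ?_⟩
      cases p with
      | none => have := htact q hpq; omega
      | some x => exact absurd (hex x q) hpq

end Rank
/-! ### The base case -/

section Base

lemma par_ineq (A : Finset X) (rel : X → X → Prop) [∀ x y, Decidable (rel x y)] (hr : ∀ x ∈ A, rel x x)
    (hsy : ∀ x ∈ A, ∀ y ∈ A, rel x y → rel y x)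
    (htr : ∀ x ∈ A, ∀ y ∈ A, ∀ z ∈ A, rel x y → rel y z → rel x z) (v : X → ℝ) :
    (∑ x ∈ A, v x) ^ 2 ≤ A.card * ∑ x ∈ A, ∑ y ∈ A, if rel x y then v x * v y else 0 := by
  set κ : X → Finset X := fun x => A.filter (rel x) with hκ
  have hκeq : ∀ x ∈ A, ∀ y ∈ A, (rel x y ↔ κ y = κ x) := by
    intro x hx y hy
    constructor
    · intro hxy
      ext z
      simp only [hκ, Finset.mem_filter]
      constructor
      · rintro ⟨hz, h⟩; exact ⟨hz, htr x hx y hy z hz hxy h⟩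
      · rintro ⟨hz, h⟩; exact ⟨hz, htr y hy x hx z hz (hsy x hx y hy hxy) h⟩
    · intro he
      have : y ∈ κ y := Finset.mem_filter.2 ⟨hy, hr y hy⟩
      rw [he] at this
      exact (Finset.mem_filter.1 this).2
  have hmaps : ∀ x ∈ A, κ x ∈ A.image κ := fun x hx => Finset.mem_image_of_mem _ hx
  set g : Finset X → ℝ := fun b => ∑ x ∈ A with κ x = b, v x with hg
  have h1 : ∑ x ∈ A, v x = ∑ b ∈ A.image κ, g b :=
    (Finset.sum_fiberwise_of_maps_to hmaps v).symm
  have h2 : ∑ x ∈ A, ∑ y ∈ A, (if rel x y then v x * v y else 0) = ∑ b ∈ A.image κ, g b ^ 2 := by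
    rw [← Finset.sum_fiberwise_of_maps_to hmaps]
    refine Finset.sum_congr rfl fun b _ => ?_
    rw [sq, hg]
    simp only
    rw [Finset.sum_mul]
    refine Finset.sum_congr rfl fun x hx => ?_
    obtain ⟨hxA, hxb⟩ := Finset.mem_filter.1 hx
    rw [Finset.mul_sum, Finset.sum_filter]
    refine Finset.sum_congr rfl fun y hy => ?_
    simp only [hκeq x hxA y hy, hxb]
  rw [h1, h2]
  refine (sq_sum_le_card_mul_sum_sq).trans ?_
  refine mul_le_mul_of_nonneg_right ?_ (Finset.sum_nonneg fun b _ => sq_nonneg _)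
  exact_mod_cast Finset.card_image_le

/-- Version of `par_ineq` with indicator functions. -/
lemma par_ineq' (A : X → Prop) (rel : X → X → Prop) [DecidablePred A]
    [∀ x y, Decidable (rel x y)] (hr : ∀ x, A x → rel x x)
    (hsy : ∀ x y, A x → A y → rel x y → rel y x)
    (htr : ∀ x y z, A x → A y → A z → rel x y → rel y z → rel x z) (v : X → ℝ)
    (m : ℝ) (hm : ((Finset.univ.filter A).card : ℝ) ≤ m) :
    0 ≤ (∑ x, ∑ y, (if A x ∧ A y ∧ rel x y then (1 : ℝ) else 0) * v x * v y) ∧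
    (∑ x, (if A x then (1 : ℝ) else 0) * v x) ^ 2 ≤
      m * ∑ x, ∑ y, (if A x ∧ A y ∧ rel x y then (1 : ℝ) else 0) * v x * v y := by
  have h := par_ineq (Finset.univ.filter A) rel (by simpa using hr)
    (by intro x hx y hy; simp at hx hy; exact hsy x y hx hy)
    (by intro x hx y hy z hz; simp at hx hy hz; exact htr x y z hx hy hz) v
  have e1 : ∑ x, (if A x then (1 : ℝ) else 0) * v x = ∑ x ∈ Finset.univ.filter A, v x := by
    rw [Finset.sum_filter]
    exact Finset.sum_congr rfl fun x _ => by split_ifs <;> simp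
  have e2 : ∑ x, ∑ y, (if A x ∧ A y ∧ rel x y then (1 : ℝ) else 0) * v x * v y
      = ∑ x ∈ Finset.univ.filter A, ∑ y ∈ Finset.univ.filter A,
        if rel x y then v x * v y else 0 := by
    rw [Finset.sum_filter]
    refine Finset.sum_congr rfl fun x _ => ?_
    split_ifs with hx
    · rw [Finset.sum_filter]
      refine Finset.sum_congr rfl fun y _ => ?_
      by_cases hy : A y <;> by_cases hxy : rel x y <;> simp [hx, hy, hxy]
    · simp [hx]
  rw [← e1, ← e2] at h
  set P := ∑ x, ∑ y, (if A x ∧ A y ∧ rel x y then (1 : ℝ) else 0) * v x * v y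
  have hP : 0 ≤ P := by
    rcases Nat.eq_zero_or_pos (Finset.univ.filter A).card with h0 | h0
    · rw [e2, Finset.card_eq_zero.1 h0]; simp
    · have h0' : (0 : ℝ) < (Finset.univ.filter A).card := by exact_mod_cast h0
      by_contra hneg
      push Not at hneg
      have := mul_neg_of_pos_of_neg h0' hneg
      nlinarith [sq_nonneg (∑ x, (if A x then (1 : ℝ) else 0) * v x)]
  exact ⟨hP, h.trans (mul_le_mul_of_nonneg_right hm hP)⟩

lemma dbl_sum (K pc : X → X → ℝ) (α β v : X → ℝ)
    (hK : ∀ x y, K x y = α x * α y - pc x y + α x * β y + β x * α y) :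
    ∑ x, ∑ y, K x y * v x * v y = (∑ x, α x * v x) ^ 2 - (∑ x, ∑ y, pc x y * v x * v y)
      + 2 * (∑ x, α x * v x) * (∑ x, β x * v x) := by
  have e : ∀ x y, K x y * v x * v y = (α x * v x) * (α y * v y) - pc x y * v x * v y
      + (α x * v x) * (β y * v y) + (β x * v x) * (α y * v y) := by
    intro x y; rw [hK]; ring
  simp only [e, Finset.sum_add_distrib, Finset.sum_sub_distrib, ← Finset.mul_sum, ← Finset.sum_mul]
  ring

lemma qf_option (A : Option X → Option X → ℝ) (hs : ∀ p q, A p q = A q p) (v : Option X → ℝ) :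
    qf A v v = A none none * v none ^ 2 + 2 * v none * ∑ x, A none (some x) * v (some x)
      + ∑ x, ∑ y, A (some x) (some y) * v (some x) * v (some y) := by
  unfold qf
  simp only [Fintype.sum_option, Finset.sum_add_distrib]
  have e1 : ∑ x, A none (some x) * v none * v (some x)
      = v none * ∑ x, A none (some x) * v (some x) := by
    rw [Finset.mul_sum]; exact Finset.sum_congr rfl fun x _ => by ring
  have e2 : ∑ x, A (some x) none * v (some x) * v none
      = v none * ∑ x, A none (some x) * v (some x) := by
    rw [Finset.mul_sum]; exact Finset.sum_congr rfl fun x _ => by rw [hs (some x)]; ring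
  rw [e1, e2]
  ring

variable {f G : Finset X → ℕ} {R : ℕ}

lemma hh0_tt (w : Option X → ℝ) (a : ℕ) (S : Multiset X) :
    hh ee w (cc f G R) 0 (a, S) none none =
      if f S.toFinset = Multiset.card S ∧ G S.toFinset = R then ((a + 2).factorial : ℝ) else 0 := by
  simp [hh, gg, cc, ee]

lemma hh0_tx (w : Option X → ℝ) (a : ℕ) (S : Multiset X) (x : X) :
    hh ee w (cc f G R) 0 (a, S) none (some x) =
      ((a + 1).factorial : ℝ) * (if f (insert x S.toFinset) = Multiset.card S + 1 ∧
        G (insert x S.toFinset) = R then 1 else 0) := by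
  simp only [hh, gg, cc, ee, Prod.mk_add_mk, toFinset_add_single, Multiset.card_add,
    Multiset.card_singleton, add_zero, mul_ite, mul_one, mul_zero]

lemma hh0_xy (w : Option X → ℝ) (a : ℕ) (S : Multiset X) (x y : X) :
    hh ee w (cc f G R) 0 (a, S) (some x) (some y) =
      (a.factorial : ℝ) * (if f (insert y (insert x S.toFinset)) = Multiset.card S + 2 ∧
        G (insert y (insert x S.toFinset)) = R then 1 else 0) := by
  simp only [hh, gg, cc, ee, Prod.mk_add_mk, toFinset_add_single, Multiset.card_add,
    Multiset.card_singleton, add_zero, mul_ite, mul_one, mul_zero]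

lemma RD.f_par_trans (h : RD f G R) (s : Finset X) (N : ℕ) (x y z : X)
    (hy : f (insert y s) = N + 1) (hx : f (insert x s) = N + 1)
    (h1 : f (insert y (insert x s)) = N + 1) (h2 : f (insert z (insert y s)) = N + 1) :
    f (insert z (insert x s)) = N + 1 := by
  have a1 := h.f_sub2 z x (insert y s)
  have e : insert x (insert y s) = insert y (insert x s) := Finset.insert_comm _ _ _
  have a2 := h.f_mono (insert z (insert x s)) (insert z (insert x (insert y s)))
    (Finset.insert_subset_insert _ (Finset.insert_subset_insert _ (Finset.subset_insert _ _)))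
  rw [e] at a1 a2
  have a3 := h.f_ins z (insert x s)
  omega

lemma RD.G_par_trans (h : RD f G R) (s : Finset X) (N : ℕ) (x y z : X)
    (hy : G (insert y s) = N + 1) (hx : G (insert x s) = N + 1)
    (h1 : G (insert y (insert x s)) = N + 1) (h2 : G (insert z (insert y s)) = N + 1) :
    G (insert z (insert x s)) = N + 1 := by
  have a1 := h.G_sub2 z x (insert y s)
  have e : insert x (insert y s) = insert y (insert x s) := Finset.insert_comm _ _ _
  have a2 := h.G_mono (insert z (insert x s)) (insert z (insert x (insert y s)))
    (Finset.insert_subset_insert _ (Finset.insert_subset_insert _ (Finset.subset_insert _ _)))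
  rw [e] at a1 a2
  have a3 := h.G_ins z (insert x s)
  omega

set_option maxHeartbeats 4000000 in
lemma base_hyper (h : RD f G R) (w : Option X → ℝ) (a : ℕ) (S : Multiset X)
    (hn : a + Multiset.card S + 2 = Fintype.card X) :
    ∃ k : Option X → ℝ, ∀ v, ∑ p, k p * v p = 0 → qf (hh ee w (cc f G R) 0 (a, S)) v v ≤ 0 := by
  set s := S.toFinset with hs
  set N := Multiset.card S with hN
  have hfs : f s ≤ N := h.f_le_card S
  have hfac1 : ((a + 1).factorial : ℝ) = (a + 1) * a.factorial := by
    rw [Nat.factorial_succ]; push_cast; ring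
  have hfac2 : ((a + 2).factorial : ℝ) = (a + 2) * ((a + 1) * a.factorial) := by
    rw [Nat.factorial_succ, Nat.factorial_succ]; push_cast; ring
  have hfac0 : (0 : ℝ) < a.factorial := by positivity
  have hQ : ∀ v, qf (hh ee w (cc f G R) 0 (a, S)) v v =
      (a.factorial : ℝ) * ((if f s = N ∧ G s = R then ((a : ℝ) + 2) * (a + 1) else 0) * v none ^ 2
      + 2 * v none * ((a + 1) * ∑ x, (if f (insert x s) = N + 1 ∧ G (insert x s) = R then 1 else 0)
          * v (some x))
      + ∑ x, ∑ y, (if f (insert y (insert x s)) = N + 2 ∧ G (insert y (insert x s)) = R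
          then 1 else 0) * v (some x) * v (some y)) := by
    intro v
    rw [qf_option _ (hh_symm _ _ _ _ _)]
    simp only [hh0_tt, hh0_tx, hh0_xy, ← hs, ← hN, mul_assoc, ← Finset.mul_sum]
    rw [hfac1, hfac2]
    split_ifs <;> ring
  have hcard : f s = N → ((Finset.univ.filter fun x => f (insert x s) = N + 1).card : ℝ) ≤ a + 2 := by
    intro hf
    have h1 : s.card = N := le_antisymm (Multiset.toFinset_card_le S) (hf ▸ h.f_card s)
    have h2 : (Finset.univ.filter fun x => f (insert x s) = N + 1) ⊆ sᶜ := by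
      intro x hx
      rw [Finset.mem_compl]
      intro hxs
      have := (Finset.mem_filter.1 hx).2
      rw [Finset.insert_eq_of_mem hxs] at this
      omega
    have h3 := Finset.card_le_card h2
    rw [Finset.card_compl, h1] at h3
    have : (Finset.univ.filter fun x => f (insert x s) = N + 1).card ≤ a + 2 := by omega
    exact_mod_cast this
  have hGs := h.G_le s
  have hstep := fun x => h.f_step x s
  have hstep2 := fun x y => h.f_step y (insert x s)
  have hins := fun x => h.f_ins x s
  have hins2 := fun x y => h.f_ins y (insert x s)
  have hsub2 := fun x y => h.f_sub2 y x s
  have hGstep := fun x => h.G_step x s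
  have hGstep2 := fun x y => h.G_step y (insert x s)
  have hGins := fun x => h.G_ins x s
  have hGins2 := fun x y => h.G_ins y (insert x s)
  have hGsub2 := fun x y => h.G_sub2 y x s
  have hGle := fun x => h.G_le (insert x s)
  have hGle2 := fun x y => h.G_le (insert y (insert x s))
  have hmor := fun x => h.mor_ins x s
  have hmor2 := fun x y => h.mor_ins y (insert x s)
  have hcomm : ∀ x y : X, insert x (insert y s) = insert y (insert x s) :=
    fun x y => Finset.insert_comm _ _ _
  have hins2' : ∀ x y, f (insert y s) ≤ f (insert y (insert x s)) := fun x y =>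
    hcomm x y ▸ h.f_ins x (insert y s)
  have hGins2' : ∀ x y, G (insert y s) ≤ G (insert y (insert x s)) := fun x y =>
    hcomm x y ▸ h.G_ins x (insert y s)
  have hmor2' : ∀ x y, G (insert y (insert x s)) + f (insert y s)
      ≤ G (insert y s) + f (insert y (insert x s)) := fun x y =>
    hcomm x y ▸ h.mor_ins x (insert y s)
  rcases Nat.lt_or_ge (f s) N with hlt | hge
  · refine ⟨0, fun v _ => ?_⟩
    rw [hQ, if_neg (by omega), Finset.sum_eq_zero, Finset.sum_eq_zero]
    · simp
    · intro x _
      refine Finset.sum_eq_zero fun y _ => ?_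
      rw [if_neg (by have := hstep x; have := hstep2 x y; omega)]; simp
    · intro x _
      rw [if_neg (by have := hstep x; omega)]; simp
  have hf : f s = N := le_antisymm hfs hge
  rcases Nat.lt_or_ge (G s + 2) R with hd | hd
  · -- everything vanishes
    refine ⟨0, fun v _ => ?_⟩
    rw [hQ, if_neg (by omega), Finset.sum_eq_zero, Finset.sum_eq_zero]
    · simp
    · intro x _
      refine Finset.sum_eq_zero fun y _ => ?_
      rw [if_neg (by have := hGstep x; have := hGstep2 x y; omega)]; simp
    · intro x _
      rw [if_neg (by have := hGstep x; omega)]; simp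
  by_cases hd0 : G s = R
  · -- `S` is a basis
    set α : X → ℝ := fun x => if f (insert x s) = N + 1 then 1 else 0 with hα
    refine ⟨fun p => p.elim ((a : ℝ) + 2) α, fun v hv => ?_⟩
    rw [Fintype.sum_option] at hv
    simp only [Option.elim] at hv
    obtain ⟨P0, P1⟩ := par_ineq' (fun x => f (insert x s) = N + 1)
      (fun x y => f (insert y (insert x s)) = N + 1)
      (fun x hx => by simpa using hx)
      (fun x y _ _ hxy => by rw [hcomm]; exact hxy)
      (fun x y z hx hy _ h1 h2 => h.f_par_trans s N x y z hy hx h1 h2)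
      (fun x => v (some x)) _ (hcard hf)
    have hsum := dbl_sum (fun x y => (if f (insert y (insert x s)) = N + 2 ∧
        G (insert y (insert x s)) = R then (1 : ℝ) else 0))
      (fun x y => if f (insert x s) = N + 1 ∧ f (insert y s) = N + 1 ∧
        f (insert y (insert x s)) = N + 1 then (1 : ℝ) else 0) α (fun _ => 0)
      (fun x => v (some x)) (by
        intro x y
        have := hstep x; have := hstep y; have := hstep2 x y; have := hins x; have := hins y
        have := hins2 x y; have := hsub2 x y; have := hGins x; have := hGins2 x y
        have := hGle2 x y; have := hins2' x y
        simp only [hα]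
        split_ifs <;> first | (norm_num; done) | (exfalso; omega))
    rw [hQ, if_pos ⟨hf, hd0⟩, hsum]
    have e1 : ∑ x, (if f (insert x s) = N + 1 ∧ G (insert x s) = R then (1 : ℝ) else 0) * v (some x)
        = ∑ x, α x * v (some x) := by
      refine Finset.sum_congr rfl fun x _ => ?_
      have := hGins x; have := hGle x
      simp only [hα]
      congr 1
      split_ifs <;> first | rfl | (exfalso; omega)
    rw [e1]
    set E := ∑ x, α x * v (some x)
    have hP1 : E ^ 2 ≤ _ := P1
    set P := ∑ x, ∑ y, (if f (insert x s) = N + 1 ∧ f (insert y s) = N + 1 ∧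
        f (insert y (insert x s)) = N + 1 then (1 : ℝ) else 0) * v (some x) * v (some y)
    apply mul_nonpos_of_nonneg_of_nonpos hfac0.le
    have ht : E = -((a + 2) * v none) := by linarith
    rw [ht] at hP1 ⊢
    have ha : (0 : ℝ) < a + 2 := by positivity
    have : ((a : ℝ) + 2) * v none ^ 2 ≤ P := by
      have : ((a : ℝ) + 2) * ((a + 2) * v none ^ 2) ≤ (a + 2) * P := by
        calc _ = (-((a + 2) * v none)) ^ 2 := by ring
          _ ≤ _ := hP1
      exact le_of_mul_le_mul_left this ha
    simp only [zero_mul, Finset.sum_const_zero, mul_zero, add_zero]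
    nlinarith
  by_cases hd1 : G s + 1 = R
  · set α : X → ℝ := fun x => if G (insert x s) = R then 1 else 0 with hα
    set β : X → ℝ := fun x => if f (insert x s) = N + 1 ∧ G (insert x s) ≠ R then 1 else 0 with hβ
    refine ⟨fun p => p.elim 0 α, fun v hv => ?_⟩
    rw [Fintype.sum_option] at hv
    simp only [Option.elim, zero_mul, zero_add] at hv
    have hA : ∀ x, G (insert x s) = R → f (insert x s) = N + 1 := fun x hx => by
      have := hmor x; have := hstep x; omega
    obtain ⟨P0, P1⟩ := par_ineq' (fun x => G (insert x s) = R)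
      (fun x y => f (insert y (insert x s)) = N + 1)
      (fun x hx => by simpa using hA x hx)
      (fun x y _ _ hxy => by rw [hcomm]; exact hxy)
      (fun x y z hx hy _ h1 h2 => h.f_par_trans s N x y z (hA y hy) (hA x hx) h1 h2)
      (fun x => v (some x)) _ le_rfl
    have hsum := dbl_sum (fun x y => (if f (insert y (insert x s)) = N + 2 ∧
        G (insert y (insert x s)) = R then (1 : ℝ) else 0))
      (fun x y => if G (insert x s) = R ∧ G (insert y s) = R ∧
        f (insert y (insert x s)) = N + 1 then (1 : ℝ) else 0) α β
      (fun x => v (some x)) (by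
        intro x y
        have := hstep x; have := hstep y; have := hstep2 x y; have := hins x; have := hins y
        have := hins2 x y; have := hsub2 x y; have := hGins x; have := hGins2 x y
        have := hGle2 x y; have := hins2' x y; have := hGins2' x y; have := hGins y
        have := hGsub2 x y; have := hmor x; have := hmor y; have := hmor2 x y
        have := hmor2' x y; have := hGle x; have := hGle y
        simp only [hα, hβ]
        split_ifs <;> first | (norm_num; done) | (exfalso; omega))
    have e1 : ∑ x, (if f (insert x s) = N + 1 ∧ G (insert x s) = R then (1 : ℝ) else 0) * v (some x)
        = ∑ x, α x * v (some x) := by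
      refine Finset.sum_congr rfl fun x _ => ?_
      have := hA x
      simp only [hα]
      congr 1
      split_ifs <;> first | rfl | (exfalso; omega)
    rw [hQ, if_neg (by omega), hsum, e1, hv]
    apply mul_nonpos_of_nonneg_of_nonpos hfac0.le
    simp only [zero_mul, mul_zero, add_zero]
    linarith
  · have hd2 : G s + 2 = R := by omega
    set α : X → ℝ := fun x => if G (insert x s) = G s + 1 then 1 else 0 with hα
    refine ⟨fun p => p.elim 0 α, fun v hv => ?_⟩
    rw [Fintype.sum_option] at hv
    simp only [Option.elim, zero_mul, zero_add] at hv
    obtain ⟨P0, P1⟩ := par_ineq' (fun x => G (insert x s) = G s + 1)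
      (fun x y => G (insert y (insert x s)) = G s + 1)
      (fun x hx => by simpa using hx)
      (fun x y _ _ hxy => by rw [hcomm]; exact hxy)
      (fun x y z hx hy _ h1 h2 => h.G_par_trans s (G s) x y z hy hx h1 h2)
      (fun x => v (some x)) _ le_rfl
    have hsum := dbl_sum (fun x y => (if f (insert y (insert x s)) = N + 2 ∧
        G (insert y (insert x s)) = R then (1 : ℝ) else 0))
      (fun x y => if G (insert x s) = G s + 1 ∧ G (insert y s) = G s + 1 ∧
        G (insert y (insert x s)) = G s + 1 then (1 : ℝ) else 0) α (fun _ => 0)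
      (fun x => v (some x)) (by
        intro x y
        have := hstep x; have := hstep y; have := hstep2 x y
        have := hGins x; have := hGins2 x y; have := hGstep x; have := hGstep y
        have := hGstep2 x y
        have := hGle2 x y; have := hGins2' x y; have := hGins y
        have := hGsub2 x y; have := hmor x; have := hmor y; have := hmor2 x y
        have := hmor2' x y
        simp only [hα]
        split_ifs <;> first | (norm_num; done) | (exfalso; omega))
    have e1 : ∑ x, (if f (insert x s) = N + 1 ∧ G (insert x s) = R then (1 : ℝ) else 0) * v (some x)
        = 0 := by
      refine Finset.sum_eq_zero fun x _ => ?_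
      have := hGstep x
      rw [if_neg (by omega), zero_mul]
    rw [hQ, if_neg (by omega), hsum, e1, hv]
    apply mul_nonpos_of_nonneg_of_nonpos hfac0.le
    simp only [zero_mul, mul_zero, add_zero]
    linarith

lemma rcs_all (h : RD f G R) (w : Option X → ℝ) (hw : ∀ p, 0 ≤ w p) (r a : ℕ) (S : Multiset X)
    (hn : a + Multiset.card S + 2 + r = Fintype.card X) (v : Option X → ℝ) :
    qf (hh ee w (cc f G R) r (a, S)) v v * qf (hh ee w (cc f G R) r (a, S)) w w
      ≤ qf (hh ee w (cc f G R) r (a, S)) v w ^ 2 := by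
  refine rcs_closure _ _ _ _ (fun w hw v => ?_) w hw v
  refine rcs_induct ee w (cc f G R) hw cc_nonneg
    (fun r γ => γ.1 + Multiset.card γ.2 + 2 + r = Fintype.card X) ?_ ?_ ?_ r (a, S) hn v
  · intro r γ p hp
    cases p with
    | none => simp only [ee, Prod.fst_add, Prod.snd_add, add_zero]; omega
    | some x =>
      simp only [ee, Prod.fst_add, Prod.snd_add, add_zero, Multiset.card_add,
        Multiset.card_singleton]
      omega
  · rintro ⟨a, S⟩ hn v
    obtain ⟨k, hk⟩ := base_hyper h w a S hn
    let l : (Option X → ℝ) →ₗ[ℝ] ℝ :=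
      { toFun := fun v => ∑ p, k p * v p
        map_add' := fun a b => by simp only [Pi.add_apply, mul_add, Finset.sum_add_distrib]
        map_smul' := fun c a => by
          simp only [Pi.smul_apply, smul_eq_mul, Finset.mul_sum, RingHom.id_apply]
          exact Finset.sum_congr rfl fun p _ => by ring }
    refine rcs_of_hyper _ (hh_symm _ _ _ _ _) w ?_ l hk v
    rw [qf_hh_ww]
    exact gg_nonneg _ _ _ (fun p => (hw p).le) cc_nonneg _ _
  · rintro r ⟨a, S⟩ _ u hu
    exact conn_all h w hw r a S u hu

end Base
/-! ### The boundary direction and the equality case -/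

section Equality

variable {f G : Finset X → ℕ} {R : ℕ}

/-- The direction with vanishing homogenizing coordinate. -/
def w0 (ω : X → ℝ) (p : Option X) : ℝ := p.elim 0 ω

lemma w0_nonneg (ω : X → ℝ) (hω : ∀ x, 0 < ω x) (p : Option X) : 0 ≤ w0 ω p := by
  cases p with
  | none => exact le_rfl
  | some x => exact (hω x).le

lemma RD.exists_upf (h : RD f G R) (S) (hS : f S < f Finset.univ) :
    ∃ z, f (insert z S) = f S + 1 := by
  by_contra hcon
  push Not at hcon
  have hz : ∀ z, f (insert z S) = f S := fun z => by
    have := h.f_step z S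
    have := h.f_ins z S
    have := hcon z
    omega
  have key : ∀ T : Finset X, f (T ∪ S) = f S := by
    intro T
    induction T using Finset.induction_on with
    | empty => simp
    | insert x T hx ih =>
      have h1 := h.f_sub (insert x S) (T ∪ S)
      have h2 := h.f_mono S (insert x S ∩ (T ∪ S)) (by intro z; simp; tauto)
      have h3 : insert x S ∪ (T ∪ S) = insert x T ∪ S := by ext; simp; tauto
      have h4 := h.f_mono S (insert x T ∪ S) Finset.subset_union_right
      rw [h3] at h1
      have := hz x
      omega
  have h1 := key Finset.univ
  rw [Finset.union_eq_left.2 (Finset.subset_univ S)] at h1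
  omega

lemma gg_w0_succ (ω : X → ℝ) (c : ℕ × Multiset X → ℝ) (r a : ℕ) (S : Multiset X) :
    gg ee (w0 ω) c (r + 1) (a, S) = ∑ x, ω x * gg ee (w0 ω) c r (a, S + {x}) := by
  rw [gg, Fintype.sum_option]
  simp [w0, ee]

lemma gg0_ne_zero (h : RD f G R) (ω : X → ℝ) (hω : ∀ x, 0 < ω x) (r a : ℕ) (S : Multiset X) :
    gg ee (w0 ω) (cc f G R) r (a, S) ≠ 0 ↔
      f S.toFinset = Multiset.card S ∧ R ≤ r + G S.toFinset ∧
        Multiset.card S + r ≤ f Finset.univ := by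
  induction r generalizing a S with
  | zero =>
    have := h.G_le S.toFinset
    have := h.f_mono _ _ (Finset.subset_univ S.toFinset)
    simp only [gg, cc]
    constructor
    · intro hne
      split_ifs at hne with h1
      · exact ⟨h1.1, by omega, by omega⟩
      · exact absurd rfl hne
    · intro h1
      rw [if_pos ⟨h1.1, by omega⟩]
      positivity
  | succ r ih =>
    have hnn : ∀ x, 0 ≤ ω x * gg ee (w0 ω) (cc f G R) r (a, S + {x}) := fun x =>
      mul_nonneg (hω x).le (gg_nonneg _ _ _ (w0_nonneg ω hω) cc_nonneg _ _)
    have : gg ee (w0 ω) (cc f G R) (r + 1) (a, S) ≠ 0 ↔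
        ∃ x, gg ee (w0 ω) (cc f G R) r (a, S + {x}) ≠ 0 := by
      rw [gg_w0_succ, Ne, Finset.sum_eq_zero_iff_of_nonneg (fun i _ => hnn i)]
      push Not
      simp [(hω _).ne']
    rw [this]
    have hN := h.f_le_card S
    simp only [ih, toFinset_add_single, Multiset.card_add, Multiset.card_singleton]
    constructor
    · rintro ⟨x, h1, h2, h3⟩
      have := h.f_step x S.toFinset
      have := h.G_step x S.toFinset
      exact ⟨by omega, by omega, by omega⟩
    · rintro ⟨h1, h2, h3⟩
      by_cases h4 : R ≤ G S.toFinset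
      · obtain ⟨z, hz⟩ := h.exists_upf S.toFinset (by omega)
        have := h.G_ins z S.toFinset
        exact ⟨z, by omega, by omega, by omega⟩
      · obtain ⟨z, hz⟩ := h.exists_up S.toFinset (by omega)
        have := h.f_step z S.toFinset
        have := h.mor_ins z S.toFinset
        exact ⟨z, by omega, by omega, by omega⟩

lemma hh_zero_of_ww (h : RD f G R) (ω : X → ℝ) (hω : ∀ x, 0 < ω x) (r a : ℕ) (S : Multiset X)
    (hrk : Multiset.card S + r + 2 ≤ f Finset.univ)
    (h0 : gg ee (w0 ω) (cc f G R) (r + 2) (a, S) = 0) (p q : Option X) :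
    hh ee (w0 ω) (cc f G R) r (a, S) p q = 0 := by
  by_contra hne
  refine (gg0_ne_zero h ω hω (r + 2) a S).2 ?_ h0
  have hN := h.f_le_card S
  unfold hh at hne
  cases p with
  | none =>
    cases q with
    | none =>
      have h1 := (gg0_ne_zero h ω hω r (a + 1 + 1) (S + 0 + 0)).1 hne
      simp only [add_zero] at h1
      exact ⟨by omega, by omega, by omega⟩
    | some y =>
      have h1 := (gg0_ne_zero h ω hω r (a + 1 + 0) (S + 0 + ({y} : Multiset X))).1 hne
      simp only [add_zero, toFinset_add_single, Multiset.card_add, Multiset.card_singleton] at h1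
      have := h.f_step y S.toFinset
      have := h.G_step y S.toFinset
      exact ⟨by omega, by omega, by omega⟩
  | some x =>
    cases q with
    | none =>
      have h1 := (gg0_ne_zero h ω hω r (a + 0 + 1) (S + ({x} : Multiset X) + 0)).1 hne
      simp only [add_zero, toFinset_add_single, Multiset.card_add, Multiset.card_singleton] at h1
      have := h.f_step x S.toFinset
      have := h.G_step x S.toFinset
      exact ⟨by omega, by omega, by omega⟩
    | some y =>
      have h1 := (gg0_ne_zero h ω hω r (a + 0 + 0)
        (S + ({x} : Multiset X) + ({y} : Multiset X))).1 hne
      simp only [toFinset_add_single, Multiset.card_add, Multiset.card_singleton] at h1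
      have := h.f_step x S.toFinset
      have := h.G_step x S.toFinset
      have := h.f_step y (insert x S.toFinset)
      have := h.G_step y (insert x S.toFinset)
      exact ⟨by omega, by omega, by omega⟩

lemma qf_single {Z : Type*} [Fintype Z] [DecidableEq Z] (A : Z → Z → ℝ) (hs : ∀ p q, A p q = A q p) (v : Z → ℝ) (p : Z) :
    qf A v (Pi.single p 1) = ∑ q, A p q * v q := by
  rw [qf_symm A hs, qf_row, Finset.sum_eq_single p]
  · simp
  · intro b _ hb; simp [Pi.single_eq_of_ne hb]
  · simp

lemma descend (h : RD f G R) (ω : X → ℝ) (hω : ∀ x, 0 < ω x) (r a : ℕ) (S : Multiset X)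
    (hn : a + Multiset.card S + 2 + (r + 1) = Fintype.card X)
    (hrk : Multiset.card S + (r + 1) + 2 ≤ f Finset.univ) (v : Option X → ℝ)
    (hv : ∀ u, qf (hh ee (w0 ω) (cc f G R) (r + 1) (a, S)) v u = 0) (x : X) :
    ∀ u, qf (hh ee (w0 ω) (cc f G R) r (a, S + ({x} : Multiset X))) v u = 0 := by
  have hee : ∀ x : X, (a, S) + ee (some x) = (a, S + ({x} : Multiset X)) := fun x => by simp [ee]
  have R1 : ∀ (x : X) (v : Option X → ℝ), qf (hh ee (w0 ω) (cc f G R) r (a, S + ({x} : Multiset X))) v v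
      * qf (hh ee (w0 ω) (cc f G R) r (a, S + ({x} : Multiset X))) (w0 ω) (w0 ω)
      ≤ qf (hh ee (w0 ω) (cc f G R) r (a, S + ({x} : Multiset X))) v (w0 ω) ^ 2 := fun x v =>
    rcs_all h (w0 ω) (w0_nonneg ω hω) r a _
      (by rw [Multiset.card_add, Multiset.card_singleton]; omega) v
  have hvw : ∀ x, qf (hh ee (w0 ω) (cc f G R) r (a, S + ({x} : Multiset X))) v (w0 ω) = 0 := by
    intro x
    rw [← hee, ← row_hh_succ, ← qf_single _ (hh_symm _ _ _ _ _), hv]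
  have hww : ∀ x, 0 ≤ qf (hh ee (w0 ω) (cc f G R) r (a, S + ({x} : Multiset X))) (w0 ω) (w0 ω) := fun x => by
    rw [qf_hh_ww]; exact gg_nonneg _ _ _ (w0_nonneg ω hω) cc_nonneg _ _
  have hzero : ∀ x, qf (hh ee (w0 ω) (cc f G R) r (a, S + ({x} : Multiset X))) (w0 ω) (w0 ω) = 0 →
      ∀ u, qf (hh ee (w0 ω) (cc f G R) r (a, S + ({x} : Multiset X))) v u = 0 := by
    intro x h0 u
    rw [qf_hh_ww] at h0
    have := hh_zero_of_ww h ω hω r a (S + ({x} : Multiset X))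
      (by rw [Multiset.card_add, Multiset.card_singleton]; omega) h0
    simp [qf, this]
  have hle : ∀ x, qf (hh ee (w0 ω) (cc f G R) r (a, S + ({x} : Multiset X))) v v ≤ 0 := by
    intro x
    rcases (hww x).eq_or_lt with h0 | h0
    · exact (hzero x h0.symm v).le
    · have := R1 x v
      rw [hvw x] at this
      by_contra hcon
      push Not at hcon
      have := mul_pos hcon h0
      linarith
  have hsum := hv v
  rw [qf_hh_succ, Fintype.sum_option] at hsum
  simp only [hee, w0, Option.elim, zero_mul, zero_add] at hsum
  have hvv : ∀ x, qf (hh ee (w0 ω) (cc f G R) r (a, S + ({x} : Multiset X))) v v = 0 := by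
    intro x
    have h1 := (Finset.sum_eq_zero_iff_of_nonpos (fun x _ =>
      mul_nonpos_of_nonneg_of_nonpos (hω x).le (hle x))).1 hsum x (Finset.mem_univ _)
    exact (mul_eq_zero.1 h1).resolve_left (hω x).ne'
  rcases (hww x).eq_or_lt with h0 | h0
  · exact hzero x h0.symm
  · exact ker_of_rcs _ (hh_symm _ _ _ _ _) (w0 ω) h0 (R1 x) v (hvw x) (hvv x)

lemma descend_all (h : RD f G R) (ω : X → ℝ) (hω : ∀ x, 0 < ω x) (j a : ℕ)
    (hn : a + j + 2 = Fintype.card X) (hrk : j + 2 ≤ f Finset.univ) (v : Option X → ℝ)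
    (hv : ∀ u, qf (hh ee (w0 ω) (cc f G R) j (a, 0)) v u = 0) (S : Multiset X) :
    ∀ r, Multiset.card S + r = j → ∀ u, qf (hh ee (w0 ω) (cc f G R) r (a, S)) v u = 0 := by
  induction S using Multiset.induction with
  | empty =>
    intro r hr
    rw [Multiset.card_zero, zero_add] at hr
    rw [hr]; exact hv
  | cons x S ih =>
    intro r hr
    rw [Multiset.card_cons] at hr
    rw [← Multiset.singleton_add, add_comm]
    exact descend h ω hω r a S (by omega) (by omega) v (ih (r + 1) (by omega)) x

lemma local_eq (h : RD f G R) (ω : X → ℝ) (hω : ∀ x, 0 < ω x) (a : ℕ) (s : Finset X)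
    (hn : a + s.card + 2 = Fintype.card X) (lam : ℝ) (hlam : 0 < lam)
    (hker : ∀ u, qf (hh ee (w0 ω) (cc f G R) 0 (a, s.val))
      (fun p => p.elim 1 (fun x => -(lam * ω x))) u = 0)
    (hex : ∃ x y, f (insert x (insert y s)) = s.card + 2 ∧ G (insert x (insert y s)) = R) :
    f s = s.card ∧ G s = R ∧
      (∀ x y, x ∉ s → y ∉ s → x ≠ y → f (insert x (insert y s)) = s.card + 2) ∧
      ∀ x, x ∉ s → ω x = 1 / lam := by
  set N := s.card with hN
  have hfac1 : ((a + 1).factorial : ℝ) = (a + 1) * a.factorial := by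
    rw [Nat.factorial_succ]; push_cast; ring
  have hfac2 : ((a + 2).factorial : ℝ) = (a + 2) * ((a + 1) * a.factorial) := by
    rw [Nat.factorial_succ, Nat.factorial_succ]; push_cast; ring
  have hfac0 : (0 : ℝ) < a.factorial := by positivity
  have hrow : ∀ p, ∑ q, hh ee (w0 ω) (cc f G R) 0 (a, s.val) p q
      * (fun p : Option X => p.elim 1 (fun x => -(lam * ω x))) q = 0 := by
    intro p
    rw [← qf_single _ (hh_symm _ _ _ _ _)]; exact hker _
  have eT : (if f s = N ∧ G s = R then ((a : ℝ) + 2) else 0)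
      = lam * ∑ x, (if f (insert x s) = N + 1 ∧ G (insert x s) = R then 1 else 0) * ω x := by
    have h1 := hrow none
    rw [Fintype.sum_option] at h1
    simp only [hh0_tt, hh0_tx, Option.elim, Finset.val_toFinset, Finset.card_val, ← hN] at h1
    have h2 : ∑ x, ((a + 1).factorial : ℝ) * (if f (insert x s) = N + 1 ∧ G (insert x s) = R
        then (1 : ℝ) else 0) * -(lam * ω x) = -((a + 1).factorial * (lam *
          ∑ x, (if f (insert x s) = N + 1 ∧ G (insert x s) = R then 1 else 0) * ω x)) := by
      rw [Finset.mul_sum, Finset.mul_sum, ← Finset.sum_neg_distrib]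
      exact Finset.sum_congr rfl fun x _ => by ring
    rw [h2] at h1
    have h3 : ((a + 1).factorial : ℝ) ≠ 0 := by positivity
    apply mul_left_cancel₀ h3
    rw [hfac2, ← hfac1] at h1
    split_ifs at h1 ⊢ <;> linarith
  have eY : ∀ y, (if f (insert y s) = N + 1 ∧ G (insert y s) = R then ((a : ℝ) + 1) else 0)
      = lam * ∑ x, (if f (insert x (insert y s)) = N + 2 ∧ G (insert x (insert y s)) = R
          then 1 else 0) * ω x := by
    intro y
    have h1 := hrow (some y)
    rw [Fintype.sum_option, hh_symm] at h1
    simp only [hh0_tx, hh0_xy, Option.elim, Finset.val_toFinset, Finset.card_val, ← hN] at h1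
    have h2 : ∑ x, (a.factorial : ℝ) * (if f (insert x (insert y s)) = N + 2 ∧
        G (insert x (insert y s)) = R
        then (1 : ℝ) else 0) * -(lam * ω x) = -(a.factorial * (lam *
          ∑ x, (if f (insert x (insert y s)) = N + 2 ∧ G (insert x (insert y s)) = R
            then 1 else 0) * ω x)) := by
      rw [Finset.mul_sum, Finset.mul_sum, ← Finset.sum_neg_distrib]
      exact Finset.sum_congr rfl fun x _ => by ring
    rw [h2, hfac1] at h1
    apply mul_left_cancel₀ hfac0.ne'
    split_ifs at h1 ⊢ <;> linarith
  have hpos : ∀ (P : X → Prop) [DecidablePred P], (∃ x, P x) → 0 < ∑ x, (if P x then (1 : ℝ) else 0) * ω x := by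
    rintro P _ ⟨x, hx⟩
    refine Finset.sum_pos' (fun y _ => ?_) ⟨x, Finset.mem_univ _, ?_⟩
    · have := (hω y).le
      split_ifs <;> simp [this]
    · simp [hx, hω x]
  obtain ⟨x0, y0, hxy1, hxy2⟩ := hex
  have hy0 : f (insert y0 s) = N + 1 ∧ G (insert y0 s) = R := by
    by_contra hcon
    have := eY y0
    rw [if_neg hcon] at this
    have := mul_pos hlam (hpos (fun x => f (insert x (insert y0 s)) = N + 2 ∧
      G (insert x (insert y0 s)) = R) ⟨x0, hxy1, hxy2⟩)
    linarith
  have hs0 : f s = N ∧ G s = R := by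
    by_contra hcon
    have := eT
    rw [if_neg hcon] at this
    have := mul_pos hlam (hpos (fun x => f (insert x s) = N + 1 ∧ G (insert x s) = R) ⟨y0, hy0⟩)
    linarith
  obtain ⟨hf, hG⟩ := hs0
  have hG1 : ∀ x, G (insert x s) = R := fun x => le_antisymm (h.G_le _) (hG ▸ h.G_ins x s)
  have hG2 : ∀ x y, G (insert x (insert y s)) = R := fun x y =>
    le_antisymm (h.G_le _) (hG1 y ▸ h.G_ins x (insert y s))
  simp only [hf, hG, hG1, hG2, and_true, if_true] at eT eY
  have hlam' := hlam.ne'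
  have hpar : ∀ y, f (insert y s) = N + 1 →
      ∑ x, (if f (insert x s) = N + 1 ∧ f (insert x (insert y s)) = N + 1 then (1 : ℝ) else 0) * ω x
        = 1 / lam := by
    intro y hy
    have h1 := eY y
    rw [if_pos hy] at h1
    have h2 : ∑ x, (if f (insert x s) = N + 1 then (1 : ℝ) else 0) * ω x
        = ∑ x, (if f (insert x (insert y s)) = N + 2 then (1 : ℝ) else 0) * ω x +
        ∑ x, (if f (insert x s) = N + 1 ∧ f (insert x (insert y s)) = N + 1 then (1 : ℝ) else 0)
          * ω x := by
      rw [← Finset.sum_add_distrib]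
      refine Finset.sum_congr rfl fun x _ => ?_
      rw [← add_mul]
      congr 1
      have := h.f_step x (insert y s)
      have := h.f_ins x (insert y s)
      have := h.f_sub2 x y s
      have := h.f_step x s
      have := h.f_ins x s
      split_ifs <;> first | (norm_num; done) | (exfalso; omega)
    rw [h2, mul_add, ← h1] at eT
    rw [eq_div_iff hlam']
    linarith
  have hterm : ∀ (P : X → Prop) [DecidablePred P] (x : X),
      0 ≤ (if P x then (1 : ℝ) else 0) * ω x := fun P _ x => by
    have := (hω x).le
    split_ifs <;> simp [this]
  have hle : ∀ y, f (insert y s) = N + 1 → ω y ≤ 1 / lam := by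
    intro y hy
    rw [← hpar y hy]
    have := Finset.single_le_sum (fun x _ => hterm (fun x => f (insert x s) = N + 1 ∧
      f (insert x (insert y s)) = N + 1) x) (Finset.mem_univ y)
    simpa [hy] using this
  have hcompl : sᶜ.card = a + 2 := by rw [Finset.card_compl]; omega
  have hsumA : ∑ x ∈ sᶜ, (if f (insert x s) = N + 1 then (1 : ℝ) else 0) * ω x
      = ∑ x ∈ sᶜ, 1 / lam := by
    rw [Finset.sum_const, hcompl, nsmul_eq_mul]
    rw [Finset.sum_subset (Finset.subset_univ sᶜ)]
    · push_cast
      rw [mul_one_div, eq_div_iff hlam']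
      linarith
    · intro x _ hx
      have hx' : x ∈ s := by simpa using hx
      rw [Finset.insert_eq_of_mem hx', if_neg (by omega), zero_mul]
  have hall := (Finset.sum_eq_sum_iff_of_le (fun x _ => by
    split_ifs with hx
    · simpa using hle x hx
    · rw [zero_mul]; positivity)).1 hsumA
  have hx : ∀ x, x ∉ s → f (insert x s) = N + 1 ∧ ω x = 1 / lam := by
    intro x hxs
    have := hall x (by simpa using hxs)
    split_ifs at this with h1
    · exact ⟨h1, by simpa using this⟩
    · rw [zero_mul] at this
      have : (0 : ℝ) < 1 / lam := by positivity
      linarith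
  refine ⟨hf, hG, ?_, fun x hxs => (hx x hxs).2⟩
  intro x y hxs hys hne
  by_contra hcon
  have h1 := h.f_step x (insert y s)
  have h2 := h.f_ins x (insert y s)
  have h3 := (hx y hys).1
  have h4 := hpar y h3
  have h5 := Finset.sum_le_univ_sum_of_nonneg (s := {x, y})
    (fun x => hterm (fun x => f (insert x s) = N + 1 ∧ f (insert x (insert y s)) = N + 1) x)
  rw [h4, Finset.sum_pair hne] at h5
  rw [if_pos ⟨(hx x hxs).1, by omega⟩, if_pos ⟨h3, by simpa using h3⟩] at h5
  have := (hx y hys).2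
  have := hω x
  linarith

/-- Exchange argument: the local structure spreads over all sets of size `j`. -/
lemma spread (n j : ℕ) (hn : Fintype.card X = n) (hj : j + 2 ≤ n) (Good : Finset X → Prop)
    (Sup : Finset X → Prop)
    (h1 : ∀ s, s.card = j → Sup s → Good s)
    (h2 : ∀ s, s.card = j → Good s → ∀ x y, x ∉ s → y ∉ s → x ≠ y →
      ∀ t ⊆ insert x (insert y s), t.card = j → Sup t)
    (d : ℕ) (s t : Finset X) (hs : s.card = j) (ht : t.card = j) (hd : (t \ s).card = d)
    (hg : Good s) : Good t := by
  induction d generalizing s with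
  | zero =>
    have : t ⊆ s := by
      rw [← Finset.sdiff_eq_empty_iff_subset]; exact Finset.card_eq_zero.1 hd
    rwa [Finset.eq_of_subset_of_card_le this (by omega)]
  | succ d ih =>
    obtain ⟨x, hx⟩ : (t \ s).Nonempty := Finset.card_pos.1 (by omega)
    have hst : (s \ t).card = (t \ s).card := by
      have a1 := Finset.card_sdiff_add_card_inter s t
      have a2 := Finset.card_sdiff_add_card_inter t s
      rw [Finset.inter_comm] at a2
      omega
    obtain ⟨u, hu⟩ : (s \ t).Nonempty := Finset.card_pos.1 (by omega)
    rw [Finset.mem_sdiff] at hx hu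
    have hcard : (insert x s).card = j + 1 := by rw [Finset.card_insert_of_notMem hx.2]; omega
    obtain ⟨y, hy⟩ : ∃ y, y ∉ insert x s := by
      by_contra hcon
      push Not at hcon
      have : insert x s = Finset.univ := Finset.eq_univ_iff_forall.2 hcon
      rw [this, Finset.card_univ] at hcard
      omega
    rw [Finset.mem_insert, not_or] at hy
    have hux : u ∈ insert x s := Finset.mem_insert_of_mem hu.1
    have hc' : ((insert x s).erase u).card = j := by rw [Finset.card_erase_of_mem hux]; omega
    have hg' : Good ((insert x s).erase u) := by
      refine h1 _ hc' (h2 s hs hg x y hx.2 hy.2 (Ne.symm hy.1) _ ?_ hc')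
      exact (Finset.erase_subset _ _).trans
        (Finset.insert_subset_insert _ (Finset.subset_insert _ _))
    refine ih _ hc' ?_ hg'
    have : t \ (insert x s).erase u = (t \ s).erase x := by
      ext z
      simp only [Finset.mem_sdiff, Finset.mem_erase, Finset.mem_insert]
      constructor
      · rintro ⟨hz, hz2⟩
        have : z ≠ u := fun e => hu.2 (e ▸ hz)
        tauto
      · rintro ⟨hz, hz2, hz3⟩
        tauto
    rw [this, Finset.card_erase_of_mem (by rw [Finset.mem_sdiff]; exact hx)]
    omega

lemma gg0_not_nodup (h : RD f G R) (ω : X → ℝ) (r a : ℕ) (S : Multiset X) (hS : ¬ S.Nodup) :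
    gg ee (w0 ω) (cc f G R) r (a, S) = 0 := by
  induction r generalizing S with
  | zero =>
    simp only [gg, cc]
    rw [if_neg]
    rintro ⟨h1, _⟩
    have h2 := h.f_card S.toFinset
    have h3 := Multiset.toFinset_card_le S
    exact hS (Multiset.toFinset_card_eq_card_iff_nodup.1 (by omega))
  | succ r ih =>
    rw [gg_w0_succ]
    refine Finset.sum_eq_zero fun x _ => ?_
    rw [ih _ (fun hn => hS (Multiset.nodup_of_le (Multiset.le_add_right _ _) hn)), mul_zero]

lemma gg0_formula (h : RD f G R) (ω : X → ℝ) (r a : ℕ) (s : Finset X) :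
    gg ee (w0 ω) (cc f G R) r (a, s.val) = r.factorial *
      ∑ T : Finset X, if s ⊆ T ∧ T.card = s.card + r then
        (∏ x ∈ T \ s, ω x) * cc f G R (a, T.val) else 0 := by
  induction r generalizing s with
  | zero =>
    rw [Finset.sum_eq_single s]
    · simp [gg]
    · intro T _ hT
      rw [if_neg]
      rintro ⟨h1, h2⟩
      exact hT (Finset.eq_of_subset_of_card_le h1 (by omega)).symm
    · simp
  | succ r ih =>
    rw [gg_w0_succ]
    have e1 : ∀ x, ω x * gg ee (w0 ω) (cc f G R) r (a, s.val + {x}) = r.factorial *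
        ∑ T : Finset X, if x ∉ s ∧ x ∈ T ∧ s ⊆ T ∧ T.card = s.card + (r + 1) then
          (∏ x ∈ T \ s, ω x) * cc f G R (a, T.val) else 0 := by
      intro x
      by_cases hx : x ∈ s
      · rw [gg0_not_nodup h ω]
        · simp [hx]
        · rw [Multiset.nodup_add]
          rintro ⟨_, _, h3⟩
          exact Multiset.disjoint_left.1 h3 hx (by simp)
      · have : s.val + {x} = (insert x s).val := by
          rw [Finset.insert_val_of_notMem hx, ← Multiset.singleton_add, add_comm]
        rw [this, ih (insert x s), mul_left_comm, Finset.mul_sum]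
        congr 1
        refine Finset.sum_congr rfl fun T _ => ?_
        rw [Finset.card_insert_of_notMem hx]
        by_cases hT : x ∈ T ∧ s ⊆ T ∧ T.card = s.card + (r + 1)
        · rw [if_pos ⟨Finset.insert_subset_iff.2 ⟨hT.1, hT.2.1⟩, by omega⟩, if_pos ⟨hx, hT⟩]
          have : T \ s = insert x (T \ insert x s) := by
            ext z
            simp only [Finset.mem_sdiff, Finset.mem_insert]
            constructor
            · rintro ⟨h1, h2⟩; tauto
            · rintro (rfl | h1)
              · exact ⟨hT.1, hx⟩
              · tauto
          rw [this, Finset.prod_insert (by simp)]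
          ring
        · rw [if_neg (by rintro ⟨h12, h3⟩; exact hT ⟨(Finset.insert_subset_iff.1 h12).1, (Finset.insert_subset_iff.1 h12).2, by omega⟩),
            if_neg (fun h => hT h.2), mul_zero]
    simp only [e1]
    rw [← Finset.mul_sum, Finset.sum_comm, Nat.factorial_succ]
    push_cast
    rw [mul_comm ((r : ℝ) + 1), mul_assoc]
    congr 1
    rw [Finset.mul_sum]
    refine Finset.sum_congr rfl fun T _ => ?_
    by_cases hT : s ⊆ T ∧ T.card = s.card + (r + 1)
    · rw [if_pos hT]
      have : ∀ x, (if x ∉ s ∧ x ∈ T ∧ s ⊆ T ∧ T.card = s.card + (r + 1) then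
          (∏ x ∈ T \ s, ω x) * cc f G R (a, T.val) else 0)
          = if x ∈ T \ s then (∏ x ∈ T \ s, ω x) * cc f G R (a, T.val) else 0 := by
        intro x
        by_cases h1 : x ∈ s <;> by_cases h2 : x ∈ T <;> simp [h1, h2, hT]
      simp only [this]
      rw [← Finset.sum_filter, Finset.sum_const, nsmul_eq_mul]
      have hc : (Finset.univ.filter fun x => x ∈ T \ s).card = r + 1 := by
        rw [Finset.filter_mem_eq_inter, Finset.univ_inter, Finset.card_sdiff_of_subset hT.1]
        omega
      rw [hc]
      push_cast
      ring
    · rw [if_neg hT, mul_zero]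
      refine Finset.sum_eq_zero fun x _ => ?_
      rw [if_neg (fun h => hT h.2.2)]

lemma gg0_Bw {IndepM : Finset X → Prop} {IndepN : Finset Y → Prop} {Φ : X → Y}
    (hM : IsMatroid IndepM)
    (h : RD (rkOf IndepM) (fun S => rkOf IndepN (S.image Φ)) (rkOf IndepN Finset.univ))
    (ω : X → ℝ) (r a : ℕ) :
    gg ee (w0 ω) (cc (rkOf IndepM) (fun S => rkOf IndepN (S.image Φ)) (rkOf IndepN Finset.univ))
      r (a, 0) = r.factorial * a.factorial * Bw IndepM IndepN Φ ω r := by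
  have := gg0_formula h ω r a ∅
  rw [Finset.empty_val] at this
  rw [this, mul_assoc]
  congr 1
  unfold Bw
  rw [Finset.mul_sum, Finset.sum_filter]
  refine Finset.sum_congr rfl fun T _ => ?_
  simp only [cc, IsPhiBasis, indep_iff_rkOf hM, Finset.empty_subset, Finset.card_empty, zero_add,
    true_and, Finset.sdiff_empty, Finset.val_toFinset, Finset.card_val]
  split_ifs <;> first | rfl | (exfalso; tauto) | ring

end Equality
/-! ### The two directions of the theorem -/

section Main

lemma Bw_nonneg (IndepM : Finset X → Prop) (IndepN : Finset Y → Prop) (Φ : X → Y)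
    (ω : X → ℝ) (hω : ∀ x, 0 < ω x) (k : ℕ) : 0 ≤ Bw IndepM IndepN Φ ω k :=
  Finset.sum_nonneg fun _ _ => Finset.prod_nonneg fun x _ => (hω x).le

lemma exists_of_Bw_pos {IndepM : Finset X → Prop} {IndepN : Finset Y → Prop} {Φ : X → Y}
    {ω : X → ℝ} {k : ℕ} (h : 0 < Bw IndepM IndepN Φ ω k) :
    ∃ S, IsPhiBasis IndepM IndepN Φ S ∧ S.card = k := by
  by_contra hcon
  push Not at hcon
  unfold Bw at h
  rw [Finset.sum_eq_zero] at h
  · exact lt_irrefl _ h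
  · intro S hS
    rw [Finset.mem_filter] at hS
    exact absurd hS.2.2 (hcon S hS.2.1)

lemma Bw_uniform {IndepM : Finset X → Prop} {IndepN : Finset Y → Prop} {Φ : X → Y}
    {ω : X → ℝ} {k : ℕ} (c : ℝ) (hc : ∀ x, ω x = c)
    (h : ∀ S : Finset X, S.card = k → IsPhiBasis IndepM IndepN Φ S) :
    Bw IndepM IndepN Φ ω k = (Fintype.card X).choose k * c ^ k := by
  unfold Bw
  have e : Finset.univ.filter (fun S : Finset X => IsPhiBasis IndepM IndepN Φ S ∧ S.card = k)
      = Finset.univ.powersetCard k := by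
    ext S
    simp only [Finset.mem_filter, Finset.mem_univ, true_and, Finset.mem_powersetCard,
      Finset.subset_univ]
    exact ⟨fun h => h.2, fun hS => ⟨h S hS, hS⟩⟩
  rw [e, Finset.sum_congr rfl (g := fun _ => c ^ k), Finset.sum_const, Finset.card_powersetCard,
    Finset.card_univ, nsmul_eq_mul]
  intro S hS
  rw [Finset.mem_powersetCard] at hS
  simp [hc, hS.2]

lemma choose_identity (a j : ℕ) (c : ℝ) :
    (((a + j + 2).choose (j + 1) : ℝ) * c ^ (j + 1)) ^ 2 =
      (1 + 1 / ((j : ℝ) + 1)) * (1 + 1 / ((a : ℝ) + 1)) *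
        ((a + j + 2).choose j * c ^ j) * ((a + j + 2).choose (j + 2) * c ^ (j + 2)) := by
  have h1 : ((a + j + 2).choose (j + 1) : ℝ) * (j + 1) = (a + j + 2).choose j * (a + 2) := by
    have := Nat.choose_succ_right_eq (a + j + 2) j
    rw [show a + j + 2 - j = a + 2 by omega] at this
    exact_mod_cast this
  have h2 : ((a + j + 2).choose (j + 2) : ℝ) * (j + 2) = (a + j + 2).choose (j + 1) * (a + 1) := by
    have := Nat.choose_succ_right_eq (a + j + 2) (j + 1)
    rw [show a + j + 2 - (j + 1) = a + 1 by omega] at this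
    exact_mod_cast this
  set p : ℝ := ((a + j + 2).choose j : ℝ)
  set q : ℝ := ((a + j + 2).choose (j + 1) : ℝ)
  set r : ℝ := ((a + j + 2).choose (j + 2) : ℝ)
  have hj : (j : ℝ) + 1 ≠ 0 := by positivity
  have ha : (a : ℝ) + 1 ≠ 0 := by positivity
  have hp : q * (j + 1) * (r * (j + 2)) = p * (a + 2) * (q * (a + 1)) := by rw [h1, h2]
  have key : q ^ 2 * ((j + 1) * (a + 1)) = (j + 2) * (a + 2) * p * r := by
    linear_combination (q * (a + 1)) * h1 - (p * (a + 2)) * h2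
  field_simp
  linear_combination c ^ (2 * j + 2) * key

lemma morphism_equality_mpr
    (IndepM : Finset X → Prop) (IndepN : Finset Y → Prop) (Φ : X → Y)
    (hM : IsMatroid IndepM) (hN : IsMatroid IndepN)
    (ω : X → ℝ) (j a : ℕ) (hn : a + j + 2 = Fintype.card X)
    (h1 : ∀ S : Finset X, S.card = j + 2 → IndepM S)
    (h2 : ∀ x y : X, ω x = ω y)
    (h3 : ∀ S : Finset X, IndepM S → S.card = j →
          rkOf IndepN (S.image Φ) = rkOf IndepN (Finset.univ : Finset Y)) :
    (Bw IndepM IndepN Φ ω (j + 1)) ^ 2 =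
        ((1 : ℝ) + 1 / ((j : ℝ) + 1)) * (1 + 1 / ((a : ℝ) + 1)) *
          Bw IndepM IndepN Φ ω j * Bw IndepM IndepN Φ ω (j + 2) := by
  have hI : ∀ S : Finset X, S.card ≤ j + 2 → IndepM S := by
    intro S hS
    obtain ⟨T, hT, hc⟩ := Finset.exists_superset_card_eq hS (by omega)
    exact hM.2.1 S T hT (h1 T hc)
  have hB : ∀ S : Finset X, j ≤ S.card → S.card ≤ j + 2 → IsPhiBasis IndepM IndepN Φ S := by
    intro S hS hS'
    refine ⟨hI S hS', ?_⟩
    obtain ⟨T, hT, hc⟩ := Finset.exists_subset_card_eq hS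
    refine le_antisymm (rkOf_mono (Finset.subset_univ _)) ?_
    rw [← h3 T (hI T (by omega)) hc]
    exact rkOf_mono (Finset.image_subset_image hT)
  obtain ⟨x0⟩ : Nonempty X := Fintype.card_pos_iff.1 (by omega)
  have e := choose_identity a j (ω x0)
  rw [hn] at e
  rw [Bw_uniform (k := j) (ω x0) (fun x => h2 x x0) (fun S hS => hB S (by omega) (by omega)),
    Bw_uniform (k := j + 1) (ω x0) (fun x => h2 x x0) (fun S hS => hB S (by omega) (by omega)),
    Bw_uniform (k := j + 2) (ω x0) (fun x => h2 x x0) (fun S hS => hB S (by omega) (by omega))]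
  exact e

lemma exists_pair_of_superset {s T : Finset X} {j : ℕ} (hs : s.card = j) (hT : T.card = j + 2)
    (hsT : s ⊆ T) : ∃ x y, x ∉ s ∧ y ∉ s ∧ x ≠ y ∧ T = insert x (insert y s) := by
  have hc : (T \ s).card = 2 := by rw [Finset.card_sdiff_of_subset hsT]; omega
  obtain ⟨x, y, hxy, he⟩ := Finset.card_eq_two.1 hc
  have hx : x ∈ T \ s := by rw [he]; simp
  have hy : y ∈ T \ s := by rw [he]; simp
  refine ⟨x, y, (Finset.mem_sdiff.1 hx).2, (Finset.mem_sdiff.1 hy).2, hxy, ?_⟩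
  rw [← Finset.sdiff_union_of_subset hsT, he]
  ext; simp

lemma morphism_equality_mp
    (IndepM : Finset X → Prop) (IndepN : Finset Y → Prop) (Φ : X → Y)
    (hM : IsMatroid IndepM)
    (h : RD (rkOf IndepM) (fun S => rkOf IndepN (S.image Φ)) (rkOf IndepN Finset.univ))
    (ω : X → ℝ) (hω : ∀ x, 0 < ω x) (j a : ℕ) (hn : a + j + 2 = Fintype.card X)
    (hrk : j + 2 ≤ rkOf IndepM Finset.univ)
    (hBpos : 0 < Bw IndepM IndepN Φ ω (j + 1))
    (heq : (Bw IndepM IndepN Φ ω (j + 1)) ^ 2 =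
        ((1 : ℝ) + 1 / ((j : ℝ) + 1)) * (1 + 1 / ((a : ℝ) + 1)) *
          Bw IndepM IndepN Φ ω j * Bw IndepM IndepN Φ ω (j + 2)) :
    (∀ S : Finset X, S.card = j + 2 → IndepM S) ∧ (∀ x y : X, ω x = ω y) ∧
    (∀ S : Finset X, IndepM S → S.card = j →
          rkOf IndepN (S.image Φ) = rkOf IndepN (Finset.univ : Finset Y)) := by
  set f := rkOf IndepM with hf
  set G : Finset X → ℕ := fun S => rkOf IndepN (S.image Φ) with hG
  set R := rkOf IndepN (Finset.univ : Finset Y) with hR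
  set b0 := Bw IndepM IndepN Φ ω j with hb0
  set b1 := Bw IndepM IndepN Φ ω (j + 1) with hb1
  set b2 := Bw IndepM IndepN Φ ω (j + 2) with hb2
  have hb0n : 0 ≤ b0 := Bw_nonneg _ _ _ _ hω _
  have hb2n : 0 ≤ b2 := Bw_nonneg _ _ _ _ hω _
  have hb2p : 0 < b2 := by
    rcases hb2n.eq_or_lt with h0 | h0
    · rw [← h0, mul_zero] at heq
      have := pow_pos hBpos 2
      linarith
    · exact h0
  have gB : ∀ r a, gg ee (w0 ω) (cc f G R) r (a, 0)
      = r.factorial * a.factorial * Bw IndepM IndepN Φ ω r := fun r a => gg0_Bw hM h ω r a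
  set A := hh ee (w0 ω) (cc f G R) j (a, 0) with hA
  have hsA : ∀ p q, A p q = A q p := hh_symm _ _ _ _ _
  have hF : ∀ m : ℕ, ((m + 1).factorial : ℝ) = (m + 1) * m.factorial := fun m => by
    rw [Nat.factorial_succ]; push_cast; ring
  have q22 : qf A (w0 ω) (w0 ω) = (j + 2).factorial * a.factorial * b2 := by
    rw [hA, qf_hh_ww, gB]
  set et : Option X → ℝ := Pi.single none 1 with het
  have q12 : qf A et (w0 ω) = (j + 1).factorial * (a + 1).factorial * b1 := by
    rw [qf_symm A hsA, het, qf_single A hsA]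
    have : ∑ q, A none q * w0 ω q = gg ee (w0 ω) (cc f G R) (j + 1) (a + 1, 0) := by
      rw [gg]
      refine Finset.sum_congr rfl fun q _ => ?_
      rw [mul_comm, hA]
      simp [hh, ee]
    rw [this, gB]
  have q11 : qf A et et = j.factorial * (a + 2).factorial * b0 := by
    rw [het, qf_single A hsA]
    have : ∑ q, A none q * (Pi.single none 1 : Option X → ℝ) q
        = gg ee (w0 ω) (cc f G R) j (a + 2, 0) := by
      rw [Finset.sum_eq_single none]
      · rw [hA]; simp [hh, ee]
      · intro b _ hb; simp [Pi.single_eq_of_ne hb]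
      · simp
    rw [this, gB]
  have heq' : b1 ^ 2 * (((j : ℝ) + 1) * (a + 1)) = (j + 2) * (a + 2) * b0 * b2 := by
    rw [heq]
    have hj : (j : ℝ) + 1 ≠ 0 := by positivity
    have ha : (a : ℝ) + 1 ≠ 0 := by positivity
    field_simp
    ring
  have hdet : qf A et (w0 ω) ^ 2 = qf A (w0 ω) (w0 ω) * qf A et et := by
    rw [q22, q12, q11, hF (j + 1), hF j, hF (a + 1), hF a]
    push_cast
    linear_combination ((j : ℝ) + 1) * (a + 1) * (j.factorial : ℝ) ^ 2 * (a.factorial : ℝ) ^ 2 * heq'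
  have p22 : 0 < qf A (w0 ω) (w0 ω) := by rw [q22]; positivity
  have p12 : 0 < qf A et (w0 ω) := by rw [q12]; positivity
  set lam := qf A et (w0 ω) / qf A (w0 ω) (w0 ω) with hlam
  have hlp : 0 < lam := div_pos p12 p22
  set v : Option X → ℝ := fun p => p.elim 1 (fun x => -(lam * ω x)) with hv
  have hvdec : v = et + (-lam) • w0 ω := by
    funext p
    cases p with
    | none => simp [hv, het, w0]
    | some x => simp [hv, het, w0]
  have hl : lam * qf A (w0 ω) (w0 ω) = qf A et (w0 ω) := by
    rw [hlam]; field_simp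
  have hvu : ∀ u, qf A v u = qf A et u - lam * qf A (w0 ω) u := by
    intro u
    rw [hvdec, qf_add_left, qf_smul_left]; ring
  have hvw : qf A v (w0 ω) = 0 := by rw [hvu, hl]; ring
  have hvv : qf A v v = 0 := by
    rw [hvu, qf_symm A hsA (w0 ω) v, hvw, qf_symm A hsA et v, hvu, qf_symm A hsA (w0 ω) et]
    have : qf A (w0 ω) (w0 ω) * (qf A et et - lam * qf A et (w0 ω)) = 0 := by
      linear_combination -hdet - (qf A et (w0 ω)) * hl
    rcases mul_eq_zero.1 this with h0 | h0
    · exact absurd h0 p22.ne'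
    · linarith
  have hker : ∀ u, qf A v u = 0 :=
    ker_of_rcs A hsA (w0 ω) p22
      (fun v => rcs_all h (w0 ω) (w0_nonneg ω hω) j a 0 (by simp; omega) v) v hvw hvv
  have hloc : ∀ s : Finset X, s.card = j →
      (∃ T, IsPhiBasis IndepM IndepN Φ T ∧ T.card = j + 2 ∧ s ⊆ T) →
      (f s = j ∧ G s = R ∧
      (∀ x y, x ∉ s → y ∉ s → x ≠ y → f (insert x (insert y s)) = j + 2) ∧
      ∀ x, x ∉ s → ω x = 1 / lam) := by
    rintro s hs ⟨T, hT, hTc, hsT⟩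
    obtain ⟨x, y, -, -, -, rfl⟩ := exists_pair_of_superset hs hTc hsT
    have hk := descend_all h ω hω j a hn hrk v hker s.val 0 (by simpa using hs)
    have := local_eq h ω hω a s (by omega) lam hlp hk
      ⟨x, y, by rw [hs, ← hTc]; exact (indep_iff_rkOf hM _).1 hT.1, hT.2⟩
    rwa [hs] at this
  obtain ⟨T0, hT0, hT0c⟩ := exists_of_Bw_pos hb2p
  obtain ⟨s0, hs0, hs0c⟩ := Finset.exists_subset_card_eq (s := T0) (n := j) (by omega)
  have hall : ∀ t : Finset X, t.card = j → (f t = j ∧ G t = R ∧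
      (∀ x y, x ∉ t → y ∉ t → x ≠ y → f (insert x (insert y t)) = j + 2) ∧
      ∀ x, x ∉ t → ω x = 1 / lam) := by
    intro t ht
    refine spread (Fintype.card X) j rfl (by omega) _ _ hloc ?_ _ s0 t hs0c ht rfl
      (hloc s0 hs0c ⟨T0, hT0, hT0c, hs0⟩)
    rintro s hs ⟨-, g2, g3, -⟩ x y hx hy hxy t' ht' -
    have hc : (insert x (insert y s)).card = j + 2 := by
      rw [Finset.card_insert_of_notMem (by simp [hxy, hx]), Finset.card_insert_of_notMem hy, hs]
    refine ⟨_, ⟨(indep_iff_rkOf hM _).2 ?_, ?_⟩, hc, ht'⟩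
    · rw [hc]; exact g3 x y hx hy hxy
    · refine le_antisymm (h.G_le _) ?_
      show R ≤ G _
      rw [← g2]
      exact (h.G_ins y s).trans (h.G_ins x _)
  refine ⟨?_, ?_, ?_⟩
  · intro S hS
    obtain ⟨s, hs, hsc⟩ := Finset.exists_subset_card_eq (s := S) (n := j) (by omega)
    obtain ⟨x, y, hx, hy, hxy, rfl⟩ := exists_pair_of_superset hsc hS hs
    rw [indep_iff_rkOf hM, hS]
    exact (hall s hsc).2.2.1 x y hx hy hxy
  · have : ∀ x, ω x = 1 / lam := by
      intro x
      obtain ⟨s, hs, hsc⟩ := Finset.exists_subset_card_eq (s := Finset.univ.erase x) (n := j)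
        (by rw [Finset.card_erase_of_mem (Finset.mem_univ _), Finset.card_univ]; omega)
      exact (hall s hsc).2.2.2 x (fun hx => by simpa using hs hx)
    intro x y
    rw [this x, this y]
  · intro S _ hS
    exact (hall S hS).2.1

end Main

/-- **Equality conditions for morphisms of matroids.**  Suppose `B_ω(k) > 0`.  Then equality
holds in the log-concavity inequality for morphisms if and only if every `(k+1)`-subset of
`X` is independent in `M`, the weight function `ω` is uniform, and `g(Φ(S)) = rk(N)` for
every independent set `S` of `M` of size `k-1`. -/
theorem morphism_equality
    (IndepM : Finset X → Prop) (IndepN : Finset Y → Prop) (Φ : X → Y)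
    (hM : IsMatroid IndepM) (hN : IsMatroid IndepN)
    (hΦ : IsMorphism IndepM IndepN Φ)
    (ω : X → ℝ) (hω : ∀ x, 0 < ω x)
    (k : ℕ) (hk1 : 1 ≤ k) (hk2 : k < rkOf IndepM (Finset.univ : Finset X))
    (hBpos : 0 < Bw IndepM IndepN Φ ω k) :
    (Bw IndepM IndepN Φ ω k) ^ 2 =
        ((1 : ℝ) + 1 / (k : ℝ)) * (1 + 1 / ((Fintype.card X : ℝ) - (k : ℝ))) *
          Bw IndepM IndepN Φ ω (k - 1) * Bw IndepM IndepN Φ ω (k + 1) ↔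
      (∀ S : Finset X, S.card = k + 1 → IndepM S) ∧
        (∀ x y : X, ω x = ω y) ∧
        (∀ S : Finset X, IndepM S → S.card = k - 1 →
          rkOf IndepN (S.image Φ) = rkOf IndepN (Finset.univ : Finset Y)) := by
  have hle : rkOf IndepM (Finset.univ : Finset X) ≤ Fintype.card X := rkOf_le_card _
  obtain ⟨j, rfl⟩ : ∃ j, k = j + 1 := ⟨k - 1, by omega⟩
  obtain ⟨a, ha⟩ : ∃ a, a + j + 2 = Fintype.card X := ⟨Fintype.card X - j - 2, by omega⟩
  have e1 : ((Fintype.card X : ℝ) - ((j + 1 : ℕ) : ℝ)) = (a : ℝ) + 1 := by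
    rw [← ha]; push_cast; ring
  rw [e1]
  push_cast
  rw [show j + 1 + 1 = j + 2 by omega]
  obtain ⟨S, hS, -⟩ := exists_of_Bw_pos hBpos
  constructor
  · exact morphism_equality_mp IndepM IndepN Φ hM (rd_of_morphism hM hN hΦ S hS) ω hω j a ha
      (by omega) hBpos
  · rintro ⟨h1, h2, h3⟩
    exact morphism_equality_mpr IndepM IndepN Φ hM hN ω j a ha h1 h2 h3
end
end
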